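/- arXiv:1512.08708 — 2 statements merged into one kernel-verified Lean document; each statement's English description precedes it below -/
import Mathlib

section
/- Every finite group occurs as a Galois group over ℂ(t); that is, for every finite group G there exists a finite Galois extension N of the field ℂ(t) of rational functions in one indeterminate over ℂ with Gal(N/ℂ(t)) isomorphic to G. -/
namespace Patch

open Matrix

section Algebra

variable {E Q : Type} [Field E] [Field Q] [Algebra E Q]

/-- `Good E R G`: there is a `G`-Galois `E`-algebra inside `G → Q`, with a basis whose matrix is
invertible over the subring `R`, and without nontrivial idempotents. -/
def Good (E : Type) {Q : Type} [Field E] [Field Q] [Algebra E Q] (R : Subring Q)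
    (G : Type) [Group G] [Fintype G] [DecidableEq G] : Prop :=
  ∃ (F : Subalgebra E (G → Q)) (M M' : Matrix G G Q), M * M' = 1 ∧ (∀ i j, M i j ∈ R) ∧
    (∀ i j, M' i j ∈ R) ∧
    (∀ f, f ∈ F ↔ ∃ v : G → E, f = M *ᵥ (fun j => algebraMap E Q (v j))) ∧
    (∀ f ∈ F, ∀ g, (fun h => f (g * h)) ∈ F) ∧ (∀ f ∈ F, f * f = f → f = 0 ∨ f = 1)

theorem Good.iso {R : Subring Q} {G G' : Type} [Group G] [Fintype G] [DecidableEq G]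
    [Group G'] [Fintype G'] [DecidableEq G'] (e : G ≃* G') (h : Good E R G) : Good E R G' := by
  obtain ⟨F, M, M', h1, h2, h3, h4, h5, h6⟩ := h
  let c : (G' → Q) →ₐ[E] (G → Q) := AlgHom.pi fun g => Pi.evalAlgHom E (fun _ => Q) (e g)
  have hc : ∀ f g, c f g = f (e g) := fun f g => rfl
  refine ⟨F.comap c, M.submatrix e.symm e.symm, M'.submatrix e.symm e.symm, ?_, ?_, ?_, ?_, ?_, ?_⟩
  · have := Matrix.submatrix_mul_equiv M M' e.symm e.symm.toEquiv e.symm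
    simp only [MulEquiv.toEquiv_eq_coe, EquivLike.coe_coe] at this
    rw [this, h1]
    exact Matrix.submatrix_one_equiv e.symm.toEquiv
  · intro i j; exact h2 _ _
  · intro i j; exact h3 _ _
  · intro f
    rw [Subalgebra.mem_comap, h4]
    constructor
    · rintro ⟨v, hv⟩
      refine ⟨v ∘ e.symm, ?_⟩
      funext g
      have := congrFun hv (e.symm g)
      rw [hc] at this
      simp only [MulEquiv.apply_symm_apply] at this
      rw [this]
      simp only [Matrix.mulVec, dotProduct, Matrix.submatrix_apply, Function.comp]
      exact Fintype.sum_equiv e.toEquiv _ _ (by simp)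
    · rintro ⟨v, hv⟩
      refine ⟨v ∘ e, ?_⟩
      funext g
      rw [hc, hv]
      simp only [Matrix.mulVec, dotProduct, Matrix.submatrix_apply, Function.comp]
      exact Fintype.sum_equiv e.symm.toEquiv _ _ (by simp)
  · intro f hf g
    rw [Subalgebra.mem_comap] at hf ⊢
    have := h5 _ hf (e.symm g)
    convert this using 1
    funext h
    simp [hc]
  · intro f hf hff
    have hinj : Function.Injective c := by
      intro a b hab
      funext g
      have := congrFun hab (e.symm g)
      simpa [hc] using this
    rcases h6 _ hf (by rw [← map_mul, hff]) with h | h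
    · left; exact hinj (by simpa using h)
    · right; exact hinj (by simpa using h)

/-- Transport along a field endomorphism compatible with an automorphism of `E`. -/
theorem Good.map {R R' : Subring Q} {G : Type} [Group G] [Fintype G] [DecidableEq G]
    (ψ : Q →+* Q) (θ : E ≃+* E) (hψ : ∀ a, ψ (algebraMap E Q a) = algebraMap E Q (θ a))
    (hR : ∀ x ∈ R, ψ x ∈ R') (h : Good E R G) : Good E R' G := by
  obtain ⟨F, M, M', h1, h2, h3, h4, h5, h6⟩ := h
  have hM : ∀ v : G → Q, M.map ψ *ᵥ (fun j => ψ (v j)) = fun g => ψ ((M *ᵥ v) g) := by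
    intro v; funext g; simp [Matrix.mulVec, dotProduct, map_sum]
  let F' : Subalgebra E (G → Q) :=
    { carrier := {f | ∃ f₀ ∈ F, f = fun g => ψ (f₀ g)}
      mul_mem' := by
        rintro _ _ ⟨a, ha, rfl⟩ ⟨b, hb, rfl⟩
        exact ⟨a * b, F.mul_mem ha hb, by funext g; simp⟩
      add_mem' := by
        rintro _ _ ⟨a, ha, rfl⟩ ⟨b, hb, rfl⟩
        exact ⟨a + b, F.add_mem ha hb, by funext g; simp⟩
      algebraMap_mem' := by
        intro r
        refine ⟨algebraMap E (G → Q) (θ.symm r), F.algebraMap_mem _, ?_⟩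
        funext g
        simp [Pi.algebraMap_apply, hψ] }
  have hF' : ∀ f, f ∈ F' ↔ ∃ f₀ ∈ F, f = fun g => ψ (f₀ g) := fun f => Iff.rfl
  refine ⟨F', M.map ψ, M'.map ψ, ?_, ?_, ?_, ?_, ?_, ?_⟩
  · rw [← Matrix.map_mul, h1]; simp [Matrix.map_one]
  · intro i j; exact hR _ (h2 _ _)
  · intro i j; exact hR _ (h3 _ _)
  · intro f
    rw [hF']
    constructor
    · rintro ⟨f₀, hf₀, rfl⟩
      obtain ⟨v, rfl⟩ := (h4 _).1 hf₀
      refine ⟨fun j => θ (v j), ?_⟩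
      rw [← hM]; simp [hψ]
    · rintro ⟨v, rfl⟩
      refine ⟨_, (h4 _).2 ⟨fun j => θ.symm (v j), rfl⟩, ?_⟩
      rw [← hM]; simp [hψ]
  · rintro f ⟨f₀, hf₀, rfl⟩ g
    exact ⟨_, h5 _ hf₀ g, rfl⟩
  · rintro f ⟨f₀, hf₀, rfl⟩ hff
    have : f₀ * f₀ = f₀ := by
      funext g
      apply ψ.injective
      simpa using congrFun hff g
    rcases h6 _ hf₀ this with h | h
    · left; funext g; simp [h]
    · right; funext g; simp [h]

/-- coset decomposition -/
noncomputable def cosetEquiv {G : Type} [Group G] (H : Subgroup G) : G ≃ (G ⧸ H) × H where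
  toFun g := (QuotientGroup.mk g, ⟨(QuotientGroup.mk g : G ⧸ H).out⁻¹ * g, by
    rw [← QuotientGroup.eq]; exact Quotient.out_eq' _⟩)
  invFun p := p.1.out * p.2
  left_inv g := by simp
  right_inv p := by
    obtain ⟨q, h⟩ := p
    have : (QuotientGroup.mk (q.out * (h : G)) : G ⧸ H) = q := by
      rw [QuotientGroup.mk_mul_of_mem _ h.2]; exact Quotient.out_eq' _
    ext
    · exact this
    · simp [this]

open scoped Kronecker in
theorem inflate {R : Subring Q} {G : Type} [Group G] [Fintype G] [DecidableEq G]
    (H : Subgroup G) [Fintype H] [DecidableEq H] (hgood : Good E R H) (P : Subalgebra E Q)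
    (hRP : ∀ x ∈ R, x ∈ P → ∃ a, algebraMap E Q a = x) :
    ∃ (B B' : Matrix G G Q) (N : Set (G → Q)), B * B' = 1 ∧ (∀ i j, B i j ∈ R) ∧
      (∀ i j, B' i j ∈ R) ∧ (∀ f, f ∈ N ↔ ∃ p : G → Q, (∀ k, p k ∈ P) ∧ f = B *ᵥ p) ∧
      1 ∈ N ∧ (∀ f ∈ N, ∀ f' ∈ N, f * f' ∈ N) ∧ (∀ f ∈ N, ∀ g, (fun h => f (g * h)) ∈ N) ∧
      (∀ f ∈ N, f * f = f → ∀ g, ∀ t ∈ H, f (g * t) = f g) := by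
  classical
  obtain ⟨F, M, M', h1, h2, h3, h4, h5, h6⟩ := hgood
  have h1' : M' * M = 1 := mul_eq_one_comm.1 h1
  -- the P-span of F
  let W : Set (H → Q) := {f | ∃ p : H → Q, (∀ k, p k ∈ P) ∧ f = M *ᵥ p}
  have hFW : ∀ f ∈ F, f ∈ W := by
    intro f hf
    obtain ⟨v, rfl⟩ := (h4 f).1 hf
    exact ⟨_, fun k => P.algebraMap_mem _, rfl⟩
  have hWadd : ∀ f ∈ W, ∀ f' ∈ W, f + f' ∈ W := by
    rintro _ ⟨p, hp, rfl⟩ _ ⟨p', hp', rfl⟩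
    exact ⟨p + p', fun k => P.add_mem (hp k) (hp' k), by rw [Matrix.mulVec_add]⟩
  have hWsmul : ∀ c ∈ P, ∀ f ∈ W, c • f ∈ W := by
    rintro c hc _ ⟨p, hp, rfl⟩
    exact ⟨c • p, fun k => P.mul_mem hc (hp k), by rw [Matrix.mulVec_smul]⟩
  have hW0 : (0 : H → Q) ∈ W := ⟨0, fun k => P.zero_mem, by simp⟩
  have hWsum : ∀ (s : Finset H) (u : H → H → Q), (∀ i, u i ∈ W) → ∑ i ∈ s, u i ∈ W := by
    intro s u hu
    induction s using Finset.induction_on with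
    | empty => simpa using hW0
    | insert a s ha ih => rw [Finset.sum_insert ha]; exact hWadd _ (hu _) _ ih
  have hcol : ∀ k, (fun i => M i k) ∈ F := by
    intro k
    refine (h4 _).2 ⟨Pi.single k 1, ?_⟩
    funext i
    have : (fun j => algebraMap E Q ((Pi.single k 1 : H → E) j)) = Pi.single k 1 := by
      funext j
      by_cases h : j = k
      · subst h; simp
      · simp [h]
    rw [this]; simp
  have hexp : ∀ p : H → Q, M *ᵥ p = ∑ k, p k • (fun i => M i k) := by
    intro p; funext i; simp [Matrix.mulVec, dotProduct, mul_comm]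
  have hWmul : ∀ f ∈ W, ∀ f' ∈ W, f * f' ∈ W := by
    rintro _ ⟨p, hp, rfl⟩ _ ⟨p', hp', rfl⟩
    rw [hexp p, hexp p', Finset.sum_mul]
    refine hWsum _ _ fun i => ?_
    rw [Finset.mul_sum]
    refine hWsum _ _ fun j => ?_
    rw [smul_mul_smul_comm]
    exact hWsmul _ (P.mul_mem (hp i) (hp' j)) _ (hFW _ (F.mul_mem (hcol i) (hcol j)))
  have hWtr : ∀ f ∈ W, ∀ g, (fun h => f (g * h)) ∈ W := by
    rintro _ ⟨p, hp, rfl⟩ g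
    have : (fun h => (M *ᵥ p) (g * h)) = ∑ k, p k • (fun i => M (g * i) k) := by
      rw [hexp p]; funext h; simp
    rw [this]
    exact hWsum _ _ fun i => hWsmul _ (hp i) _ (hFW _ (h5 _ (hcol i) g))
  let e := cosetEquiv H
  have he1 : ∀ g (t : H), (e (g * t)).1 = (e g).1 := by
    intro g t; exact QuotientGroup.mk_mul_of_mem _ t.2
  have he2 : ∀ g (t : H), (e (g * t)).2 = (e g).2 * t := by
    intro g t
    ext
    have := he1 g t
    change (QuotientGroup.mk (g * (t : G)) : G ⧸ H) = (QuotientGroup.mk g : G ⧸ H) at this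
    change (QuotientGroup.mk (g * (t : G)) : G ⧸ H).out⁻¹ * (g * t) =
      (QuotientGroup.mk g : G ⧸ H).out⁻¹ * g * t
    rw [this, mul_assoc]
  let B : Matrix G G Q := ((1 : Matrix (G ⧸ H) (G ⧸ H) Q) ⊗ₖ M).submatrix e e
  let B' : Matrix G G Q := ((1 : Matrix (G ⧸ H) (G ⧸ H) Q) ⊗ₖ M').submatrix e e
  have hBmul : ∀ (p : G → Q) g (t : H), (B *ᵥ p) (g * t) =
      (M *ᵥ (fun k => p (e.symm ((e g).1, k)))) ((e g).2 * t) := by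
    intro p g t
    simp only [Matrix.mulVec, dotProduct, B, Matrix.submatrix_apply, Matrix.kroneckerMap_apply,
      he1, he2]
    rw [← Fintype.sum_equiv e.symm (fun x : (G ⧸ H) × H => (1 : Matrix (G ⧸ H) (G ⧸ H) Q) (e g).1 x.1
      * M ((e g).2 * t) x.2 * p (e.symm x)) _ (by
        intro x
        simp only [Equiv.apply_symm_apply, Matrix.one_apply, he1]), Fintype.sum_prod_type]
    rw [Finset.sum_eq_single (e g).1]
    · simp
    · intro b _ hb
      simp [Matrix.one_apply_ne hb.symm]
    · simp
  -- N characterised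
  let N : Set (G → Q) := {f | ∀ g, (fun t : H => f (g * t)) ∈ W}
  have hN : ∀ f, f ∈ N ↔ ∃ p : G → Q, (∀ k, p k ∈ P) ∧ f = B *ᵥ p := by
    intro f
    constructor
    · intro hf
      choose p hp hp' using hf
      refine ⟨fun g => p (e.symm ((e g).1, 1)) (e g).2, fun k => hp _ _, ?_⟩
      funext g
      have h := hBmul (fun g => p (e.symm ((e g).1, 1)) (e g).2) (e.symm ((e g).1, 1)) (e g).2
      have hg : e.symm ((e g).1, 1) * ((e g).2 : G) = g := by
        apply e.injective
        ext
        · rw [he1]; simp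
        · rw [he2]; simp
      rw [hg] at h
      rw [h]
      simp only [Equiv.apply_symm_apply, one_mul]
      have := congrFun (hp' (e.symm ((e g).1, 1))) (e g).2
      simp only [hg] at this
      exact this
    · rintro ⟨p, hp, rfl⟩ g
      have : (fun t : H => (B *ᵥ p) (g * t)) = fun t =>
        (M *ᵥ (fun k => p (e.symm ((e g).1, k)))) ((e g).2 * t) := funext fun t => hBmul p g t
      rw [this]
      exact hWtr _ ⟨_, fun k => hp _, rfl⟩ _
  refine ⟨B, B', N, ?_, ?_, ?_, hN, ?_, ?_, ?_, ?_⟩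
  · rw [Matrix.submatrix_mul_equiv, ← Matrix.mul_kronecker_mul, h1, one_mul,
      Matrix.one_kronecker_one, Matrix.submatrix_one_equiv]
  · intro i j
    refine R.mul_mem ?_ (h2 _ _)
    rw [Matrix.one_apply]; split_ifs; exacts [R.one_mem, R.zero_mem]
  · intro i j
    refine R.mul_mem ?_ (h3 _ _)
    rw [Matrix.one_apply]; split_ifs; exacts [R.one_mem, R.zero_mem]
  · intro g; exact hFW _ F.one_mem
  · intro f hf f' hf' g
    exact hWmul _ (hf g) _ (hf' g)
  · intro f hf g g'
    have := hf (g * g')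
    simpa only [mul_assoc] using this
  · intro f hf hff g t ht
    obtain ⟨p, hp, hfp⟩ := hf g
    have hval : ∀ x, f x = 0 ∨ f x = 1 := by
      intro x
      have := congrFun hff x
      simp only [Pi.mul_apply] at this
      exact (IsIdempotentElem.iff_eq_zero_or_one).1 this
    have hp' : p = M' *ᵥ (fun t : H => f (g * t)) := by
      rw [hfp, Matrix.mulVec_mulVec, h1', Matrix.one_mulVec]
    have hpR : ∀ k, p k ∈ R := by
      intro k
      rw [hp']
      refine R.sum_mem fun i _ => R.mul_mem (h3 _ _) ?_
      rcases hval (g * i) with h | h <;> simp only [h]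
      exacts [R.zero_mem, R.one_mem]
    choose v hv using fun k => hRP _ (hpR k) (hp k)
    have hF : (fun t : H => f (g * t)) ∈ F := by
      refine (h4 _).2 ⟨v, ?_⟩
      rw [hfp]; congr 1; funext j; exact (hv j).symm
    have hcst : ∀ t : H, f (g * t) = f (g * (1 : H)) := by
      rcases h6 _ hF (by funext t; exact congrFun hff _) with h | h
      · intro t; exact (congrFun h t).trans (congrFun h 1).symm
      · intro t; exact (congrFun h t).trans (congrFun h 1).symm
    simpa using hcst ⟨t, ht⟩

theorem glue {Rp Rm R0 : Subring Q} {Pp Pm : Subalgebra E Q} (hp0 : Rp ≤ R0) (hm0 : Rm ≤ R0)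
    (hRp : ∀ x ∈ Rp, x ∈ Pp) (hRm : ∀ x ∈ Rm, x ∈ Pm)
    (hP : ∀ x ∈ Pp, x ∈ Pm → ∃ a, algebraMap E Q a = x)
    {G : Type} [Group G] [Fintype G] [DecidableEq G]
    (hcartan : ∀ B B' : Matrix G G Q, B * B' = 1 → (∀ i j, B i j ∈ R0) → (∀ i j, B' i j ∈ R0) →
      ∃ X X' Y Y' : Matrix G G Q, X * X' = 1 ∧ Y * Y' = 1 ∧ (∀ i j, X i j ∈ Pm) ∧
        (∀ i j, X' i j ∈ Pm) ∧ (∀ i j, Y i j ∈ Rp) ∧ (∀ i j, Y' i j ∈ Rp) ∧ B = Y * X)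
    (H₁ H₂ : Subgroup G) [Fintype H₁] [Fintype H₂] [DecidableEq H₁] [DecidableEq H₂]
    (hH : H₁ ⊔ H₂ = ⊤) (h1 : Good E Rp H₁) (h2 : Good E Rm H₂) : Good E R0 G := by
  classical
  obtain ⟨B, B', N, hB, hBR, hBR', hN, hN1, hNm, hNt, hNi⟩ := inflate H₁ h1 Pm
    (fun x hx hx' => hP x (hRp x hx) hx')
  obtain ⟨C, C', L, hC, hCR, hCR', hL, hL1, hLm, hLt, hLi⟩ := inflate H₂ h2 Pp
    (fun x hx hx' => hP x hx' (hRm x hx))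
  have hB' : B' * B = 1 := mul_eq_one_comm.1 hB
  have hC' : C' * C = 1 := mul_eq_one_comm.1 hC
  obtain ⟨X, X', Y, Y', hX, hY, hXP, hXP', hYR, hYR', hdec⟩ := hcartan (C' * B) (B' * C)
    (by rw [Matrix.mul_assoc, ← Matrix.mul_assoc B, hB, Matrix.one_mul, hC'])
    (fun i j => R0.sum_mem fun k _ => R0.mul_mem (hm0 (hCR' _ _)) (hp0 (hBR _ _)))
    (fun i j => R0.sum_mem fun k _ => R0.mul_mem (hp0 (hBR' _ _)) (hm0 (hCR _ _)))
  have hX' : X' * X = 1 := mul_eq_one_comm.1 hX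
  have hY' : Y' * Y = 1 := mul_eq_one_comm.1 hY
  have hM : B * X' = C * Y := by
    have : C * (C' * B) * X' = C * (Y * X) * X' := by rw [hdec]
    rw [← Matrix.mul_assoc C, hC, Matrix.one_mul] at this
    rw [this, Matrix.mul_assoc, Matrix.mul_assoc Y, hX, Matrix.mul_one]
  have hMinv : C * Y * (Y' * C') = 1 := by
    rw [Matrix.mul_assoc, ← Matrix.mul_assoc Y, hY, Matrix.one_mul, hC]
  have hMinv' : (Y' * C') * (C * Y) = 1 := mul_eq_one_comm.1 hMinv
  have hF : ∀ f : G → Q, (∃ v : G → E, f = (C * Y) *ᵥ (fun j => algebraMap E Q (v j))) ↔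
      f ∈ N ∧ f ∈ L := by
    intro f
    constructor
    · rintro ⟨v, rfl⟩
      constructor
      · refine (hN _).2 ⟨X' *ᵥ (fun j => algebraMap E Q (v j)), fun k => ?_, ?_⟩
        · exact Pm.sum_mem fun i _ => Pm.mul_mem (hXP' _ _) (Pm.algebraMap_mem _)
        · rw [Matrix.mulVec_mulVec, hM]
      · refine (hL _).2 ⟨Y *ᵥ (fun j => algebraMap E Q (v j)), fun k => ?_, ?_⟩
        · exact Pp.sum_mem fun i _ => Pp.mul_mem (hRp _ (hYR _ _)) (Pp.algebraMap_mem _)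
        · rw [Matrix.mulVec_mulVec]
    · rintro ⟨hfN, hfL⟩
      obtain ⟨p, hp, hfp⟩ := (hN _).1 hfN
      obtain ⟨q, hq, hfq⟩ := (hL _).1 hfL
      have e1 : f = (C * Y) *ᵥ (X *ᵥ p) := by
        rw [← hM, Matrix.mulVec_mulVec, Matrix.mul_assoc, hX', Matrix.mul_one, hfp]
      have e2 : f = (C * Y) *ᵥ (Y' *ᵥ q) := by
        rw [Matrix.mulVec_mulVec, Matrix.mul_assoc, hY, Matrix.mul_one, hfq]
      have e3 : X *ᵥ p = Y' *ᵥ q := by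
        have := congrArg (fun w => (Y' * C') *ᵥ w) (e1.symm.trans e2)
        simpa only [Matrix.mulVec_mulVec (M := Y' * C'), hMinv', Matrix.one_mulVec] using this
      have e4 : ∀ k, ∃ a, algebraMap E Q a = (X *ᵥ p) k := by
        intro k
        refine hP _ ?_ ?_
        · rw [e3]; exact Pp.sum_mem fun i _ => Pp.mul_mem (hRp _ (hYR' _ _)) (hq _)
        · exact Pm.sum_mem fun i _ => Pm.mul_mem (hXP _ _) (hp _)
      choose v hv using e4
      refine ⟨v, ?_⟩
      rw [e1]; congr 1; funext k; exact (hv k).symm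
  let F : Subalgebra E (G → Q) :=
    { carrier := {f | ∃ v : G → E, f = (C * Y) *ᵥ (fun j => algebraMap E Q (v j))}
      mul_mem' := by
        intro a b ha hb
        have ha := (hF a).1 ha
        have hb := (hF b).1 hb
        exact (hF _).2 ⟨hNm _ ha.1 _ hb.1, hLm _ ha.2 _ hb.2⟩
      add_mem' := by
        rintro _ _ ⟨v, rfl⟩ ⟨w, rfl⟩
        refine ⟨v + w, ?_⟩
        rw [← Matrix.mulVec_add]
        congr 1; funext j; simp
      algebraMap_mem' := by
        intro r
        obtain ⟨v, hv⟩ := (hF 1).2 ⟨hN1, hL1⟩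
        refine ⟨r • v, ?_⟩
        have : (fun j => algebraMap E Q ((r • v) j)) = algebraMap E Q r •
          (fun j => algebraMap E Q (v j)) := by funext j; simp
        rw [this, Matrix.mulVec_smul, ← hv]
        funext g
        simp [Pi.algebraMap_apply] }
  have hF' : ∀ f, f ∈ F ↔ f ∈ N ∧ f ∈ L := hF
  refine ⟨F, C * Y, Y' * C', hMinv, ?_, ?_, fun f => Iff.rfl, ?_, ?_⟩
  · exact fun i j => R0.sum_mem fun k _ => R0.mul_mem (hm0 (hCR _ _)) (hp0 (hYR _ _))
  · exact fun i j => R0.sum_mem fun k _ => R0.mul_mem (hp0 (hYR' _ _)) (hm0 (hCR' _ _))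
  · intro f hf g
    have hf := (hF' f).1 hf
    exact (hF' _).2 ⟨hNt _ hf.1 g, hLt _ hf.2 g⟩
  · intro f hf hff
    have hf := (hF' f).1 hf
    have a1 := hNi f hf.1 hff
    have a2 := hLi f hf.2 hff
    let S : Subgroup G :=
      { carrier := {t | ∀ g, f (g * t) = f g}
        one_mem' := by intro g; simp
        mul_mem' := by
          intro a b ha hb g
          rw [← mul_assoc, hb, ha]
        inv_mem' := by
          intro a ha g
          have := ha (g * a⁻¹)
          simpa using this.symm }
    have hS : S = ⊤ := by
      rw [eq_top_iff, ← hH]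
      exact sup_le (fun t ht g => a1 g t ht) (fun t ht g => a2 g t ht)
    have hc : ∀ g, f g = f 1 := by
      intro g
      have : g ∈ S := by rw [hS]; trivial
      simpa using this 1
    have := congrFun hff 1
    simp only [Pi.mul_apply] at this
    rcases (IsIdempotentElem.iff_eq_zero_or_one).1 this with h | h
    · left; funext g; rw [hc, h]; rfl
    · right; funext g; rw [hc, h]; rfl

/-- The final step: a `Good` datum gives a Galois extension. -/
theorem Good.galois {R : Subring Q} {G : Type} [Group G] [Fintype G] [DecidableEq G]
    (h : Good E R G) :
    ∃ (N : Type) (_ : Field N) (_ : Algebra E N),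
      FiniteDimensional E N ∧ IsGalois E N ∧ Nonempty ((N ≃ₐ[E] N) ≃* G) := by
  obtain ⟨F, M, M', h1, h2, h3, h4, h5, h6⟩ := h
  have h1' : M' * M = 1 := mul_eq_one_comm.1 h1
  let L : (G → E) →ₗ[E] (G → Q) :=
    { toFun := fun v => M *ᵥ (fun j => algebraMap E Q (v j))
      map_add' := by
        intro v w
        rw [← Matrix.mulVec_add]; congr 1; funext j; simp
      map_smul' := by
        intro r v
        have : (fun j => algebraMap E Q ((r • v) j)) = algebraMap E Q r •
          (fun j => algebraMap E Q (v j)) := by funext j; simp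
        rw [this, Matrix.mulVec_smul]
        funext g
        simp [Algebra.smul_def] }
  have hLinj : Function.Injective L := by
    intro v w hvw
    have := congrArg (fun u => M' *ᵥ u) hvw
    simp only [L, LinearMap.coe_mk, AddHom.coe_mk, Matrix.mulVec_mulVec, h1',
      Matrix.one_mulVec] at this
    funext j
    exact (algebraMap E Q).injective (congrFun this j)
  have hLr : LinearMap.range L = Subalgebra.toSubmodule F := by
    ext f
    rw [LinearMap.mem_range, Subalgebra.mem_toSubmodule, h4]
    exact ⟨fun ⟨v, hv⟩ => ⟨v, hv.symm⟩, fun ⟨v, hv⟩ => ⟨v, hv.symm⟩⟩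
  let eqv : (G → E) ≃ₗ[E] F := (LinearEquiv.ofInjective L hLinj).trans (LinearEquiv.ofEq _ _ hLr)
  have hfin : FiniteDimensional E F := Module.Finite.equiv eqv
  have hrank : Module.finrank E F = Fintype.card G := by
    rw [← eqv.finrank_eq, Module.finrank_fintype_fun_eq_card]
  have hart : IsArtinianRing F := IsArtinianRing.of_finite E F
  have hfield : IsField F := by
    refine ⟨⟨0, 1, ?_⟩, mul_comm, ?_⟩
    · intro h
      have := congrFun (congrArg Subtype.val h) 1
      simp at this
    · intro a ha
      obtain ⟨n, y, hy⟩ := IsArtinian.exists_pow_succ_smul_dvd a (1 : F)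
      have hv : ∀ g, (a : G → Q) g ≠ 0 → (a : G → Q) g * (y : G → Q) g = 1 := by
        intro g hg
        have := congrFun (congrArg Subtype.val hy) g
        simp only [smul_eq_mul, mul_one] at this
        push_cast at this
        simp only [Pi.mul_apply, Pi.pow_apply] at this
        rw [Nat.succ_eq_add_one, pow_succ, mul_assoc] at this
        exact mul_left_cancel₀ (pow_ne_zero n hg) (by rw [this, mul_one])
      refine ⟨y, ?_⟩
      rcases h6 (a * y : F) (a * y).2 (by
        funext g
        by_cases hg : (a : G → Q) g = 0
        · simp [hg]
        · simp [hv g hg]) with h | h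
      · exfalso
        apply ha
        ext g
        by_contra hg
        have := congrFun h g
        simp only [MulMemClass.coe_mul, Pi.mul_apply] at this
        rw [hv g hg] at this
        simp at this
      · exact Subtype.ext h
  let _ : Field F := hfield.toField
  -- the action
  let tr : G → F → F := fun g f => ⟨fun h => (f : G → Q) (g⁻¹ * h), h5 _ f.2 _⟩
  let act0 : G → (F →ₐ[E] F) := fun g =>
    { toFun := tr g⁻¹
      map_one' := rfl
      map_mul' := fun _ _ => rfl
      map_zero' := rfl
      map_add' := fun _ _ => rfl
      commutes' := fun _ => rfl }
  let act : G →* (F ≃ₐ[E] F) := 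
    { toFun := fun g => AlgEquiv.ofAlgHom (act0 g⁻¹) (act0 g)
        (by ext f; simp [act0, tr]) (by ext f; simp [act0, tr])
      map_one' := by ext f; simp [act0, tr]
      map_mul' := by
        intro a b; ext f; simp [act0, tr, mul_assoc] }
  have hact : ∀ g (f : F) h, ((act g f : F) : G → Q) h = (f : G → Q) (g⁻¹ * h) := by
    intro g f h; simp [act, act0, tr]
  have hinj : Function.Injective act := by
    rw [injective_iff_map_eq_one]
    intro g hg
    by_contra hne
    have hcol : ∀ k, (fun i => M i k) ∈ F := by
      intro k
      refine (h4 _).2 ⟨Pi.single k 1, ?_⟩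
      funext i
      have : (fun j => algebraMap E Q ((Pi.single k 1 : G → E) j)) = Pi.single k 1 := by
        funext j
        by_cases h : j = k
        · subst h; simp
        · simp [h]
      rw [this]; simp
    have h7 : ∀ k, M g⁻¹ k = M 1 k := by
      intro k
      have := hact g ⟨_, hcol k⟩ 1
      rw [hg] at this
      simpa using this.symm
    have h8 : (M * M') g⁻¹ g⁻¹ = (M * M') 1 g⁻¹ := by
      simp only [Matrix.mul_apply, h7]
    rw [h1, Matrix.one_apply_eq, Matrix.one_apply_ne (by simpa using fun h => hne h)] at h8
    exact one_ne_zero h8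
  have hcard : Nat.card (F ≃ₐ[E] F) = Fintype.card G := by
    apply le_antisymm
    · rw [← hrank, Nat.card_eq_fintype_card]; exact AlgEquiv.card_le
    · rw [← Nat.card_eq_fintype_card]; exact Nat.card_le_card_of_injective _ hinj
  refine ⟨F, inferInstance, inferInstance, hfin, ?_, ⟨?_⟩⟩
  · exact IsGalois.of_card_aut_eq_finrank E F (by rw [hcard, hrank])
  · refine (MulEquiv.ofBijective act ?_).symm
    rw [Fintype.bijective_iff_injective_and_card]
    exact ⟨hinj, by rw [← hcard, Nat.card_eq_fintype_card]⟩

/-- The group-theoretic induction. -/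
theorem good_all {Rp : Subring Q}
    (hcyc : ∀ (G : Type) [Group G] [Fintype G] [DecidableEq G], IsCyclic G → Good E Rp G)
    (hglue : ∀ (G : Type) [Group G] [Fintype G] [DecidableEq G]
      (H₁ H₂ : Subgroup G) [Fintype H₁] [Fintype H₂] [DecidableEq H₁] [DecidableEq H₂],
      H₁ ⊔ H₂ = ⊤ → Good E Rp H₁ → Good E Rp H₂ → Good E Rp G)
    (G : Type) [Group G] [Fintype G] [DecidableEq G] : Good E Rp G := by
  classical
  have key : ∀ s : Finset G, Good E Rp (Subgroup.closure (s : Set G)) := by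
    intro s
    induction s using Finset.induction_on with
    | empty =>
      have e : (⊥ : Subgroup G) ≃* Subgroup.closure ((∅ : Finset G) : Set G) :=
        MulEquiv.subgroupCongr (by simp)
      exact (hcyc _ (inferInstance : IsCyclic (⊥ : Subgroup G))).iso e
    | insert a s ha ih =>
      set H₁ := Subgroup.zpowers a
      set H₂ := Subgroup.closure (s : Set G)
      have hJ : H₁ ⊔ H₂ = Subgroup.closure ((insert a s : Finset G) : Set G) := by
        rw [Finset.coe_insert, Set.insert_eq, Subgroup.closure_union,
          ← Subgroup.zpowers_eq_closure]
      refine Good.iso (MulEquiv.subgroupCongr hJ) ?_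
      have g1 : Good E Rp H₁ := hcyc _ inferInstance
      refine hglue _ (H₁.subgroupOf (H₁ ⊔ H₂)) (H₂.subgroupOf (H₁ ⊔ H₂)) ?_ ?_ ?_
      · rw [← Subgroup.subgroupOf_sup le_sup_left le_sup_right, Subgroup.subgroupOf_self]
      · exact g1.iso (Subgroup.subgroupOfEquivOfLe le_sup_left).symm
      · exact ih.iso (Subgroup.subgroupOfEquivOfLe le_sup_right).symm
  have h := key Finset.univ
  refine h.iso ((MulEquiv.subgroupCongr ?_).trans Subgroup.topEquiv)
  simp

end Algebra

end Patch


namespace Patch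

section Wiener

/-- weights -/
noncomputable def wt (n : ℤ) : ℝ := 2 ^ n.natAbs

theorem wt_pos (n : ℤ) : 0 < wt n := by unfold wt; positivity

theorem wt_add (m n : ℤ) : wt (m + n) ≤ wt m * wt n := by
  unfold wt
  rw [← pow_add]
  exact pow_le_pow_right₀ (by norm_num) (Int.natAbs_add_le m n)

/-- Laurent polynomials with the weighted norm -/
def LP : Type := AddMonoidAlgebra ℂ ℤ

noncomputable instance : CommRing LP := inferInstanceAs (CommRing (AddMonoidAlgebra ℂ ℤ))
noncomputable instance : Algebra ℂ LP := inferInstanceAs (Algebra ℂ (AddMonoidAlgebra ℂ ℤ))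

/-- coefficients -/
noncomputable def LP.cf (p : LP) : ℤ →₀ ℂ := AddMonoidAlgebra.coeff p

/-- monomials -/
noncomputable def LP.mon (n : ℤ) (c : ℂ) : LP := AddMonoidAlgebra.single n c

theorem LP.cf_add (p q : LP) : (p + q).cf = p.cf + q.cf := rfl
theorem LP.cf_smul (c : ℂ) (p : LP) : (c • p).cf = c • p.cf := rfl
theorem LP.cf_zero : (0 : LP).cf = 0 := rfl
theorem LP.cf_mon (n : ℤ) (c : ℂ) : (LP.mon n c).cf = Finsupp.single n c := rfl
theorem LP.sum_mon (p : LP) : p.cf.sum LP.mon = p := AddMonoidAlgebra.sum_coeff_single p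
theorem LP.mon_mul (m n : ℤ) (a b : ℂ) : LP.mon m a * LP.mon n b = LP.mon (m + n) (a * b) :=
  AddMonoidAlgebra.single_mul_single ..
theorem LP.smul_mon (c : ℂ) (n : ℤ) (a : ℂ) : c • LP.mon n a = LP.mon n (c * a) :=
  AddMonoidAlgebra.smul_single' ..
theorem LP.mul_eq (p q : LP) :
    p * q = p.cf.sum fun m a => q.cf.sum fun n b => LP.mon (m + n) (a * b) :=
  AddMonoidAlgebra.mul_def ..
theorem LP.one_eq : (1 : LP) = LP.mon 0 1 := rfl

noncomputable instance : Norm LP := ⟨fun p => p.cf.sum fun n c => ‖c‖ * wt n⟩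

theorem LP.norm_eq (p : LP) : ‖p‖ = p.cf.sum fun n c => ‖c‖ * wt n := rfl

theorem LP.norm_mon (n : ℤ) (c : ℂ) : ‖LP.mon n c‖ = ‖c‖ * wt n := by
  rw [LP.norm_eq, LP.cf_mon, Finsupp.sum_single_index (by simp)]

theorem LP.norm_zero' : ‖(0 : LP)‖ = 0 := by
  rw [LP.norm_eq, LP.cf_zero, Finsupp.sum_zero_index]

theorem LP.norm_add_le' (p q : LP) : ‖p + q‖ ≤ ‖p‖ + ‖q‖ := by
  classical
  simp only [LP.norm_eq, LP.cf_add]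
  rw [Finsupp.sum_of_support_subset (p.cf + q.cf) (s := p.cf.support ∪ q.cf.support)
      Finsupp.support_add _ (by simp),
    Finsupp.sum_of_support_subset p.cf (s := p.cf.support ∪ q.cf.support)
      Finset.subset_union_left _ (by simp),
    Finsupp.sum_of_support_subset q.cf (s := p.cf.support ∪ q.cf.support)
      Finset.subset_union_right _ (by simp), ← Finset.sum_add_distrib]
  refine Finset.sum_le_sum fun n _ => ?_
  rw [← add_mul]
  exact mul_le_mul_of_nonneg_right (norm_add_le _ _) (wt_pos n).le

theorem LP.norm_sum_le' {ι : Type} (s : Finset ι) (f : ι → LP) :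
    ‖∑ i ∈ s, f i‖ ≤ ∑ i ∈ s, ‖f i‖ :=
  Finset.le_sum_of_subadditive _ LP.norm_zero'.le LP.norm_add_le' _ _

theorem LP.core : SeminormedSpace.Core ℂ LP where
  norm_nonneg p := Finset.sum_nonneg fun n _ => mul_nonneg (norm_nonneg _) (wt_pos n).le
  norm_smul c p := by
    rw [LP.norm_eq, LP.norm_eq, LP.cf_smul,
      Finsupp.sum_of_support_subset (c • p.cf) (s := p.cf.support) Finsupp.support_smul _ (by simp)]
    simp [Finsupp.sum, Finset.mul_sum, mul_assoc]
  norm_triangle := LP.norm_add_le'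

theorem LP.norm_mul_le' (p q : LP) : ‖p * q‖ ≤ ‖p‖ * ‖q‖ := by
  rw [LP.mul_eq, LP.norm_eq p, LP.norm_eq q]
  simp only [Finsupp.sum]
  refine (LP.norm_sum_le' _ _).trans ?_
  rw [Finset.sum_mul]
  refine Finset.sum_le_sum fun m _ => ?_
  refine (LP.norm_sum_le' _ _).trans ?_
  rw [Finset.mul_sum]
  refine Finset.sum_le_sum fun n _ => ?_
  rw [LP.norm_mon, norm_mul]
  calc _ ≤ ‖p.cf m‖ * ‖q.cf n‖ * (wt m * wt n) :=
        mul_le_mul_of_nonneg_left (wt_add m n) (by positivity)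
    _ = _ := by ring

noncomputable instance LP.instSNACG : SeminormedAddCommGroup LP :=
  SeminormedAddCommGroup.ofCore LP.core

noncomputable instance LP.instSNCR : SeminormedCommRing LP :=
  { LP.instSNACG, (inferInstance : CommRing LP) with
    norm_mul_le := LP.norm_mul_le' }

noncomputable instance LP.instNA : NormedAlgebra ℂ LP :=
  { (inferInstance : Algebra ℂ LP) with
    norm_smul_le := fun c p => (LP.core.norm_smul c p).le }

/-- The weighted Wiener algebra -/
def W : Type := UniformSpace.Completion LP

noncomputable instance : NormedCommRing W :=
  inferInstanceAs (NormedCommRing (UniformSpace.Completion LP))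
noncomputable instance : NormedAlgebra ℂ W :=
  inferInstanceAs (NormedAlgebra ℂ (UniformSpace.Completion LP))
instance : CompleteSpace W := inferInstanceAs (CompleteSpace (UniformSpace.Completion LP))

/-- embedding -/
noncomputable def LP.toW : LP →ₗᵢ[ℂ] W := UniformSpace.Completion.toComplₗᵢ

theorem LP.toW_dense : DenseRange LP.toW := UniformSpace.Completion.denseRange_coe

theorem LP.toW_mul (p q : LP) : LP.toW (p * q) = LP.toW p * LP.toW q :=
  UniformSpace.Completion.coe_mul p q

theorem LP.toW_one : LP.toW 1 = 1 := UniformSpace.Completion.coe_one LP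

/-- powers of the variable -/
noncomputable def T (n : ℤ) : W := LP.toW (LP.mon n 1)

theorem T_add (m n : ℤ) : T (m + n) = T m * T n := by
  rw [T, T, T, ← LP.toW_mul, LP.mon_mul, one_mul]

theorem T_zero : T 0 = 1 := by rw [T, ← LP.one_eq, LP.toW_one]

theorem norm_T (n : ℤ) : ‖T n‖ = wt n := by
  rw [T, LinearIsometry.norm_map, LP.norm_mon]; simp

instance : NormOneClass W := ⟨by rw [← T_zero, norm_T]; simp [wt]⟩

theorem LP.toW_eq (p : LP) : LP.toW p = p.cf.sum fun n c => c • T n := by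
  conv_lhs => rw [← LP.sum_mon p]
  simp only [Finsupp.sum, map_sum, T, ← map_smul, LP.smul_mon, mul_one]

theorem T_dense : Dense (Submodule.span ℂ (Set.range T) : Set W) := by
  refine LP.toW_dense.mono ?_
  rintro _ ⟨p, rfl⟩
  rw [LP.toW_eq]
  exact Submodule.sum_mem _ fun n _ =>
    Submodule.smul_mem _ _ (Submodule.subset_span (Set.mem_range_self n))

/-- Induction principle: closed linear conditions can be checked on monomials. -/
theorem W_induction {S : Submodule ℂ W} (hS : IsClosed (S : Set W)) (h : ∀ n, T n ∈ S) (f : W) :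
    f ∈ S := by
  have h1 : Submodule.span ℂ (Set.range T) ≤ S := by
    rw [Submodule.span_le]; rintro _ ⟨n, rfl⟩; exact h n
  have h2 := hS.closure_subset_iff.2 (show (Submodule.span ℂ (Set.range T) : Set W) ⊆ S from h1)
  rw [T_dense.closure_eq] at h2
  exact h2 trivial

theorem W_ext {V : Type} [NormedAddCommGroup V] [NormedSpace ℂ V] {L L' : W →L[ℂ] V}
    (h : ∀ n, L (T n) = L' (T n)) : L = L' := by
  ext f
  exact W_induction (S := LinearMap.eqLocus (L : W →ₗ[ℂ] V) (L' : W →ₗ[ℂ] V))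
    (isClosed_eq L.continuous L'.continuous) h f

/-- Universal property of the weighted `ℓ¹` space. -/
theorem W_lift {V : Type} [NormedAddCommGroup V] [NormedSpace ℂ V] [CompleteSpace V]
    (a : ℤ → V) (C : ℝ) (ha : ∀ n, ‖a n‖ ≤ C * wt n) :
    ∃ L : W →L[ℂ] V, (∀ n, L (T n) = a n) ∧ ∀ f, ‖L f‖ ≤ C * ‖f‖ := by
  let l : LP →ₗ[ℂ] V :=
    { toFun := fun p => p.cf.sum fun n c => c • a n
      map_add' := fun p q => by
        rw [LP.cf_add, Finsupp.sum_add_index' (by simp) (by intros; rw [add_smul])]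
      map_smul' := fun c p => by
        rw [LP.cf_smul, Finsupp.sum_smul_index' (by simp)]
        simp [Finsupp.sum, Finset.smul_sum, smul_smul] }
  have hl : ∀ p, ‖l p‖ ≤ C * ‖LP.toW.toLinearMap p‖ := by
    intro p
    change ‖p.cf.sum fun n c => c • a n‖ ≤ C * ‖LP.toW p‖
    rw [LinearIsometry.norm_map, LP.norm_eq]
    simp only [Finsupp.sum]
    rw [Finset.mul_sum]
    refine norm_sum_le_of_le _ fun n _ => ?_
    rw [norm_smul]
    calc _ ≤ ‖p.cf n‖ * (C * wt n) := mul_le_mul_of_nonneg_left (ha n) (norm_nonneg _)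
      _ = _ := by ring
  have hd : DenseRange LP.toW.toLinearMap := LP.toW_dense
  refine ⟨l.extendOfNorm LP.toW.toLinearMap, fun n => ?_,
    fun f => LinearMap.norm_extendOfNorm_apply_le hd C hl f⟩
  have := LinearMap.extendOfNorm_eq hd ⟨C, hl⟩ (LP.mon n 1)
  refine Eq.trans this ?_
  change (LP.mon n 1).cf.sum (fun n c => c • a n) = a n
  rw [LP.cf_mon, Finsupp.sum_single_index (by simp), one_smul]

end Wiener
end Patch


namespace Patch

section Hom

theorem W_hom {B : Type} [NormedCommRing B] [NormedAlgebra ℂ B] [CompleteSpace B] [NormOneClass B]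
    (u : Bˣ) (h1 : ‖(u : B)‖ ≤ 2) (h2 : ‖((u⁻¹ : Bˣ) : B)‖ ≤ 2) :
    ∃ L : W →ₐ[ℂ] B, Continuous L ∧ (∀ n : ℤ, L (T n) = ((u ^ n : Bˣ) : B)) ∧ ∀ f, ‖L f‖ ≤ ‖f‖ := by
  obtain ⟨L, hL, hn⟩ := W_lift (fun n : ℤ => ((u ^ n : Bˣ) : B)) 1 (by
    intro n
    rw [one_mul, wt]
    rcases Int.natAbs_eq n with h | h
    · rw [h, Int.natAbs_natCast, zpow_natCast, Units.val_pow_eq_pow_val]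
      exact (norm_pow_le _ _).trans (pow_le_pow_left₀ (norm_nonneg _) h1 _)
    · rw [h, Int.natAbs_neg, Int.natAbs_natCast, zpow_neg, zpow_natCast, ← inv_pow,
        Units.val_pow_eq_pow_val]
      exact (norm_pow_le _ _).trans (pow_le_pow_left₀ (norm_nonneg _) h2 _))
  have m1 : ∀ (n : ℤ) (f : W), L (T n * f) = ((u ^ n : Bˣ) : B) * L f := by
    intro n f
    have := W_ext (L := L.comp (ContinuousLinearMap.mul ℂ W (T n)))
      (L' := (ContinuousLinearMap.mul ℂ B ((u ^ n : Bˣ) : B)).comp L) (by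
        intro m
        simp [← T_add, hL, zpow_add])
    exact DFunLike.congr_fun this f
  have m2 : ∀ g f : W, L (g * f) = L g * L f := by
    intro g f
    have := W_ext (L := L.comp ((ContinuousLinearMap.mul ℂ W).flip f))
      (L' := ((ContinuousLinearMap.mul ℂ B).flip (L f)).comp L) (by
        intro m
        change L (T m * f) = L (T m) * L f
        rw [m1, hL])
    exact DFunLike.congr_fun this g
  have m0 : L 1 = 1 := by rw [← T_zero, hL]; simp
  exact ⟨AlgHom.ofLinearMap (L : W →ₗ[ℂ] B) m0 m2, L.continuous, hL, fun f => by simpa using hn f⟩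

/-- evaluation at a point of the annulus -/
theorem ev_exists (z : ℂ) (h : 1 / 2 ≤ ‖z‖ ∧ ‖z‖ ≤ 2) :
    ∃ L : W →ₐ[ℂ] ℂ, Continuous L ∧ (∀ n : ℤ, L (T n) = z ^ n) ∧ ∀ f, ‖L f‖ ≤ ‖f‖ := by
  have hz : z ≠ 0 := by
    rintro rfl; simp at h; linarith [h]
  obtain ⟨L, h1, h2, h3⟩ := W_hom (Units.mk0 z hz) h.2 (by
    simp only [Units.val_inv_eq_inv_val, Units.val_mk0, norm_inv]
    rw [inv_le_comm₀ (by positivity) (by norm_num)]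
    linarith [h.1])
  exact ⟨L, h1, fun n => by rw [h2]; simp, h3⟩

open Classical in
noncomputable def ev (z : ℂ) : W →ₗ[ℂ] ℂ :=
  if h : 1 / 2 ≤ ‖z‖ ∧ ‖z‖ ≤ 2 then ((ev_exists z h).choose : W →ₐ[ℂ] ℂ).toLinearMap else 0

def U : Set ℂ := {z | 1 / 2 < ‖z‖ ∧ ‖z‖ < 2}

theorem ev_spec {z : ℂ} (hz : z ∈ U) : Continuous (ev z) ∧ (∀ n : ℤ, ev z (T n) = z ^ n) ∧
    (∀ f, ‖ev z f‖ ≤ ‖f‖) ∧ (∀ f g, ev z (f * g) = ev z f * ev z g) := by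
  have h : 1 / 2 ≤ ‖z‖ ∧ ‖z‖ ≤ 2 := ⟨hz.1.le, hz.2.le⟩
  have h2 := (ev_exists z h).choose_spec
  have : ev z = ((ev_exists z h).choose : W →ₐ[ℂ] ℂ).toLinearMap := by rw [ev, dif_pos h]
  rw [this]
  exact ⟨h2.1, h2.2.1, h2.2.2, fun f g => map_mul (ev_exists z h).choose f g⟩

theorem U_open : IsOpen U :=
  (isOpen_lt continuous_const continuous_norm).inter (isOpen_lt continuous_norm continuous_const)

theorem U_ne {z : ℂ} (hz : z ∈ U) : z ≠ 0 := by
  rintro rfl; have := hz.1; simp at this; linarith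

theorem U_preconnected : IsPreconnected U := by
  have : U = Complex.exp '' (Complex.re ⁻¹' Set.Ioo (Real.log (1 / 2)) (Real.log 2)) := by
    ext z
    constructor
    · intro hz
      refine ⟨Complex.log z, ?_, Complex.exp_log (U_ne hz)⟩
      have h0 : 0 < ‖z‖ := norm_pos_iff.2 (U_ne hz)
      simp only [Set.mem_preimage, Complex.log_re, Set.mem_Ioo]
      exact ⟨Real.log_lt_log (by norm_num) hz.1, Real.log_lt_log h0 hz.2⟩
    · rintro ⟨w, hw, rfl⟩
      refine ⟨?_, ?_⟩
      · rw [Complex.norm_exp, ← Real.log_lt_iff_lt_exp (by norm_num)]; exact hw.1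
      · rw [Complex.norm_exp, ← Real.lt_log_iff_exp_lt (by norm_num)]; exact hw.2
  rw [this]
  refine IsPreconnected.image ?_ _ Complex.continuous_exp.continuousOn
  exact ((convex_Ioo _ _).linear_preimage Complex.reLm).isPreconnected

theorem LP_approx (f : W) {ε : ℝ} (hε : 0 < ε) : ∃ p : LP, ‖f - p.toW‖ < ε := by
  obtain ⟨p, hp⟩ := LP.toW_dense.exists_dist_lt f hε
  exact ⟨p, by rwa [← dist_eq_norm]⟩

theorem ev_toW {z : ℂ} (hz : z ∈ U) (p : LP) : ev z p.toW = p.cf.sum fun n c => c * z ^ n := by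
  rw [LP.toW_eq]
  simp only [Finsupp.sum, map_sum, map_smul, (ev_spec hz).2.1, smul_eq_mul]

theorem ev_analytic (f : W) : AnalyticOnNhd ℂ (fun z => ev z f) U := by
  refine DifferentiableOn.analyticOnNhd ?_ U_open
  choose p hp using fun n : ℕ => LP_approx f (ε := 1 / (n + 1)) (by positivity)
  have hu : TendstoUniformlyOn (fun n z => ev z (p n).toW) (fun z => ev z f) Filter.atTop U := by
    rw [Metric.tendstoUniformlyOn_iff]
    intro ε hε
    obtain ⟨N, hN⟩ := exists_nat_one_div_lt hε
    filter_upwards [Filter.eventually_ge_atTop N] with n hn z hz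
    rw [dist_eq_norm, ← map_sub]
    refine ((ev_spec hz).2.2.1 _).trans_lt ((hp n).trans_le (le_trans ?_ hN.le))
    exact one_div_le_one_div_of_le (by positivity) (by gcongr)
  refine hu.tendstoLocallyUniformlyOn.differentiableOn (Filter.Eventually.of_forall fun n => ?_)
    U_open
  refine DifferentiableOn.congr (f := fun z => (p n).cf.sum fun n c => c * z ^ n) ?_
    fun z hz => ev_toW hz _
  simp only [Finsupp.sum]
  refine DifferentiableOn.fun_sum fun i _ => DifferentiableOn.const_mul ?_ _
  exact fun z hz => (differentiableAt_zpow.2 (Or.inl (U_ne hz))).differentiableWithinAt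

theorem coef_exists (n : ℤ) : ∃ L : W →L[ℂ] ℂ, (∀ m, L (T m) = if m = n then 1 else 0) ∧
    ∀ f, ‖L f‖ ≤ 1 * ‖f‖ := by
  refine W_lift _ 1 fun m => ?_
  have : (1 : ℝ) ≤ wt m := one_le_pow₀ (by norm_num)
  split_ifs
  · simpa
  · simp; linarith

noncomputable def coef (n : ℤ) : W →L[ℂ] ℂ := (coef_exists n).choose

theorem coef_T (n m : ℤ) : coef n (T m) = if m = n then 1 else 0 := (coef_exists n).choose_spec.1 m

theorem coef_toW (n : ℤ) (p : LP) : coef n p.toW = p.cf n := by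
  rw [LP.toW_eq]
  simp only [Finsupp.sum, map_sum, map_smul, coef_T, smul_eq_mul, mul_ite, mul_one, mul_zero]
  rw [Finset.sum_ite_eq']
  simp [eq_comm]

theorem coef_sum_le (s : Finset ℤ) (f : W) : ∑ n ∈ s, ‖coef n f‖ * wt n ≤ ‖f‖ := by
  refine LP.toW_dense.induction_on (p := fun f => ∑ n ∈ s, ‖coef n f‖ * wt n ≤ ‖f‖) f
    (isClosed_le (by fun_prop) continuous_norm) fun p => ?_
  simp only [coef_toW]
  rw [LinearIsometry.norm_map, LP.norm_eq, Finsupp.sum_of_support_subset (s := s ∪ p.cf.support) _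
    Finset.subset_union_right _ (by simp)]
  exact Finset.sum_le_sum_of_subset_of_nonneg Finset.subset_union_left
    fun i _ _ => mul_nonneg (norm_nonneg _) (wt_pos i).le

theorem eq_zero_of_coef {f : W} (h : ∀ n, coef n f = 0) : f = 0 := by
  rw [← norm_le_zero_iff]
  refine le_of_forall_pos_le_add fun ε hε => ?_
  obtain ⟨p, hp⟩ := LP_approx f (half_pos hε)
  have h1 := coef_sum_le p.cf.support (f - p.toW)
  simp only [map_sub, h, zero_sub, norm_neg, coef_toW] at h1
  have h2 : ‖p.toW‖ = ∑ n ∈ p.cf.support, ‖p.cf n‖ * wt n := by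
    rw [LinearIsometry.norm_map, LP.norm_eq]; rfl
  have h3 : ‖f‖ ≤ ‖f - p.toW‖ + ‖p.toW‖ := by
    simpa using norm_add_le (f - p.toW) p.toW
  linarith

theorem circle_sub_U {z : ℂ} (hz : z ∈ Metric.sphere (0 : ℂ) 1) : z ∈ U := by
  have : ‖z‖ = 1 := by simpa using hz
  refine ⟨?_, ?_⟩ <;> rw [this] <;> norm_num

theorem coef_circle (n : ℤ) (f : W) :
    (∮ z in C(0, 1), ev z f * z ^ (-n - 1)) = (2 * Real.pi * Complex.I) * coef n f := by
  have hci : ∀ f : W, CircleIntegrable (fun z => ev z f * z ^ (-n - 1)) 0 1 := by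
    intro f
    refine ContinuousOn.circleIntegrable zero_le_one ?_
    refine ContinuousOn.mul ((ev_analytic f).continuousOn.mono fun z hz => circle_sub_U hz) ?_
    exact fun z hz => (continuousAt_zpow₀ z _ (Or.inl (U_ne (circle_sub_U hz)))).continuousWithinAt
  let l : W →ₗ[ℂ] ℂ :=
    { toFun := fun f => ∮ z in C(0, 1), ev z f * z ^ (-n - 1)
      map_add' := fun f g => by
        rw [← circleIntegral.integral_add (hci f) (hci g)]
        congr 1; ext z; rw [map_add]; ring
      map_smul' := fun c f => by
        rw [RingHom.id_apply, ← circleIntegral.integral_smul]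
        congr 1; ext z; rw [map_smul]; simp [mul_assoc] }
  let L : W →L[ℂ] ℂ := l.mkContinuous (2 * Real.pi) (fun f => by
    have := circleIntegral.norm_integral_le_of_norm_le_const (c := 0) (R := 1) (C := ‖f‖)
      (f := fun z => ev z f * z ^ (-n - 1)) zero_le_one (by
        intro z hz
        have h1 : ‖z‖ = 1 := by simpa using hz
        rw [norm_mul, norm_zpow, h1, one_zpow, mul_one]
        exact (ev_spec (circle_sub_U hz)).2.2.1 f)
    simp only [mul_one] at this
    exact this)
  have := W_ext (L := L) (L' := (2 * Real.pi * Complex.I : ℂ) • coef n) (by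
    intro m
    change (∮ z in C(0, 1), ev z (T m) * z ^ (-n - 1)) = (2 * Real.pi * Complex.I) * coef n (T m)
    rw [coef_T]
    have h0 : (∮ z in C(0, 1), ev z (T m) * z ^ (-n - 1)) =
        ∮ z in C(0, 1), (z - 0) ^ (m - n - 1) := by
      refine circleIntegral.integral_congr zero_le_one fun z hz => ?_
      have hz' := circle_sub_U hz
      simp only [(ev_spec hz').2.1, sub_zero]
      rw [← zpow_add₀ (U_ne hz')]; congr 1; ring
    rw [h0]
    split_ifs with h
    · subst h
      have := circleIntegral.integral_sub_center_inv (0 : ℂ) (R := 1) one_ne_zero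
      rw [mul_one, ← this]
      congr 1; ext z
      rw [← zpow_neg_one]; congr 1; ring
    · rw [circleIntegral.integral_sub_zpow_of_ne (by omega), mul_zero])
  exact DFunLike.congr_fun this f

theorem eq_zero_of_ev {f : W} (h : ∀ z ∈ U, ev z f = 0) : f = 0 := by
  refine eq_zero_of_coef fun n => ?_
  have h1 := coef_circle n f
  have h2 : (∮ z in C(0, 1), ev z f * z ^ (-n - 1)) = ∮ z in C(0, 1), (0 : ℂ) :=
    circleIntegral.integral_congr zero_le_one fun z hz => by simp [h z (circle_sub_U hz)]
  rw [h2] at h1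
  have h3 : (2 * Real.pi * Complex.I : ℂ) ≠ 0 := Complex.two_pi_I_ne_zero
  simp only [circleIntegral, smul_zero, intervalIntegral.integral_zero] at h1
  exact (mul_eq_zero.1 h1.symm).resolve_left h3

theorem ev_identity {f : W} {z₀ : ℂ} (hz : z₀ ∈ U) (h : ∀ᶠ z in nhds z₀, ev z f = 0) : f = 0 :=
  eq_zero_of_ev fun _ hw => (ev_analytic f).eqOn_zero_of_preconnected_of_eventuallyEq_zero
    U_preconnected hz h hw

theorem one_mem_U : (1 : ℂ) ∈ U := by simp [U]; norm_num

instance : Nontrivial W := NormOneClass.nontrivial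

instance : NoZeroDivisors W where
  eq_zero_or_eq_zero_of_mul_eq_zero := by
    intro f g hfg
    by_cases hf : f = 0
    · exact Or.inl hf
    right
    have h1 := ((ev_analytic f) 1 one_mem_U).eventually_eq_zero_or_eventually_ne_zero
    rcases h1 with h1 | h1
    · exact absurd (ev_identity one_mem_U h1) hf
    have h2 := ((ev_analytic g) 1 one_mem_U).eventually_eq_zero_or_eventually_ne_zero
    rcases h2 with h2 | h2
    · exact ev_identity one_mem_U h2
    exfalso
    have h3 : ∀ᶠ z in nhdsWithin 1 {1}ᶜ, z ∈ U :=
      nhdsWithin_le_nhds (U_open.mem_nhds one_mem_U)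
    obtain ⟨z, ha, hb, hc⟩ := (h1.and (h2.and h3)).exists
    have := (ev_spec hc).2.2.2 f g
    rw [hfg, map_zero] at this
    exact mul_ne_zero ha hb this.symm

instance : IsDomain W := NoZeroDivisors.to_isDomain W

end Hom
end Patch


namespace Patch

section Sub

theorem geom_inv {A : Type} [NormedRing A] [CompleteSpace A] (S : Subring A)
    (hS : IsClosed (S : Set A)) {x : A} (hx : x ∈ S) (h : ‖x‖ < 1) :
    ∃ y ∈ S, (1 + x) * y = 1 ∧ y * (1 + x) = 1 ∧ ‖y‖ ≤ ‖(1 : A)‖ - 1 + (1 - ‖x‖)⁻¹ := by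
  have h' : ‖-x‖ < 1 := by rwa [norm_neg]
  have hs := summable_geometric_of_norm_lt_one h'
  refine ⟨∑' n : ℕ, (-x) ^ n, ?_, ?_, ?_, ?_⟩
  · refine hS.mem_of_tendsto hs.hasSum (Filter.Eventually.of_forall fun s => ?_)
    exact sum_mem fun n _ => pow_mem (neg_mem hx) n
  · simpa using mul_neg_geom_series (-x) h'
  · simpa using geom_series_mul_neg (-x) h'
  · simpa using tsum_geometric_le_of_norm_lt_one (-x) h'

open Classical in
theorem pr_exists (s : Set ℤ) : ∃ L : W →L[ℂ] W, (∀ n, L (T n) = if n ∈ s then T n else 0) ∧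
    ∀ f, ‖L f‖ ≤ 1 * ‖f‖ := by
  refine W_lift _ 1 fun n => ?_
  split_ifs
  · rw [norm_T, one_mul]
  · rw [norm_zero, one_mul]; exact (wt_pos n).le

/-- projection onto the monomials with exponents in `s` -/
noncomputable def pr (s : Set ℤ) : W →L[ℂ] W := (pr_exists s).choose

open Classical in
theorem pr_T (s : Set ℤ) (n : ℤ) : pr s (T n) = if n ∈ s then T n else 0 :=
  (pr_exists s).choose_spec.1 n

theorem norm_pr (s : Set ℤ) (f : W) : ‖pr s f‖ ≤ ‖f‖ := by
  have := (pr_exists s).choose_spec.2 f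
  rwa [one_mul] at this

open Classical in
theorem coef_pr (s : Set ℤ) (n : ℤ) (f : W) : coef n (pr s f) = if n ∈ s then coef n f else 0 := by
  have := W_ext (L := (coef n).comp (pr s)) (L' := if n ∈ s then coef n else 0) (by
    intro m
    simp only [ContinuousLinearMap.comp_apply, pr_T]
    by_cases h1 : m ∈ s <;> by_cases h2 : n ∈ s <;> simp [h1, h2, coef_T]
    · rintro rfl; exact h2 h1
    · rintro rfl; exact h1 h2)
  have h2 := DFunLike.congr_fun this f
  simp only [ContinuousLinearMap.comp_apply] at h2
  rw [h2]; split_ifs <;> rfl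

theorem W_eq_of_coef {f g : W} (h : ∀ n, coef n f = coef n g) : f = g :=
  sub_eq_zero.1 (eq_zero_of_coef fun n => by rw [map_sub, h, sub_self])

theorem pr_eq_iff (s : Set ℤ) (f : W) : pr s f = f ↔ ∀ n, n ∉ s → coef n f = 0 := by
  constructor
  · intro h n hn
    rw [← h, coef_pr, if_neg hn]
  · intro h
    refine W_eq_of_coef fun n => ?_
    rw [coef_pr]; split_ifs with h1
    · rfl
    · exact (h n h1).symm

theorem pr_pr (s : Set ℤ) (f : W) : pr s (pr s f) = pr s f :=
  (pr_eq_iff s _).2 fun n hn => by rw [coef_pr, if_neg hn]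

theorem pr_mul (s : AddSubmonoid ℤ) (f g : W) : pr s (pr s f * pr s g) = pr s f * pr s g := by
  have h1 : ∀ n m : ℤ, pr s (pr s (T n) * pr s (T m)) = pr s (T n) * pr s (T m) := by
    intro n m
    rw [pr_T, pr_T]
    by_cases hn : n ∈ (s : Set ℤ)
    · by_cases hm : m ∈ (s : Set ℤ)
      · rw [if_pos hn, if_pos hm, ← T_add, pr_T, if_pos]
        exact s.add_mem hn hm
      · rw [if_neg hm]; simp
    · rw [if_neg hn]; simp
  have h2 : ∀ (n : ℤ) (g : W), pr s (pr s (T n) * pr s g) = pr s (T n) * pr s g := by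
    intro n g
    exact DFunLike.congr_fun (W_ext
      (L := (pr s).comp ((ContinuousLinearMap.mul ℂ W (pr s (T n))).comp (pr s)))
      (L' := (ContinuousLinearMap.mul ℂ W (pr s (T n))).comp (pr s)) (h1 n)) g
  exact DFunLike.congr_fun (W_ext
      (L := (pr s).comp (((ContinuousLinearMap.mul ℂ W).flip (pr s g)).comp (pr s)))
      (L' := ((ContinuousLinearMap.mul ℂ W).flip (pr s g)).comp (pr s)) (fun n => h2 n g)) f

/-- closed subalgebra of elements supported in `s` -/
noncomputable def WS (s : AddSubmonoid ℤ) : Subalgebra ℂ W where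
  carrier := {f | pr s f = f}
  mul_mem' := by
    intro f g hf hg
    simp only [Set.mem_ofPred_eq] at hf hg ⊢
    rw [← hf, ← hg]; exact pr_mul s f g
  add_mem' := by
    intro f g hf hg
    simp only [Set.mem_ofPred_eq] at hf hg ⊢
    rw [map_add, hf, hg]
  algebraMap_mem' := by
    intro c
    simp only [Set.mem_ofPred_eq]
    rw [Algebra.algebraMap_eq_smul_one, map_smul, ← T_zero, pr_T, if_pos (SetLike.mem_coe.2 s.zero_mem)]

theorem mem_WS {s : AddSubmonoid ℤ} {f : W} : f ∈ WS s ↔ pr s f = f := Iff.rfl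

theorem mem_WS_iff {s : AddSubmonoid ℤ} {f : W} : f ∈ WS s ↔ ∀ n, n ∉ s → coef n f = 0 :=
  pr_eq_iff s f

theorem T_mem_WS {s : AddSubmonoid ℤ} {n : ℤ} (h : n ∈ s) : T n ∈ WS s := by
  rw [mem_WS, pr_T, if_pos (SetLike.mem_coe.2 h)]

theorem WS_closed (s : AddSubmonoid ℤ) : IsClosed (WS s : Set W) :=
  isClosed_eq (pr s).continuous continuous_id

def posM : AddSubmonoid ℤ where
  carrier := {n | 0 ≤ n}
  zero_mem' := by simp
  add_mem' := by simp only [Set.mem_ofPred_eq]; intros; omega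

def negM : AddSubmonoid ℤ where
  carrier := {n | n ≤ 0}
  zero_mem' := by simp
  add_mem' := by simp only [Set.mem_ofPred_eq]; intros; omega

theorem mem_posM {n : ℤ} : n ∈ posM ↔ 0 ≤ n := by
  rw [← SetLike.mem_coe]; simp [posM]
theorem mem_negM {n : ℤ} : n ∈ negM ↔ n ≤ 0 := by
  rw [← SetLike.mem_coe]; simp [negM]

theorem coef_T_mul (n m : ℤ) (f : W) : coef n (T m * f) = coef (n - m) f := by
  have := W_ext (L := (coef n).comp (ContinuousLinearMap.mul ℂ W (T m))) (L' := coef (n - m)) (by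
    intro k
    change coef n (T m * T k) = _
    rw [← T_add, coef_T, coef_T]
    congr 1
    exact propext ⟨fun h => by omega, fun h => by omega⟩)
  exact DFunLike.congr_fun this f

theorem T_natCast (n : ℕ) : T n = T 1 ^ n := by
  induction n with
  | zero => simp [T_zero]
  | succ n ih => rw [Nat.cast_succ, T_add, ih, pow_succ]

/-- `Rp ∩ T N Rm` consists of polynomials. -/
theorem exists_poly {f : W} {N : ℕ} (h1 : f ∈ WS posM) (h2 : T (-N) * f ∈ WS negM) :
    ∃ p : Polynomial ℂ, Polynomial.aeval (T 1) p = f := by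
  rw [mem_WS_iff] at h1 h2
  refine ⟨∑ n ∈ Finset.range (N + 1), Polynomial.monomial n (coef n f), ?_⟩
  refine W_eq_of_coef fun n => ?_
  simp only [map_sum, Polynomial.aeval_monomial, ← T_natCast, Algebra.algebraMap_eq_smul_one,
    smul_mul_assoc, one_mul, map_smul, coef_T, smul_eq_mul, mul_ite, mul_one, mul_zero]
  by_cases hn : 0 ≤ n
  · obtain ⟨k, rfl⟩ := Int.eq_ofNat_of_zero_le hn
    simp only [Nat.cast_inj]
    rw [Finset.sum_ite_eq']
    split_ifs with hk
    · rfl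
    · have := h2 (k - N) (by
        rw [mem_negM]; rw [Finset.mem_range] at hk; omega)
      rw [coef_T_mul] at this
      rw [← this]; congr 2; ring
  · rw [h1 n (by rwa [mem_posM])]
    refine Finset.sum_eq_zero fun k _ => if_neg (by omega)

theorem aeval_mem_pos (p : Polynomial ℂ) : Polynomial.aeval (T 1) p ∈ WS posM := by
  rw [Polynomial.aeval_eq_sum_range]
  exact sum_mem fun n _ => Subalgebra.smul_mem _
    (pow_mem (T_mem_WS (by rw [mem_posM]; norm_num)) n) _

theorem coef_aeval (p : Polynomial ℂ) (n : ℕ) : coef n (Polynomial.aeval (T 1) p) = p.coeff n := by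
  rw [Polynomial.aeval_eq_sum_range]
  simp only [map_sum, ← T_natCast, map_smul, coef_T, smul_eq_mul, mul_ite, mul_one, mul_zero,
    Nat.cast_inj]
  rw [Finset.sum_ite_eq']
  split_ifs with h
  · rfl
  · rw [Polynomial.coeff_eq_zero_of_natDegree_lt]; simpa using h

theorem aeval_inj : Function.Injective (Polynomial.aeval (R := ℂ) (T 1)) := by
  intro p q h
  ext n
  rw [← coef_aeval, h, coef_aeval]

theorem aeval_mem_neg (p : Polynomial ℂ) {N : ℕ} (h : p.natDegree ≤ N) :
    T (-N) * Polynomial.aeval (T 1) p ∈ WS negM := by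
  rw [Polynomial.aeval_eq_sum_range, Finset.mul_sum]
  refine sum_mem fun n hn => ?_
  rw [mul_smul_comm, ← T_natCast, ← T_add]
  refine Subalgebra.smul_mem _ (T_mem_WS ?_) _
  rw [mem_negM]; rw [Finset.mem_range] at hn; omega

/-- the flip `x ↦ 1/x` -/
theorem flip_exists : ∃ L : W →ₐ[ℂ] W, (∀ n, L (T n) = T (-n)) ∧ Function.Injective L ∧
    ∀ f ∈ WS posM, L f ∈ WS negM := by
  have hT : ∀ n m : ℤ, n + m = 0 → T n * T m = 1 := fun n m h => by rw [← T_add, h, T_zero]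
  let u : Wˣ := ⟨T (-1), T 1, hT _ _ (by norm_num), hT _ _ (by norm_num)⟩
  obtain ⟨L, hc, hL, hn⟩ := W_hom u (by change ‖T (-1)‖ ≤ 2; rw [norm_T, wt]; simp)
    (by change ‖T 1‖ ≤ 2; rw [norm_T, wt]; simp)
  have hu : ∀ n : ℕ, ((u ^ n : Wˣ) : W) = T (-n) := by
    intro n
    induction n with
    | zero => simp [T_zero]
    | succ n ih =>
      rw [pow_succ, Units.val_mul, ih, Nat.cast_succ, neg_add, T_add]
  have hL' : ∀ n, L (T n) = T (-n) := by
    intro n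
    rw [hL]
    rcases Int.natAbs_eq n with h | h
    · rw [h, zpow_natCast, hu]
    · rw [h, zpow_neg, zpow_natCast, neg_neg]
      refine Units.inv_eq_of_mul_eq_one_right ?_
      rw [hu, hT _ _ (by omega)]
  let Lc : W →L[ℂ] W := ⟨L.toLinearMap, hc⟩
  have hco : ∀ n f, coef n (L f) = coef (-n) f := by
    intro n f
    refine DFunLike.congr_fun (W_ext (L := (coef n).comp Lc) (L' := coef (-n)) ?_) f
    intro m
    change coef n (L (T m)) = _
    rw [hL', coef_T, coef_T]
    congr 1
    exact propext ⟨fun h => by omega, fun h => by omega⟩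
  refine ⟨L, hL', ?_, ?_⟩
  · intro f g h
    refine W_eq_of_coef fun n => ?_
    rw [← neg_neg n, ← hco, h, hco]
  · intro f hf
    rw [mem_WS_iff] at hf ⊢
    intro n hn
    rw [hco]; exact hf _ (by rw [mem_posM]; rw [mem_negM] at hn; omega)

theorem phi_exists : ∃ L : W →ₐ[ℂ] W, L (T 1) = 1 + (1 / 4 : ℂ) • T 1 ∧ Function.Injective L ∧
    ∀ f, L f ∈ WS posM := by
  have hT1 : T 1 ∈ WS posM := T_mem_WS (by rw [mem_posM]; norm_num)
  have hxm : (1 / 4 : ℂ) • T 1 ∈ WS posM := Subalgebra.smul_mem _ hT1 _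
  have hxn : ‖(1 / 4 : ℂ) • T 1‖ = 1 / 2 := by
    rw [norm_smul, norm_T, wt]; norm_num
  obtain ⟨y, hy, h1, h2, h3⟩ := geom_inv (WS posM).toSubring (WS_closed posM) hxm
    (by rw [hxn]; norm_num)
  let u : Wˣ := ⟨1 + (1 / 4 : ℂ) • T 1, y, h1, h2⟩
  obtain ⟨L, hc, hL, hn⟩ := W_hom u
    (by
      refine (norm_add_le _ _).trans ?_
      rw [norm_one, hxn]; norm_num)
    (by
      refine le_trans h3 ?_
      rw [norm_one, hxn]; norm_num)
  have hL1 : L (T 1) = 1 + (1 / 4 : ℂ) • T 1 := by rw [hL, zpow_one]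
  let Lc : W →L[ℂ] W := ⟨L.toLinearMap, hc⟩
  have hm : ∀ z ∈ U, 1 + z / 4 ∈ U := by
    intro z hz
    have hz4 : ‖z / 4‖ < 1 / 2 := by
      rw [norm_div]; norm_num; linarith [hz.2]
    constructor
    · have := norm_sub_le (1 + z / 4) (z / 4)
      simp only [add_sub_cancel_right, norm_one] at this
      linarith
    · have := norm_add_le 1 (z / 4)
      simp only [norm_one] at this
      linarith
  have hev : ∀ z ∈ U, ∀ f, ev z (L f) = ev (1 + z / 4) f := by
    intro z hz f
    let e1 : W →L[ℂ] ℂ := ⟨ev z, (ev_spec hz).1⟩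
    let e2 : W →L[ℂ] ℂ := ⟨ev (1 + z / 4), (ev_spec (hm z hz)).1⟩
    refine DFunLike.congr_fun (W_ext (L := e1.comp Lc) (L' := e2) ?_) f
    intro m
    change ev z (L (T m)) = ev (1 + z / 4) (T m)
    rw [hL, (ev_spec (hm z hz)).2.1]
    let φ : W →* ℂ := ⟨⟨ev z, by rw [← T_zero, (ev_spec hz).2.1, zpow_zero]⟩, (ev_spec hz).2.2.2⟩
    have h4 : Units.map φ u = Units.mk0 (1 + z / 4) (U_ne (hm z hz)) := by
      ext
      change ev z (1 + (1 / 4 : ℂ) • T 1) = 1 + z / 4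
      rw [map_add, map_smul, ← T_zero, (ev_spec hz).2.1, (ev_spec hz).2.1]
      simp; ring
    have h5 : ev z ((u ^ m : Wˣ) : W) = ((Units.map φ (u ^ m) : ℂˣ) : ℂ) := rfl
    rw [h5, map_zpow, h4]; simp
  refine ⟨L, hL1, ?_, ?_⟩
  · rw [injective_iff_map_eq_zero]
    intro f hf
    have h54 : (1 + 1 / 4 : ℂ) ∈ U := hm 1 one_mem_U
    refine ev_identity h54 ?_
    have hcont : ContinuousAt (fun w : ℂ => 4 * (w - 1)) (1 + 1 / 4) := by fun_prop
    have hU : U ∈ nhds ((fun w : ℂ => 4 * (w - 1)) (1 + 1 / 4)) := by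
      refine U_open.mem_nhds ?_
      convert one_mem_U using 1; norm_num
    filter_upwards [hcont hU] with w hw
    have h6 := hev _ hw f
    rw [hf, map_zero] at h6
    rw [h6]; congr 2; ring
  · intro f
    refine W_induction (S := (Subalgebra.toSubmodule (WS posM)).comap L.toLinearMap)
      ((WS_closed posM).preimage hc) ?_ f
    intro n
    change L (T n) ∈ WS posM
    rw [hL]
    rcases Int.natAbs_eq n with h | h
    · rw [h, zpow_natCast, Units.val_pow_eq_pow_val]
      exact pow_mem (add_mem (one_mem _) hxm) _
    · rw [h, zpow_neg, zpow_natCast, ← inv_pow, Units.val_pow_eq_pow_val]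
      exact pow_mem (show y ∈ WS posM from hy) _

end Sub
end Patch


namespace Patch

open Polynomial

section Field

/-- the big field -/
def Q : Type := FractionRing W

noncomputable instance : Field Q := inferInstanceAs (Field (FractionRing W))
noncomputable instance : Algebra W Q := inferInstanceAs (Algebra W (FractionRing W))
instance : IsFractionRing W Q := inferInstanceAs (IsFractionRing W (FractionRing W))

/-- embedding of the Wiener algebra -/
noncomputable def jW : W →+* Q := algebraMap W Q

theorem jW_inj : Function.Injective jW := IsFractionRing.injective W Q

/-- embedding of polynomials -/
noncomputable def jP : ℂ[X] →+* Q := jW.comp (aeval (R := ℂ) (T 1)).toRingHom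

theorem jP_apply (p : ℂ[X]) : jP p = jW (aeval (T 1) p) := rfl

theorem jP_inj : Function.Injective jP := jW_inj.comp aeval_inj

/-- embedding of rational functions -/
noncomputable def jE : RatFunc ℂ →+* Q := IsFractionRing.lift jP_inj

theorem jE_poly (p : ℂ[X]) : jE (algebraMap ℂ[X] (RatFunc ℂ) p) = jW (aeval (T 1) p) :=
  IsFractionRing.lift_algebraMap jP_inj p

theorem jE_X : jE RatFunc.X = jW (T 1) := by
  rw [← RatFunc.algebraMap_X, jE_poly, aeval_X]

theorem jE_C (c : ℂ) : jE (algebraMap ℂ (RatFunc ℂ) c) = jW (algebraMap ℂ W c) := by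
  rw [IsScalarTower.algebraMap_apply ℂ ℂ[X] (RatFunc ℂ), jE_poly, Polynomial.algebraMap_eq, aeval_C]

theorem jE_T (n : ℤ) : jE (RatFunc.X ^ n) = jW (T n) := by
  have h : ∀ k : ℕ, jE (RatFunc.X ^ k) = jW (T k) := by
    intro k
    rw [map_pow, jE_X, ← map_pow, T_natCast]
  rcases Int.natAbs_eq n with h1 | h1
  · rw [h1, zpow_natCast, h]
  · rw [h1, zpow_neg, zpow_natCast, map_inv₀, h]
    refine inv_eq_of_mul_eq_one_right ?_
    rw [← map_mul, ← T_add]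
    simp [T_zero]

noncomputable instance : Algebra (RatFunc ℂ) Q := jE.toAlgebra

theorem algebraMap_E (a : RatFunc ℂ) : algebraMap (RatFunc ℂ) Q a = jE a := rfl

noncomputable def R0 : Subring Q := jW.range
noncomputable def Rs (s : AddSubmonoid ℤ) : Subring Q := (WS s).toSubring.map jW

theorem mem_Rs {s : AddSubmonoid ℤ} {q : Q} : q ∈ Rs s ↔ ∃ f ∈ WS s, jW f = q := Iff.rfl

theorem mem_R0 {q : Q} : q ∈ R0 ↔ ∃ f, jW f = q := Iff.rfl

theorem jW_mem {s : AddSubmonoid ℤ} {f : W} (h : f ∈ WS s) : jW f ∈ Rs s := ⟨f, h, rfl⟩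

theorem Rs_le (s : AddSubmonoid ℤ) : Rs s ≤ R0 := by
  rintro _ ⟨f, _, rfl⟩; exact ⟨f, rfl⟩

/-- elements with a denominator in `E ∩ R`. -/
noncomputable def PP (R : Subring Q)
    (hR : ∀ a : RatFunc ℂ, ∃ s : RatFunc ℂ, s ≠ 0 ∧ jE s ∈ R ∧ jE s * jE a ∈ R) :
    Subalgebra (RatFunc ℂ) Q where
  carrier := {q | ∃ s : RatFunc ℂ, s ≠ 0 ∧ jE s ∈ R ∧ jE s * q ∈ R}
  mul_mem' := by
    rintro a b ⟨s, h1, h2, h3⟩ ⟨t, h4, h5, h6⟩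
    refine ⟨s * t, mul_ne_zero h1 h4, by rw [map_mul]; exact mul_mem h2 h5, ?_⟩
    have : jE (s * t) * (a * b) = (jE s * a) * (jE t * b) := by rw [map_mul]; ring
    rw [this]; exact mul_mem h3 h6
  add_mem' := by
    rintro a b ⟨s, h1, h2, h3⟩ ⟨t, h4, h5, h6⟩
    refine ⟨s * t, mul_ne_zero h1 h4, by rw [map_mul]; exact mul_mem h2 h5, ?_⟩
    have : jE (s * t) * (a + b) = jE t * (jE s * a) + jE s * (jE t * b) := by rw [map_mul]; ring
    rw [this]; exact add_mem (mul_mem h5 h3) (mul_mem h2 h6)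
  algebraMap_mem' := hR

theorem mem_PP {R : Subring Q} {hR} {q : Q} :
    q ∈ PP R hR ↔ ∃ s : RatFunc ℂ, s ≠ 0 ∧ jE s ∈ R ∧ jE s * q ∈ R := Iff.rfl

theorem le_PP {R : Subring Q} {hR} : ∀ x ∈ R, x ∈ PP R hR := fun x hx =>
  ⟨1, one_ne_zero, by rw [map_one]; exact one_mem R, by rwa [map_one, one_mul]⟩

theorem frac (a : RatFunc ℂ) : ∃ p q : ℂ[X], q ≠ 0 ∧
    a * algebraMap ℂ[X] (RatFunc ℂ) q = algebraMap ℂ[X] (RatFunc ℂ) p := by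
  refine ⟨a.num, a.denom, a.denom_ne_zero, ?_⟩
  have h := RatFunc.num_div_denom a
  have h2 : algebraMap ℂ[X] (RatFunc ℂ) a.denom ≠ 0 := RatFunc.algebraMap_ne_zero a.denom_ne_zero
  rw [div_eq_iff h2] at h
  exact h.symm

theorem hRp (a : RatFunc ℂ) : ∃ s : RatFunc ℂ, s ≠ 0 ∧ jE s ∈ Rs posM ∧ jE s * jE a ∈ Rs posM := by
  obtain ⟨p, q, hq, h⟩ := frac a
  refine ⟨algebraMap _ _ q, RatFunc.algebraMap_ne_zero hq, ?_, ?_⟩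
  · rw [jE_poly]; exact jW_mem (aeval_mem_pos q)
  · rw [← map_mul, mul_comm, h, jE_poly]; exact jW_mem (aeval_mem_pos p)

theorem hRm (a : RatFunc ℂ) : ∃ s : RatFunc ℂ, s ≠ 0 ∧ jE s ∈ Rs negM ∧ jE s * jE a ∈ Rs negM := by
  obtain ⟨p, q, hq, h⟩ := frac a
  let N := max p.natDegree q.natDegree
  refine ⟨RatFunc.X ^ (-N : ℤ) * algebraMap _ _ q,
    mul_ne_zero (zpow_ne_zero _ RatFunc.X_ne_zero) (RatFunc.algebraMap_ne_zero hq), ?_, ?_⟩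
  · rw [map_mul, jE_T, jE_poly, ← map_mul]
    exact jW_mem (aeval_mem_neg q (le_max_right _ _))
  · rw [← map_mul, mul_assoc, mul_comm _ a, h, map_mul, jE_T, jE_poly, ← map_mul]
    exact jW_mem (aeval_mem_neg p (le_max_left _ _))

theorem PP_inter (x : Q) (h1 : x ∈ PP (Rs posM) hRp) (h2 : x ∈ PP (Rs negM) hRm) :
    ∃ a, algebraMap (RatFunc ℂ) Q a = x := by
  obtain ⟨s, hs, -, f, hf, hf'⟩ := h1
  obtain ⟨t, ht, -, g, hg, hg'⟩ := h2
  obtain ⟨a, b, hb, hab⟩ := frac s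
  obtain ⟨c, d, hd, hcd⟩ := frac t
  have hb' := RatFunc.algebraMap_ne_zero hb
  have hd' := RatFunc.algebraMap_ne_zero hd
  have ha : algebraMap ℂ[X] (RatFunc ℂ) a ≠ 0 := by rw [← hab]; exact mul_ne_zero hs hb'
  have hc : algebraMap ℂ[X] (RatFunc ℂ) c ≠ 0 := by rw [← hcd]; exact mul_ne_zero ht hd'
  have e1 : jE (algebraMap _ _ a) * x = jW (aeval (T 1) b * f) := by
    rw [← hab, map_mul, jE_poly, map_mul, hf']; ring
  have e2 : jE (algebraMap _ _ c) * x = jW (aeval (T 1) d * g) := by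
    rw [← hcd, map_mul, jE_poly, map_mul, hg']; ring
  have e3 : jE (algebraMap _ _ (a * c)) * x = jW (aeval (T 1) (c * b) * f) := by
    rw [map_mul, map_mul, mul_comm (jE _), mul_assoc, e1, jE_poly, ← map_mul,
      map_mul (aeval (T 1)), mul_assoc]
  have e4 : jE (algebraMap _ _ (a * c)) * x = jW (aeval (T 1) (a * d) * g) := by
    rw [map_mul, map_mul, mul_assoc, e2, jE_poly, ← map_mul, map_mul (aeval (T 1)), mul_assoc]
  have e5 := jW_inj (e3.symm.trans e4)
  obtain ⟨p, hp⟩ := exists_poly (f := aeval (T 1) (c * b) * f) (N := (a * d).natDegree)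
    (mul_mem (aeval_mem_pos _) hf) (by
      rw [e5, ← mul_assoc]; exact mul_mem (aeval_mem_neg _ le_rfl) hg)
  refine ⟨algebraMap _ _ p / algebraMap _ _ (a * c), ?_⟩
  rw [algebraMap_E, map_div₀, div_eq_iff, mul_comm x, e3, ← hp, jE_poly]
  rw [map_mul (algebraMap ℂ[X] (RatFunc ℂ)), map_mul]
  exact mul_ne_zero ((_root_.map_ne_zero _).2 ha) ((_root_.map_ne_zero _).2 hc)

/-- extension of substitutions to the field -/
theorem subst_exists (L : W →ₐ[ℂ] W) (hL : Function.Injective L) (r s : RatFunc ℂ)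
    (hr : jE r = jW (L (T 1)))
    (hs : ∀ (σ : RatFunc ℂ →+* RatFunc ℂ), (∀ c, σ (algebraMap ℂ _ c) = algebraMap ℂ _ c) →
      σ RatFunc.X = r → σ s = RatFunc.X) :
    ∃ (ψ : Q →+* Q) (θ : RatFunc ℂ ≃+* RatFunc ℂ),
      (∀ a, ψ (algebraMap _ Q a) = algebraMap _ Q (θ a)) ∧ ∀ f, ψ (jW f) = jW (L f) := by
  have hi : Function.Injective (jW.comp (L : W →+* W)) := jW_inj.comp hL
  let ψ : Q →+* Q := IsFractionRing.lift (A := W) (K := Q) hi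
  have hψ : ∀ f, ψ (jW f) = jW (L f) := fun f => IsFractionRing.lift_algebraMap hi f
  have hp : ∀ p : ℂ[X], jE (aeval r p) = jW (L (aeval (T 1) p)) := by
    intro p
    have : (jE.comp (aeval (R := ℂ) r).toRingHom) =
        jW.comp ((L : W →+* W).comp (aeval (R := ℂ) (T 1)).toRingHom) := by
      refine Polynomial.ringHom_ext (fun c => ?_) ?_
      · simpa using jE_C c
      · simp [hr]
    exact DFunLike.congr_fun this p
  have hinj : Function.Injective (aeval (R := ℂ) r).toRingHom := by
    intro p q h
    have h1 := congrArg jE h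
    exact aeval_inj (hL (jW_inj ((hp p).symm.trans (h1.trans (hp q)))))
  let σ : RatFunc ℂ →+* RatFunc ℂ := IsFractionRing.lift hinj
  have hσ : ∀ p : ℂ[X], σ (algebraMap _ _ p) = aeval r p := fun p =>
    IsFractionRing.lift_algebraMap hinj p
  have hσC : ∀ c, σ (algebraMap ℂ _ c) = algebraMap ℂ _ c := by
    intro c
    rw [IsScalarTower.algebraMap_apply ℂ ℂ[X] (RatFunc ℂ), hσ, Polynomial.algebraMap_eq, aeval_C]
    rw [← Polynomial.algebraMap_eq, ← IsScalarTower.algebraMap_apply ℂ ℂ[X] (RatFunc ℂ)]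
  have hσX : σ RatFunc.X = r := by rw [← RatFunc.algebraMap_X, hσ, aeval_X]
  have hsurj : Function.Surjective σ := by
    have hpoly : ∀ p : ℂ[X], algebraMap ℂ[X] (RatFunc ℂ) p ∈ σ.fieldRange := by
      intro p
      induction p using Polynomial.induction_on' with
      | add p q hp hq => rw [map_add]; exact add_mem hp hq
      | monomial n c =>
        rw [← Polynomial.C_mul_X_pow_eq_monomial, map_mul, map_pow, RatFunc.algebraMap_X]
        refine mul_mem ⟨algebraMap ℂ _ c, ?_⟩ (pow_mem (RingHom.mem_fieldRange.2 ⟨s, hs σ hσC hσX⟩) n)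
        rw [hσC, IsScalarTower.algebraMap_apply ℂ ℂ[X] (RatFunc ℂ), Polynomial.algebraMap_eq]
    intro a
    have : a ∈ σ.fieldRange := by
      rw [← RatFunc.num_div_denom a]
      exact div_mem (hpoly _) (hpoly _)
    exact this
  refine ⟨ψ, RingEquiv.ofBijective σ ⟨σ.injective, hsurj⟩, fun a => ?_, hψ⟩
  change ψ (jE a) = jE (σ a)
  have : ψ.comp jE = jE.comp σ := by
    refine IsLocalization.ringHom_ext (nonZeroDivisors ℂ[X]) ?_
    refine RingHom.ext fun p => ?_
    simp only [RingHom.comp_apply]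
    rw [jE_poly, hψ, hσ, hp]
  exact DFunLike.congr_fun this a

theorem good_flip {G : Type} [Group G] [Fintype G] [DecidableEq G]
    (h : Good (RatFunc ℂ) (Rs posM) G) : Good (RatFunc ℂ) (Rs negM) G := by
  obtain ⟨L, h1, h2, h3⟩ := flip_exists
  obtain ⟨ψ, θ, h4, h5⟩ := subst_exists L h2 (RatFunc.X ^ (-1 : ℤ)) (RatFunc.X ^ (-1 : ℤ))
    (by rw [jE_T, h1]) (fun σ _ hX => by rw [map_zpow₀, hX]; simp)
  refine h.map ψ θ h4 ?_
  rintro _ ⟨f, hf, rfl⟩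
  rw [h5]; exact jW_mem (h3 f hf)

theorem good_phi {G : Type} [Group G] [Fintype G] [DecidableEq G]
    (h : Good (RatFunc ℂ) R0 G) : Good (RatFunc ℂ) (Rs posM) G := by
  obtain ⟨L, h1, h2, h3⟩ := phi_exists
  obtain ⟨ψ, θ, h4, h5⟩ := subst_exists L h2
    (1 + algebraMap ℂ _ (1 / 4) * RatFunc.X) (algebraMap ℂ _ 4 * (RatFunc.X - 1))
    (by rw [map_add, map_mul, jE_C, jE_X, h1, map_one, Algebra.smul_def, map_add, map_mul, map_one])
    (fun σ hC hX => by
      rw [map_mul, map_sub, map_one, hC, hX, add_sub_cancel_left, ← mul_assoc, ← map_mul]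
      norm_num)
  refine h.map ψ θ h4 ?_
  rintro _ ⟨f, rfl⟩
  rw [h5]; exact jW_mem (h3 f)

end Field
end Patch


namespace Patch

open Matrix

section Cartan

theorem split_exists {M : Type} [NormedRing M] [CompleteSpace M] (P : M →+ M)
    (hP : ∀ x, ‖P x‖ ≤ ‖x‖) (ε : M) (hε : ‖ε‖ ≤ 1 / 4) :
    ∃ v, v = - P (ε * (1 + v)) ∧ ‖v‖ < 1 ∧ ‖ε * (1 + v)‖ < 1 := by
  have hc : ContractingWith (1 / 4) (fun v => - P (ε * (1 + v))) := by
    refine ⟨by rw [← NNReal.coe_lt_coe]; norm_num, LipschitzWith.of_dist_le_mul fun x y => ?_⟩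
    rw [dist_eq_norm, dist_eq_norm]
    have : - P (ε * (1 + x)) - - P (ε * (1 + y)) = P (ε * (y - x)) := by
      rw [neg_sub_neg, ← map_sub]; congr 1; noncomm_ring
    rw [this]
    refine (hP _).trans ((norm_mul_le _ _).trans ?_)
    rw [norm_sub_rev y x]
    exact mul_le_mul_of_nonneg_right (by simpa using hε) (norm_nonneg _)
  obtain ⟨v, hv⟩ : ∃ v, v = - P (ε * (1 + v)) := ⟨_, (hc.fixedPoint_isFixedPt).symm⟩
  have h1 : ‖ε * (1 + v)‖ ≤ 1 / 4 + 1 / 4 * ‖v‖ := by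
    rw [mul_add, mul_one]
    refine (norm_add_le _ _).trans (add_le_add hε ((norm_mul_le _ _).trans ?_))
    exact mul_le_mul_of_nonneg_right hε (norm_nonneg _)
  have h2 : ‖v‖ ≤ ‖ε * (1 + v)‖ := by
    conv_lhs => rw [hv]
    rw [norm_neg]; exact hP _
  exact ⟨v, hv, by linarith, by linarith⟩

attribute [local instance] Matrix.linftyOpNormedRing

variable {G : Type} [Fintype G] [DecidableEq G]

theorem mat_complete : @CompleteSpace (Matrix G G W)
    (Matrix.linftyOpNormedRing (n := G) (α := W)).toMetricSpace.toPseudoMetricSpace.toUniformSpace :=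
  inferInstanceAs (@CompleteSpace (G → G → W) (Pi.uniformSpace _))

attribute [local instance] mat_complete

theorem mem_mat {S : Subring W} {A : Matrix G G W} : A ∈ S.matrix ↔ ∀ i j, A i j ∈ S := Iff.rfl

theorem mat_norm_le {A B : Matrix G G W} (h : ∀ i j, ‖A i j‖ ≤ ‖B i j‖) : ‖A‖ ≤ ‖B‖ := by
  rw [Matrix.linfty_opNorm_def, Matrix.linfty_opNorm_def, NNReal.coe_le_coe]
  exact Finset.sup_mono_fun fun i _ => Finset.sum_le_sum fun j _ => h i j

theorem mat_norm_le_card {A : Matrix G G W} {η : NNReal} (h : ∀ i j, ‖A i j‖ ≤ η) :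
    ‖A‖ ≤ Fintype.card G * η := by
  rw [Matrix.linfty_opNorm_def]
  have : (Finset.univ.sup fun i => ∑ j, ‖A i j‖₊) ≤ Fintype.card G * η := by
    refine Finset.sup_le fun i _ => (Finset.sum_le_card_nsmul _ _ η fun j _ => h i j).trans ?_
    simp
  exact_mod_cast this

theorem mat_closed (s : AddSubmonoid ℤ) :
    IsClosed ((WS s).toSubring.matrix (n := G) : Set (Matrix G G W)) := by
  have : ((WS s).toSubring.matrix (n := G) : Set (Matrix G G W)) =
      ⋂ i, ⋂ j, (fun A : Matrix G G W => A i j) ⁻¹' (WS s : Set W) := by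
    ext A
    simp only [Set.mem_iInter, Set.mem_preimage, SetLike.mem_coe]
    exact mem_mat
  rw [this]
  refine isClosed_iInter fun i => isClosed_iInter fun j => (WS_closed s).preimage ?_
  exact continuous_apply_apply i j

theorem mat_approx (B' : Matrix G G W) {δ : ℝ} (hδ : 0 < δ) :
    ∃ A : Matrix G G LP, ‖A.map LP.toW - B'‖ ≤ δ := by
  let η : NNReal := ⟨δ / (Fintype.card G + 1), by positivity⟩
  have hη : (0 : ℝ) < η := by change 0 < δ / (Fintype.card G + 1); positivity
  choose A hA using fun i j => LP_approx (B' i j) hη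
  refine ⟨Matrix.of A, (mat_norm_le_card (η := η) fun i j => ?_).trans ?_⟩
  · rw [Matrix.sub_apply, Matrix.map_apply, Matrix.of_apply, norm_sub_rev]
    exact (hA i j).le
  · change Fintype.card G * (δ / (Fintype.card G + 1)) ≤ δ
    rw [← mul_div_assoc, div_le_iff₀ (by positivity)]
    nlinarith

theorem cartan_W (B B' : Matrix G G W) (h : B * B' = 1) :
    ∃ (A : Matrix G G LP) (V V' Y Y' : Matrix G G W), Y * Y' = 1 ∧ V * V' = 1 ∧
      (∀ i j, V i j ∈ WS negM) ∧ (∀ i j, V' i j ∈ WS negM) ∧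
      (∀ i j, Y i j ∈ WS posM) ∧ (∀ i j, Y' i j ∈ WS posM) ∧ B * A.map LP.toW * V = Y := by
  obtain ⟨A, hA⟩ := mat_approx B' (δ := 1 / (4 * (‖B‖ + 1))) (by positivity)
  have hε : ‖B * A.map LP.toW - 1‖ ≤ 1 / 4 := by
    rw [← h, ← mul_sub]
    refine (norm_mul_le _ _).trans ((mul_le_mul_of_nonneg_left hA (norm_nonneg _)).trans ?_)
    rw [mul_one_div, div_le_iff₀ (by positivity)]
    nlinarith [norm_nonneg B]
  set ε := B * A.map LP.toW - 1 with hεd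
  let P : Matrix G G W →+ Matrix G G W :=
    AddMonoidHom.mapMatrix (pr {n | n < 0} : W →L[ℂ] W).toLinearMap.toAddMonoidHom
  have hPa : ∀ A i j, P A i j = pr {n | n < 0} (A i j) := fun A i j => rfl
  obtain ⟨v, hv, hv1, hv2⟩ := split_exists P (fun x => mat_norm_le fun i j => norm_pr _ _) ε hε
  have hvm : v ∈ (WS negM).toSubring.matrix (n := G) := by
    rw [mem_mat]
    intro i j
    rw [hv]
    change - (P (ε * (1 + v)) i j) ∈ WS negM
    refine neg_mem ?_
    rw [hPa, mem_WS_iff]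
    intro n hn
    rw [coef_pr, if_neg]
    rw [mem_negM] at hn
    simp only [Set.mem_ofPred_eq]; omega
  let w := ε * (1 + v) - P (ε * (1 + v))
  have hwm : w ∈ (WS posM).toSubring.matrix (n := G) := by
    rw [mem_mat]
    intro i j
    change (ε * (1 + v)) i j - P (ε * (1 + v)) i j ∈ WS posM
    rw [hPa, mem_WS_iff]
    intro n hn
    rw [mem_posM] at hn
    rw [map_sub, coef_pr, if_pos, sub_self]
    simp only [Set.mem_ofPred_eq]; omega
  have hwn : ‖w‖ < 1 := by
    refine lt_of_le_of_lt (mat_norm_le fun i j => ?_) hv2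
    change ‖(ε * (1 + v)) i j - P (ε * (1 + v)) i j‖ ≤ _
    rw [hPa]
    have : (ε * (1 + v)) i j - pr {n | n < 0} ((ε * (1 + v)) i j) =
        pr {n | 0 ≤ n} ((ε * (1 + v)) i j) := by
      refine W_eq_of_coef fun n => ?_
      rw [map_sub, coef_pr, coef_pr]
      simp only [Set.mem_ofPred_eq]
      split_ifs <;> first | omega | simp
    rw [this]
    exact norm_pr _ _
  obtain ⟨V', hV', e1, e2, -⟩ := geom_inv _ (mat_closed negM) hvm hv1
  obtain ⟨Y', hY', e3, e4, -⟩ := geom_inv _ (mat_closed posM) hwm hwn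
  have m1 := add_mem (one_mem _) hvm
  have m2 := add_mem (one_mem _) hwm
  rw [mem_mat] at hV' hY' m1 m2
  refine ⟨A, 1 + v, V', 1 + w, Y', e3, e1, m1, hV', m2, hY', ?_⟩
  have h5 : B * A.map LP.toW = 1 + ε := by rw [hεd]; abel
  have h6 : 1 + w = 1 + ε * (1 + v) + v := by
    have h7 : w = ε * (1 + v) + - P (ε * (1 + v)) := sub_eq_add_neg _ _
    rw [h7, ← hv, add_assoc]
  rw [h5, h6, add_mul, one_mul]; abel

theorem cartan (B B' : Matrix G G Q) (h : B * B' = 1) (hB : ∀ i j, B i j ∈ R0)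
    (hB' : ∀ i j, B' i j ∈ R0) :
    ∃ X X' Y Y' : Matrix G G Q, X * X' = 1 ∧ Y * Y' = 1 ∧
      (∀ i j, X i j ∈ PP (Rs negM) hRm) ∧ (∀ i j, X' i j ∈ PP (Rs negM) hRm) ∧
      (∀ i j, Y i j ∈ Rs posM) ∧ (∀ i j, Y' i j ∈ Rs posM) ∧ B = Y * X := by
  choose b hb using hB
  choose b' hb' using hB'
  let jM : Matrix G G W →+* Matrix G G Q := jW.mapMatrix
  have hjM : Function.Injective jM := by
    intro A A' h; ext i j
    exact jW_inj (congrFun (congrFun h i) j)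
  have eb : jM (Matrix.of b) = B := by ext i j; exact hb i j
  have eb' : jM (Matrix.of b') = B' := by ext i j; exact hb' i j
  obtain ⟨A, V, V', Y, Y', h1, h2, h3, h4, h5, h6, h7⟩ := cartan_W (Matrix.of b) (Matrix.of b') (by
    apply hjM; rw [map_mul, eb, eb', h, map_one])
  -- rational version of `A`
  let eM : Matrix G G (RatFunc ℂ) →+* Matrix G G Q := jE.mapMatrix
  have hLP : ∀ p : LP, ∃ a : RatFunc ℂ, jE a = jW p.toW := by
    intro p
    refine ⟨p.cf.sum fun n c => algebraMap ℂ _ c * RatFunc.X ^ n, ?_⟩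
    rw [LP.toW_eq]
    simp only [Finsupp.sum, map_sum, Algebra.smul_def, map_mul, jE_T, jE_C]
  choose a ha using fun i j => hLP (A i j)
  let AE : Matrix G G (RatFunc ℂ) := Matrix.of a
  have hAE : eM AE = jM (A.map LP.toW) := by ext i j; exact ha i j
  have h8 : B * eM AE * jM V = jM Y := by rw [hAE, ← eb, ← map_mul, ← map_mul, h7]
  have h1' : jM Y * jM Y' = 1 := by rw [← map_mul, h1, map_one]
  have h1'' : jM Y' * jM Y = 1 := mul_eq_one_comm.1 h1'
  have h2' : jM V * jM V' = 1 := by rw [← map_mul, h2, map_one]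
  have hX : jM Y' * B * (eM AE * jM V) = 1 := by
    rw [mul_assoc, ← mul_assoc B, h8, h1'']
  -- `AE` is invertible
  have hdet : IsUnit AE.det := by
    rw [isUnit_iff_ne_zero]
    intro h0
    have h9 : (eM AE).det = 0 := by
      have : (eM AE).det = jE AE.det := (RingHom.map_det jE AE).symm
      rw [this, h0, map_zero]
    have h10 := congrArg Matrix.det hX
    rw [Matrix.det_mul, Matrix.det_mul (eM AE), h9, Matrix.det_one] at h10
    simp at h10
  have hAi : eM AE * eM AE⁻¹ = 1 := by
    rw [← map_mul, Matrix.mul_nonsing_inv _ hdet, map_one]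
  have hX2 : jM Y' * B = jM V' * eM AE⁻¹ := by
    have h11 : (eM AE * jM V) * (jM V' * eM AE⁻¹) = 1 := by
      rw [mul_assoc, ← mul_assoc (jM V), h2', one_mul, hAi]
    calc jM Y' * B = jM Y' * B * ((eM AE * jM V) * (jM V' * eM AE⁻¹)) := by rw [h11, mul_one]
      _ = _ := by rw [← mul_assoc, hX, one_mul]
  have hE : ∀ (C : Matrix G G (RatFunc ℂ)) i j, eM C i j ∈ PP (Rs negM) hRm := fun C i j =>
    Subalgebra.algebraMap_mem _ (C i j)
  refine ⟨jM Y' * B, eM AE * jM V, jM Y, jM Y', hX, h1', ?_, ?_, fun i j => jW_mem (h5 i j),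
    fun i j => jW_mem (h6 i j), by rw [← mul_assoc, h1', one_mul]⟩
  · intro i j
    rw [hX2, Matrix.mul_apply]
    exact sum_mem fun k _ => mul_mem (le_PP _ (jW_mem (h4 i k))) (hE _ k j)
  · intro i j
    rw [Matrix.mul_apply]
    exact sum_mem fun k _ => mul_mem (hE _ i k) (le_PP _ (jW_mem (h3 k j)))

end Cartan
end Patch


namespace Patch

open Matrix

section Cyclic

/-- an `n`-th root of a linear polynomial -/
theorem root_exists (n : ℕ) (hn : n ≠ 0) : ∃ (c : ℂ) (y y' : W), c ≠ 0 ∧ y ∈ WS posM ∧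
    y' ∈ WS posM ∧ y * y' = 1 ∧ y ^ n = 1 + c • T 1 := by
  have : CompleteSpace (WS posM) := (WS_closed posM).completeSpace_coe
  have hT1 : T 1 ∈ WS posM := T_mem_WS (by rw [mem_posM]; norm_num)
  let t : WS posM := ⟨T 1, hT1⟩
  have hd := (hasStrictFDerivAt_id (𝕜 := ℂ) (1 : WS posM)).pow n
  have hmap := hd.map_nhds_eq_of_surj (by
    rw [LinearMap.range_eq_top]
    intro z
    refine ⟨(n : ℂ)⁻¹ • z, ?_⟩
    have hn' : (n : ℂ) ≠ 0 := Nat.cast_ne_zero.2 hn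
    change (n • (id (1 : WS posM)) ^ (n - 1)) • ((n : ℂ)⁻¹ • z) = z
    rw [id, one_pow, smul_assoc, one_smul, ← Nat.cast_smul_eq_nsmul ℂ, smul_smul,
      mul_inv_cancel₀ hn', one_smul])
  simp only [id, one_pow] at hmap
  have hball : Metric.ball (1 : WS posM) 1 ∈ nhds (1 : WS posM) := Metric.ball_mem_nhds _ one_pos
  have himg := Filter.image_mem_map (m := fun x : WS posM => x ^ n) hball
  have hmap' : Filter.map (fun x : WS posM => x ^ n) (nhds 1) = nhds 1 := hmap
  rw [hmap'] at himg
  have hct : ContinuousAt (fun c : ℂ => 1 + c • t) 0 := by fun_prop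
  have h0 : (fun c : ℂ => 1 + c • t) 0 = 1 := by simp
  change Filter.Tendsto _ _ (nhds ((fun c : ℂ => 1 + c • t) 0)) at hct
  rw [h0] at hct
  have hev : ∀ᶠ c in nhdsWithin (0 : ℂ) {0}ᶜ,
      1 + c • t ∈ (fun x : WS posM => x ^ n) '' Metric.ball 1 1 :=
    nhdsWithin_le_nhds (hct himg)
  have hne : ∀ᶠ c in nhdsWithin (0 : ℂ) {0}ᶜ, c ≠ 0 := eventually_mem_nhdsWithin
  obtain ⟨c, ⟨y, hy, hyc⟩, hc⟩ := (hev.and hne).exists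
  have hy1 : ‖(y : W) - 1‖ < 1 := by
    rw [Metric.mem_ball, dist_eq_norm] at hy; exact hy
  obtain ⟨y', hy', e1, -, -⟩ := geom_inv (WS posM).toSubring (WS_closed posM)
    (x := (y : W) - 1) (sub_mem y.2 (one_mem _)) hy1
  refine ⟨c, y, y', hc, y.2, hy', by simpa using e1, ?_⟩
  exact congrArg Subtype.val hyc

theorem intDegree_pow' {a : RatFunc ℂ} (ha : a ≠ 0) (n : ℕ) :
    (a ^ n).intDegree = n * a.intDegree := by
  induction n with
  | zero => simp
  | succ n ih =>
    rw [pow_succ, RatFunc.intDegree_mul (pow_ne_zero _ ha) ha, ih]; push_cast; ring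

theorem not_power {n k : ℕ} (hk : 0 < k) (hkn : k < n) {c κ : ℂ} (hc : c ≠ 0) {a : RatFunc ℂ}
    (ha : a ≠ 0) : a ^ n * (1 + algebraMap ℂ _ c * RatFunc.X) ^ k ≠ algebraMap ℂ _ κ := by
  intro h
  let p : Polynomial ℂ := Polynomial.C c * Polynomial.X + Polynomial.C 1
  have hp : (1 + algebraMap ℂ _ c * RatFunc.X : RatFunc ℂ) = algebraMap _ _ p := by
    simp only [p, map_add, map_mul, RatFunc.algebraMap_X, RatFunc.algebraMap_C, map_one,
      RatFunc.algebraMap_eq_C]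
    ring
  have hdeg : p.natDegree = 1 := Polynomial.natDegree_linear hc
  have hp0 : p ≠ 0 := by rintro h0; rw [h0] at hdeg; simp at hdeg
  have hp0' := RatFunc.algebraMap_ne_zero hp0
  have h1 := congrArg RatFunc.intDegree h
  rw [hp, RatFunc.intDegree_mul (pow_ne_zero _ ha) (pow_ne_zero _ hp0'), intDegree_pow' ha,
    intDegree_pow' hp0', RatFunc.intDegree_polynomial, hdeg, RatFunc.algebraMap_eq_C,
    RatFunc.intDegree_C] at h1
  have h2 : (n : ℤ) ∣ k := ⟨-a.intDegree, by push_cast at h1; linarith⟩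
  have h3 := Int.le_of_dvd (by omega) h2
  omega

theorem char_exists (G : Type) [Group G] [Fintype G] [IsCyclic G] : ∃ χ : G →* ℂˣ,
    (∀ σ, (χ σ : ℂ) ^ (Fintype.card G) = 1) ∧
    ∀ j k : Fin (Fintype.card G), ∑ σ, (((χ σ)⁻¹ : ℂˣ) : ℂ) ^ (j : ℕ) * (χ σ : ℂ) ^ (k : ℕ) =
      if j = k then ((Fintype.card G : ℕ) : ℂ) else 0 := by
  classical
  generalize hn : Fintype.card G = n
  have hn0 : n ≠ 0 := hn ▸ Fintype.card_ne_zero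
  have : NeZero n := ⟨hn0⟩
  -- the character
  have hcard : Nat.card G = Nat.card (rootsOfUnity n ℂ) := by
    rw [Nat.card_eq_fintype_card, Complex.card_rootsOfUnity, hn]
  obtain ⟨χ'⟩ : Nonempty (G ≃* rootsOfUnity n ℂ) := ⟨mulEquivOfCyclicCardEq hcard⟩
  let χ : G →* ℂˣ := (rootsOfUnity n ℂ).subtype.comp χ'.toMonoidHom
  have hχ : Function.Injective χ := Subtype.val_injective.comp χ'.injective
  have hχn : ∀ σ, (χ σ : ℂ) ^ n = 1 := by
    intro σ
    have := (χ' σ).2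
    rw [mem_rootsOfUnity] at this
    have h2 := congrArg Units.val this
    rw [Units.val_pow_eq_pow_val, Units.val_one] at h2
    exact h2
  clear_value χ
  refine ⟨χ, hχn, ?_⟩
  next =>
    intro j k
    split_ifs with hjk
    · subst hjk
      have : ∀ σ, (((χ σ)⁻¹ : ℂˣ) : ℂ) ^ (j : ℕ) * (χ σ : ℂ) ^ (j : ℕ) = 1 := by
        intro σ; rw [← mul_pow, Units.inv_mul, one_pow]
      simp [hn]
    · let f : G →* ℂ := (Units.coeHom ℂ).comp ((χ⁻¹) ^ (j : ℕ) * χ ^ (k : ℕ))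
      have hf : f ≠ 1 := by
        intro hf
        obtain ⟨g, hg⟩ := IsCyclic.exists_ofOrder_eq_natCard (α := G)
        have h1 : f g = 1 := by rw [hf]; rfl
        have h2 : (χ g)⁻¹ ^ (j : ℕ) * χ g ^ (k : ℕ) = 1 := Units.ext h1
        rw [inv_pow, inv_mul_eq_one, ← map_pow, ← map_pow] at h2
        have h3 := hχ h2
        have h4 := pow_injOn_Iio_orderOf (x := g) (by
          rw [hg, Nat.card_eq_fintype_card, hn]; exact j.2) (by
          rw [hg, Nat.card_eq_fintype_card, hn]; exact k.2) h3
        exact hjk (Fin.ext h4)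
      have := sum_hom_units_eq_zero f hf
      rw [← this]
      rfl

theorem shift_exists {G : Type} [Group G] (g : G) :
    ∃ τ : (G → Q) →ₐ[RatFunc ℂ] (G → Q), ∀ f h, τ f h = f (g * h) :=
  ⟨AlgHom.pi fun h => Pi.evalAlgHom (RatFunc ℂ) (fun _ => Q) (g * h), fun _ _ => rfl⟩

theorem good_cyclic (G : Type) [Group G] [Fintype G] [DecidableEq G] [IsCyclic G] :
    Good (RatFunc ℂ) (Rs posM) G := by
  classical
  set n := Fintype.card G with hn
  have hn0 : n ≠ 0 := Fintype.card_ne_zero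
  have : NeZero n := ⟨hn0⟩
  obtain ⟨c, y, y', hc, hy, hy', hyy, hyn⟩ := root_exists n hn0
  obtain ⟨χ, hχn, horth⟩ := char_exists G
  rw [← hn] at hχn
  let jC : ℂ →+* Q := jW.comp (algebraMap ℂ W)
  have hjC : ∀ c, jC c ∈ Rs posM := fun c => jW_mem (Subalgebra.algebraMap_mem _ c)
  have hjCE : ∀ c, jC c = jE (algebraMap ℂ _ c) := fun c => (jE_C c).symm
  have hYY : jW y * jW y' = 1 := by rw [← map_mul, hyy, map_one]
  have hYn : jW y ^ n = jE (1 + algebraMap ℂ _ c * RatFunc.X) := by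
    rw [← map_pow, hyn, map_add, map_one, map_add, map_one, map_mul, jE_C, jE_X, Algebra.smul_def,
      map_mul]
  let w : G → Q := fun σ => jC (χ σ) * jW y
  let w' : G → Q := fun σ => jC ((χ σ)⁻¹ : ℂˣ) * jW y'
  let r : RatFunc ℂ := 1 + algebraMap ℂ _ c * RatFunc.X
  have hwn : w ^ n = algebraMap (RatFunc ℂ) (G → Q) r := by
    funext σ
    change (jC (χ σ) * jW y) ^ n = jE r
    rw [mul_pow, ← map_pow, hχn, map_one, one_mul, hYn]
  let e : G ≃ Fin n := Fintype.equivFin G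
  let M : Matrix G G Q := Matrix.of fun σ j => w σ ^ (e j : ℕ)
  let M' : Matrix G G Q := Matrix.of fun j σ => jC (n : ℂ)⁻¹ * w' σ ^ (e j : ℕ)
  have hMM : M' * M = 1 := by
    ext j k
    rw [Matrix.mul_apply, Matrix.one_apply]
    have h1 : ∀ σ, M' j σ * M σ k = jC ((n : ℂ)⁻¹ * ((((χ σ)⁻¹ : ℂˣ) : ℂ) ^ (e j : ℕ) *
        (χ σ : ℂ) ^ (e k : ℕ))) * (jW y' ^ (e j : ℕ) * jW y ^ (e k : ℕ)) := by
      intro σ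
      simp only [M, M', Matrix.of_apply, w, w', map_mul, map_pow]
      ring
    rw [Finset.sum_congr rfl fun σ _ => h1 σ, ← Finset.sum_mul, ← map_sum, ← Finset.mul_sum, horth]
    by_cases hjk : j = k
    · subst hjk
      rw [if_pos rfl, if_pos rfl, inv_mul_cancel₀ (Nat.cast_ne_zero.2 hn0), map_one, one_mul,
        ← mul_pow, mul_comm (jW y'), hYY, one_pow]
    · rw [if_neg (fun h => hjk (e.injective h)), if_neg hjk, mul_zero, map_zero, zero_mul]
  have hMv : ∀ (v : G → RatFunc ℂ), M *ᵥ (fun j => algebraMap (RatFunc ℂ) Q (v j)) =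
      ∑ i : Fin n, v (e.symm i) • w ^ (i : ℕ) := by
    intro v
    funext σ
    rw [Finset.sum_apply, ← e.sum_comp]
    change ∑ j, w σ ^ (e j : ℕ) * jE (v j) = _
    refine Finset.sum_congr rfl fun j _ => ?_
    rw [Pi.smul_apply, Algebra.smul_def, algebraMap_E, Pi.pow_apply, e.symm_apply_apply, mul_comm]
  have hF : ∀ f, f ∈ Algebra.adjoin (RatFunc ℂ) {w} ↔
      ∃ v : G → RatFunc ℂ, f = M *ᵥ (fun j => algebraMap (RatFunc ℂ) Q (v j)) := by
    intro f
    constructor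
    · intro hf
      rw [Algebra.adjoin_singleton_eq_range_aeval] at hf
      obtain ⟨p, rfl⟩ := hf
      let q : Polynomial (RatFunc ℂ) := Polynomial.X ^ n - Polynomial.C r
      have hq : q.Monic := Polynomial.monic_X_pow_sub_C r hn0
      have hqw : Polynomial.aeval w q = 0 := by
        simp only [q, map_sub, map_pow, Polynomial.aeval_X, Polynomial.aeval_C, hwn, sub_self]
      have hdeg : (p %ₘ q).natDegree < n := by
        have := Polynomial.natDegree_modByMonic_lt p hq (by
          intro h
          have := congrArg Polynomial.natDegree h
          rw [Polynomial.natDegree_X_pow_sub_C, Polynomial.natDegree_one] at this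
          exact hn0 this)
        rwa [Polynomial.natDegree_X_pow_sub_C] at this
      refine ⟨fun j => (p %ₘ q).coeff (e j), ?_⟩
      rw [hMv]
      change Polynomial.aeval w p = _
      rw [← Polynomial.aeval_modByMonic_eq_self_of_root hqw, Polynomial.aeval_eq_sum_range' hdeg,
        Finset.sum_range]
      simp
    · rintro ⟨v, rfl⟩
      rw [hMv]
      exact sum_mem fun i _ => Subalgebra.smul_mem _
        (pow_mem (Algebra.subset_adjoin (Set.mem_singleton w)) _) _
  refine ⟨Algebra.adjoin (RatFunc ℂ) {w}, M, M', mul_eq_one_comm.1 hMM, ?_, ?_, hF, ?_, ?_⟩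
  · intro i j
    exact pow_mem (mul_mem (hjC _) (jW_mem hy)) _
  · intro i j
    exact mul_mem (hjC _) (pow_mem (mul_mem (hjC _) (jW_mem hy')) _)
  · intro f hf g
    obtain ⟨τ, hτ⟩ := shift_exists g
    have hwm : w ∈ Algebra.adjoin (RatFunc ℂ) {w} := Algebra.subset_adjoin (Set.mem_singleton w)
    have hτw : τ w = algebraMap ℂ (RatFunc ℂ) (χ g) • w := by
      funext h
      have hw1 : w (g * h) = jC (χ (g * h)) * jW y := rfl
      have hw2 : w h = jC (χ h) * jW y := rfl
      rw [hτ, hw1, Pi.smul_apply, Algebra.smul_def, algebraMap_E, ← hjCE, hw2, map_mul,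
        Units.val_mul, map_mul, mul_assoc]
    have h1 : Algebra.adjoin (RatFunc ℂ) {w} ≤ (Algebra.adjoin (RatFunc ℂ) {w}).comap τ := by
      refine Algebra.adjoin_le ?_
      rw [Set.singleton_subset_iff, SetLike.mem_coe, Subalgebra.mem_comap, hτw]
      exact Subalgebra.smul_mem _ hwm _
    have h2 := h1 hf
    rw [Subalgebra.mem_comap] at h2
    have h3 : τ f = fun h => f (g * h) := funext fun h => hτ f h
    rw [h3] at h2
    exact h2
  · intro f hf hff
    obtain ⟨v, hv⟩ := (hF f).1 hf
    have h01 : ∀ σ, ∃ κ : ℂ, f σ = jC κ := by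
      intro σ
      have h1 : f σ * f σ = f σ := congrFun hff σ
      rcases IsIdempotentElem.iff_eq_zero_or_one.1 h1 with h | h
      · exact ⟨0, by rw [h, map_zero]⟩
      · exact ⟨1, by rw [h, map_one]⟩
    choose κ hκ using h01
    have hvj : ∀ j, jE (v j) = (M' *ᵥ f) j := by
      intro j
      rw [hv, Matrix.mulVec_mulVec, hMM, Matrix.one_mulVec]; rfl
    have hvK : ∀ j, ∃ K : ℂ, jE (v j) = jC K * jW y' ^ (e j : ℕ) := by
      intro j
      refine ⟨∑ σ, (n : ℂ)⁻¹ * (((χ σ)⁻¹ : ℂˣ) : ℂ) ^ (e j : ℕ) * κ σ, ?_⟩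
      rw [hvj, map_sum, Finset.sum_mul]
      change ∑ σ, M' j σ * f σ = _
      refine Finset.sum_congr rfl fun σ _ => ?_
      rw [hκ]
      simp only [M', Matrix.of_apply, w', map_mul, map_pow]
      ring
    have hv0 : ∀ j, (e j : ℕ) ≠ 0 → v j = 0 := by
      intro j hj
      by_contra hvj0
      obtain ⟨K, hK⟩ := hvK j
      refine not_power (n := n) (κ := K ^ n) (Nat.pos_of_ne_zero hj) (e j).2 hc hvj0 ?_
      apply jE.injective
      rw [map_mul, map_pow, map_pow, hK, ← hYn, ← hjCE, map_pow, mul_pow, ← pow_mul, ← pow_mul,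
        mul_comm n, mul_assoc, ← mul_pow, mul_comm (jW y'), hYY, one_pow, mul_one]
    have hfc : ∀ σ, f σ = jE (v (e.symm 0)) := by
      intro σ
      rw [hv, hMv, Finset.sum_apply, Finset.sum_eq_single (0 : Fin n)]
      · rw [Pi.smul_apply, Algebra.smul_def, algebraMap_E, Pi.pow_apply, Fin.val_zero, pow_zero,
          mul_one]
      · intro i _ hi
        rw [hv0, zero_smul, Pi.zero_apply]
        rw [e.apply_symm_apply]
        exact fun h => hi (Fin.ext (by rw [h, Fin.val_zero]))
      · intro h; exact absurd (Finset.mem_univ _) h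
    have h1 : f 1 * f 1 = f 1 := congrFun hff 1
    rcases IsIdempotentElem.iff_eq_zero_or_one.1 h1 with h | h
    · left; funext σ; rw [hfc σ, ← hfc 1, h]; rfl
    · right; funext σ; rw [hfc σ, ← hfc 1, h]; rfl

end Cyclic
end Patch

namespace Patch

theorem good_every (G : Type) [Group G] [Fintype G] [DecidableEq G] :
    Good (RatFunc ℂ) (Rs posM) G := by
  refine good_all ?_ ?_ G
  · intro G _ _ _ _
    exact good_cyclic G
  · intro G _ _ _ H₁ H₂ _ _ _ _ hH h1 h2
    exact good_phi (glue (Rs_le _) (Rs_le _) le_PP le_PP PP_inter cartan H₁ H₂ hH h1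
      (good_flip h2))

end Patch

/-- Every finite group occurs as the Galois group of a finite Galois extension of
`ℂ(t)`, the field of rational functions in one indeterminate over `ℂ`. -/
theorem finite_group_occurs_as_galoisGroup_over_complex_ratFunc
    (G : Type) [Group G] [Finite G] :
    ∃ (N : Type) (_ : Field N) (_ : Algebra (RatFunc ℂ) N),
      FiniteDimensional (RatFunc ℂ) N ∧ IsGalois (RatFunc ℂ) N ∧
        Nonempty ((N ≃ₐ[RatFunc ℂ] N) ≃* G) := by
  classical
  have := Fintype.ofFinite G
  exact (Patch.good_every G).galois
end

section
/- Every finite group occurs as a Galois group over ℝ(t); that is, for every finite group G there exists a finite Galois extension N of the field ℝ(t) of rational functions in one indeterminate over ℝ with Gal(N/ℝ(t)) isomorphic to G. -/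
section RigHelpers
open Polynomial

theorem galois_of_ring (G : Type) [Group G] [Finite G] (F : Type) [CommRing F] [IsDomain F]
    [MulSemiringAction G F] (φ : ℝ[X] →+* F) (hφ : Function.Injective φ)
    (hcomm : ∀ (g : G) p, g • φ p = φ p)
    (hfaith : ∀ g : G, (∀ x : F, g • x = x) → g = 1)
    (hinv : ∀ x : F, (∀ g : G, g • x = x) → ∃ p q : ℝ[X], q ≠ 0 ∧ φ q * x = φ p) :
    ∃ (N : Type) (_ : Field N) (_ : Algebra (RatFunc ℝ) N),
      FiniteDimensional (RatFunc ℝ) N ∧ IsGalois (RatFunc ℝ) N ∧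
        Nonempty ((N ≃ₐ[RatFunc ℝ] N) ≃* G) := by
  classical
  have := Fintype.ofFinite G
  let L := FractionRing F
  let ι : ℝ[X] →+* L := (algebraMap F L).comp φ
  have hι : Function.Injective ι := (IsFractionRing.injective F L).comp hφ
  let ψ : RatFunc ℝ →+* L := IsFractionRing.lift (A := ℝ[X]) (K := RatFunc ℝ) (g := ι) hι
  have hψ : ∀ p, ψ (algebraMap ℝ[X] (RatFunc ℝ) p) = algebraMap F L (φ p) := fun p =>
    IsFractionRing.lift_algebraMap hι p
  let : Algebra (RatFunc ℝ) L := ψ.toAlgebra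
  let : MulSemiringAction G L := IsFractionRing.mulSemiringAction G F L
  have : SMulDistribClass G F L := IsFractionRing.smulDistribClass G F L
  have hsm : ∀ (g : G) (x : F), g • algebraMap F L x = algebraMap F L (g • x) := fun g x =>
    (algebraMap.coe_smul' g x L).symm
  have hfix : ∀ (g : G) (k : RatFunc ℝ), g • algebraMap (RatFunc ℝ) L k = algebraMap _ L k := by
    intro g k
    obtain ⟨a, b, hb, rfl⟩ := IsFractionRing.div_surjective ℝ[X] k
    change g • ψ _ = ψ _
    rw [map_div₀, hψ, hψ, smul_div₀', hsm, hsm, hcomm, hcomm]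
  have hG : IsGaloisGroup G (RatFunc ℝ) L := by
    refine ⟨⟨?_⟩, ⟨?_⟩, ⟨?_⟩⟩
    · intro g h hgh
      have : h⁻¹ * g = 1 := hfaith _ fun x => by
        apply IsFractionRing.injective F L
        rw [← hsm, mul_smul, hgh, ← mul_smul, inv_mul_cancel, one_smul]
      exact (inv_mul_eq_one.mp this).symm
    · intro g k x
      rw [Algebra.smul_def, Algebra.smul_def, smul_mul', hfix]
    · intro m hm
      obtain ⟨a, b, hb, rfl⟩ := IsFractionRing.div_surjective F m
      have hb0 : b ≠ 0 := nonZeroDivisors.ne_zero hb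
      let n : F := ∏ g : G, g • b
      let c : F := ∏ g ∈ Finset.univ.erase (1 : G), g • b
      have hn : n = b * c := by
        simp only [n, c]
        rw [← Finset.mul_prod_erase Finset.univ _ (Finset.mem_univ (1:G)), one_smul]
      have hninv : ∀ g : G, g • n = n := by
        intro g
        simp only [n, Finset.smul_prod']
        simp only [← mul_smul]
        exact Fintype.prod_equiv (Equiv.mulLeft g) _ _ (fun x => rfl)
      have hn0 : n ≠ 0 := by
        simp only [n]
        refine Finset.prod_ne_zero_iff.mpr fun g _ => ?_
        simpa [smul_eq_zero_iff_eq] using hb0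
      have hc0 : c ≠ 0 := fun h => hn0 (by rw [hn, h, mul_zero])
      have inj := IsFractionRing.injective F L
      have hne : ∀ {x : F}, x ≠ 0 → algebraMap F L x ≠ 0 := fun h h' => h (inj (by simpa using h'))
      have hm' : algebraMap F L a / algebraMap F L b = algebraMap F L (a * c) / algebraMap F L n := by
        rw [hn, map_mul, map_mul, mul_div_mul_right _ _ (hne hc0)]
      have hacinv : ∀ g : G, g • (a * c) = a * c := by
        intro g
        apply inj
        have h1 := hm g
        rw [hm', smul_div₀', hsm, hsm, hninv, div_left_inj' (hne hn0)] at h1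
        exact h1
      obtain ⟨p, q, hq, hpq⟩ := hinv _ hacinv
      obtain ⟨p', q', hq', hpq'⟩ := hinv _ hninv
      have hφ0 : ∀ {q : ℝ[X]}, q ≠ 0 → algebraMap F L (φ q) ≠ 0 := fun h =>
        hne (fun h' => h (hφ (by simpa using h')))
      refine ⟨(algebraMap ℝ[X] (RatFunc ℝ) p / algebraMap _ _ q) /
        (algebraMap ℝ[X] (RatFunc ℝ) p' / algebraMap _ _ q'), ?_⟩
      change ψ _ = _
      rw [hm', map_div₀, map_div₀, map_div₀, hψ, hψ, hψ, hψ, ← hpq, ← hpq',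
        map_mul _ (φ q) (a * c), map_mul _ (φ q') n,
        mul_div_cancel_left₀ _ (hφ0 hq), mul_div_cancel_left₀ _ (hφ0 hq')]
  exact ⟨L, inferInstance, inferInstance, IsGaloisGroup.finiteDimensional G _ _,
    IsGaloisGroup.isGalois G _ _, ⟨(IsGaloisGroup.mulEquivAlgEquiv G _ _).symm⟩⟩

/-- An entire function of polynomial growth is a polynomial. -/
theorem entire_poly (H : ℂ → ℂ) (hH : Differentiable ℂ H) (C : ℝ) (N : ℕ)
    (hb : ∀ z, ‖H z‖ ≤ C * (1 + ‖z‖) ^ N) : ∃ p : ℂ[X], ∀ z, H z = p.eval z := by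
  have hz : ∀ n, N < n → iteratedDeriv n H 0 = 0 := by
    intro n hn
    rw [← norm_le_zero_iff]
    have hC : 0 ≤ C := by
      have := hb 0
      simp at this
      exact (norm_nonneg _).trans this
    have key : ∀ R : ℝ, 1 ≤ R → ‖iteratedDeriv n H 0‖ ≤ (n.factorial * C * 2 ^ N) * R⁻¹ := by
      intro R hR
      have hR0 : 0 < R := by linarith
      have := Complex.norm_iteratedDeriv_le_of_forall_mem_sphere_norm_le (c := 0) (f := H)
        (C := C * (2 * R) ^ N) n hR0 hH.diffContOnCl (by
          intro z hz
          have : ‖z‖ = R := by simpa using hz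
          refine (hb z).trans ?_
          rw [this]
          gcongr
          linarith)
      refine this.trans ?_
      obtain ⟨k, rfl⟩ := Nat.exists_eq_add_of_lt hn
      rw [div_le_iff₀ (by positivity)]
      have h1 : R ^ (N + k + 1) = R ^ N * R ^ k * R := by ring
      rw [h1]
      have h2 : (1 : ℝ) ≤ R ^ k := one_le_pow₀ hR
      calc ((N + k + 1).factorial : ℝ) * (C * (2 * R) ^ N)
          = ((N + k + 1).factorial * C * 2 ^ N) * R ^ N * 1 := by ring
        _ ≤ ((N + k + 1).factorial * C * 2 ^ N) * R ^ N * R ^ k := by gcongr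
        _ = _ := by field_simp
    have ht : Filter.Tendsto (fun R : ℝ => ((n.factorial : ℝ) * C * 2 ^ N) * R⁻¹) Filter.atTop
        (nhds 0) := by
      simpa using tendsto_inv_atTop_zero.const_mul ((n.factorial : ℝ) * C * 2 ^ N)
    exact ge_of_tendsto ht (Filter.eventually_atTop.mpr ⟨1, key⟩)
  refine ⟨∑ n ∈ Finset.range (N + 1), Polynomial.C ((n.factorial : ℂ)⁻¹ * iteratedDeriv n H 0) *
    X ^ n, fun z => ?_⟩
  rw [← Complex.taylorSeries_eq_of_entire' (c := 0) (z := z) hH, tsum_eq_sum (s := Finset.range (N + 1))]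
  · simp [Polynomial.eval_finsetSum]
  · intro n hn
    rw [hz n (by simpa using hn)]
    simp

theorem poly_bound (P : ℝ[X]) : ∃ C : ℝ, 0 ≤ C ∧ ∃ N : ℕ, ∀ z : ℂ,
    ‖aeval z P‖ ≤ C * (1 + ‖z‖) ^ N := by
  induction P using Polynomial.induction_on' with
  | add p q hp hq =>
    obtain ⟨C, hC, N, h⟩ := hp
    obtain ⟨C', hC', N', h'⟩ := hq
    refine ⟨C + C', by positivity, N + N', fun z => ?_⟩
    have h1 : (1 : ℝ) ≤ 1 + ‖z‖ := by linarith [norm_nonneg z]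
    rw [map_add, add_mul]
    refine (norm_add_le _ _).trans (add_le_add ((h z).trans ?_) ((h' z).trans ?_))
    · gcongr <;> omega
    · gcongr <;> omega
  | monomial n a =>
    refine ⟨|a|, abs_nonneg _, n, fun z => ?_⟩
    rw [aeval_monomial, norm_mul, norm_pow]
    simp only [Complex.coe_algebraMap, Complex.norm_real, Real.norm_eq_abs]
    gcongr
    linarith

theorem real_poly (p : ℂ[X]) (S : Set ℝ) (hS : S.Infinite)
    (h : ∀ x ∈ S, (starRingEnd ℂ) (p.eval (x : ℂ)) = p.eval (x : ℂ)) :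
    ∃ q : ℝ[X], ∀ z : ℂ, aeval z q = p.eval z := by
  have h1 : p.map (starRingEnd ℂ) = p := by
    apply Polynomial.eq_of_infinite_eval_eq
    refine (hS.image (f := fun x : ℝ => (x : ℂ)) Complex.ofReal_injective.injOn).mono ?_
    rintro _ ⟨x, hx, rfl⟩
    have := h x hx
    simp only [Set.mem_ofPred_eq]
    rw [← this]
    conv_lhs => rw [← Complex.conj_ofReal x]
    rw [Polynomial.eval_map, Polynomial.eval₂_hom]
  have h2 : p ∈ Polynomial.lifts (algebraMap ℝ ℂ) := by
    rw [Polynomial.lifts_iff_coeff_lifts]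
    intro n
    refine ⟨(p.coeff n).re, ?_⟩
    have := congrArg (fun q => q.coeff n) h1
    simp only [Polynomial.coeff_map] at this
    exact Complex.conj_eq_iff_re.mp this
  obtain ⟨q, rfl⟩ := (Polynomial.mem_lifts _).mp h2
  exact ⟨q, fun z => by rw [Polynomial.aeval_def, Polynomial.eval_map]⟩

namespace RIG

open Metric Filter Topology

variable {G : Type} [Group G]

/-- The plane minus the vertical slits of half-length `ε` centred at the points `c i`. -/
def U (c : G → ℝ) (ε : ℝ) : Set ℂ := {z | ∀ i, z.re = c i → ε < |z.im|}

/-- Families of functions, indexed by `G`, that glue to a function on the cover. -/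
structure Good (c : G → ℝ) (ε : ℝ) (f : G → ℂ → ℂ) : Prop where
  diff : ∀ σ, DifferentiableOn ℂ (f σ) (U c ε)
  cross : ∀ i σ, ∃ k : ℂ → ℂ, DifferentiableOn ℂ k (ball (c i : ℂ) ε) ∧
    ∀ z ∈ ball (c i : ℂ) ε, (c i < z.re → k z = f σ z) ∧ (z.re < c i → k z = f (σ * i) z)
  tame : ∀ σ, ∃ P : ℝ[X], P ≠ 0 ∧ ∃ C : ℝ, 0 ≤ C ∧ ∃ N : ℕ, ∀ z ∈ U c ε,
    ‖aeval z P‖ * ‖f σ z‖ ≤ C * (1 + ‖z‖) ^ N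

/-- Compatibility with complex conjugation. -/
def Rl (c : G → ℝ) (ε : ℝ) (f : G → ℂ → ℂ) : Prop :=
  ∀ σ, ∀ z ∈ U c ε, f σ ((starRingEnd ℂ) z) = (starRingEnd ℂ) (f σ z)

variable {c : G → ℝ} {ε : ℝ}

theorem isOpen_U [Finite G] (c : G → ℝ) (ε : ℝ) : IsOpen (U c ε) := by
  have : U c ε = ⋂ i, ({z : ℂ | z.re ≠ c i} ∪ {z : ℂ | ε < |z.im|}) := by
    ext z
    simp only [U, Set.mem_ofPred_eq, Set.mem_iInter, Set.mem_union]
    exact forall_congr' fun i => by tauto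
  rw [this]
  refine isOpen_iInter_of_finite fun i => IsOpen.union ?_ ?_
  · exact isOpen_ne_fun Complex.continuous_re continuous_const
  · exact isOpen_lt continuous_const (continuous_abs.comp Complex.continuous_im)

theorem dense_U [Finite G] (c : G → ℝ) (ε : ℝ) : Dense (U c ε) := by
  have h : Dense ((Set.range c)ᶜ) := (Set.finite_range c).countable.dense_compl ℝ
  refine (h.preimage Complex.isOpenMap_re).mono ?_
  intro z hz i hi
  exact absurd ⟨i, hi.symm⟩ hz

theorem vline_pre (x : ℝ) (s : Set ℝ) (hs : s.OrdConnected) :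
    IsPreconnected ((fun y : ℝ => (⟨x, y⟩ : ℂ)) '' s) := by
  apply (Set.ordConnected_iff_uIcc_subset.mp hs |> fun _ => hs.isPreconnected).image
  apply Continuous.continuousOn
  have : (fun y : ℝ => (⟨x, y⟩ : ℂ)) = fun y : ℝ => (x : ℂ) + y * Complex.I := by
    ext y <;> simp [Complex.ext_iff]
  rw [this]
  fun_prop

theorem preconn_U [Finite G] (c : G → ℝ) (ε : ℝ) (hε : 0 < ε) : IsPreconnected (U c ε) := by
  obtain ⟨x0, hx0⟩ : ∃ x : ℝ, x ∉ Set.range c :=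
    ((Set.finite_range c).infinite_compl).nonempty
  let Hp : Set ℂ := {z | ε < z.im}
  let Hm : Set ℂ := {z | z.im < -ε}
  let V : Set ℂ := (fun y : ℝ => (⟨x0, y⟩ : ℂ)) '' Set.univ
  have hHp : IsPreconnected Hp := (convex_halfSpace_im_gt ε).isPreconnected
  have hHm : IsPreconnected Hm := (convex_halfSpace_im_lt (-ε)).isPreconnected
  have hV : IsPreconnected V := vline_pre x0 _ Set.ordConnected_univ
  have h1 : IsPreconnected (Hp ∪ V) := by
    refine hHp.union (⟨x0, ε + 1⟩ : ℂ) ?_ ⟨ε + 1, trivial, rfl⟩ hV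
    simp [Hp]
  have h2 : IsPreconnected (Hp ∪ V ∪ Hm) := by
    refine h1.union (⟨x0, -ε - 1⟩ : ℂ) (Or.inr ⟨-ε - 1, trivial, rfl⟩) ?_ hHm
    simp [Hm]
  have hsub : Hp ∪ V ∪ Hm ⊆ U c ε := by
    rintro z ((hz | ⟨y, -, rfl⟩) | hz) i hi
    · exact lt_of_lt_of_le hz (le_abs_self _)
    · exact absurd ⟨i, hi.symm⟩ hx0
    · have : z.im < -ε := hz
      exact lt_of_lt_of_le (by linarith) (neg_le_abs _)
  refine isPreconnected_of_forall (⟨x0, 0⟩ : ℂ) fun z hz => ?_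
  by_cases h : 0 ≤ z.im
  · refine ⟨(Hp ∪ V ∪ Hm) ∪ (fun y : ℝ => (⟨z.re, y⟩ : ℂ)) '' Set.Ici z.im, ?_, ?_, ?_, ?_⟩
    · refine Set.union_subset hsub ?_
      rintro _ ⟨y, hy, rfl⟩ i hi
      have := hz i hi
      rw [abs_of_nonneg h] at this
      exact lt_of_lt_of_le (lt_of_lt_of_le this hy) (le_abs_self _)
    · exact Or.inl (Or.inl (Or.inr ⟨0, trivial, rfl⟩))
    · exact Or.inr ⟨z.im, Set.self_mem_Ici, rfl⟩
    · refine h2.union (⟨z.re, z.im + ε + 1⟩ : ℂ) ?_ ⟨z.im + ε + 1, ?_, rfl⟩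
        (vline_pre _ _ Set.ordConnected_Ici)
      · refine Or.inl (Or.inl ?_)
        simp only [Hp, Set.mem_ofPred_eq]
        linarith
      · simp only [Set.mem_Ici]
        linarith
  · refine ⟨(Hp ∪ V ∪ Hm) ∪ (fun y : ℝ => (⟨z.re, y⟩ : ℂ)) '' Set.Iic z.im, ?_, ?_, ?_, ?_⟩
    · refine Set.union_subset hsub ?_
      rintro _ ⟨y, hy, rfl⟩ i hi
      have := hz i hi
      rw [abs_of_neg (not_le.mp h)] at this
      have hy' : y ≤ z.im := hy
      exact lt_of_lt_of_le (by linarith) (neg_le_abs _)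
    · exact Or.inl (Or.inl (Or.inr ⟨0, trivial, rfl⟩))
    · exact Or.inr ⟨z.im, Set.self_mem_Iic, rfl⟩
    · refine h2.union (⟨z.re, z.im - ε - 1⟩ : ℂ) ?_ ⟨z.im - ε - 1, ?_, rfl⟩
        (vline_pre _ _ Set.ordConnected_Iic)
      · refine Or.inr ?_
        simp only [Hm, Set.mem_ofPred_eq]
        linarith
      · simp only [Set.mem_Iic]
        linarith

theorem conj_mem_U {z : ℂ} (hz : z ∈ U c ε) : (starRingEnd ℂ) z ∈ U c ε := by
  intro i hi
  simpa using hz i (by simpa using hi)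

/-- The polynomial vanishing at all the branch points. -/
noncomputable def Q [Fintype G] (c : G → ℝ) (ε : ℝ) : ℝ[X] :=
  ∏ i : G, ((X - C (c i)) ^ 2 + C (ε ^ 2))

theorem Q_ne_zero [Fintype G] (c : G → ℝ) (ε : ℝ) : Q c ε ≠ 0 := by
  refine Finset.prod_ne_zero_iff.mpr fun i _ h => ?_
  have := congrArg (fun p => p.eval (c i + 1)) h
  simp at this
  nlinarith [sq_nonneg ε]

theorem aeval_Q [Fintype G] (c : G → ℝ) (ε : ℝ) (z : ℂ) :
    aeval z (Q c ε) = ∏ i : G, ((z - c i) ^ 2 + (ε : ℂ) ^ 2) := by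
  simp [Q]

theorem invariant_rational [Finite G] (hε : 0 < ε) (hsep : ∀ i j, i ≠ j → 2 * ε ≤ |c i - c j|)
    (f : G → ℂ → ℂ) (hf : Good c ε f) (hr : Rl c ε f)
    (hinv : ∀ σ, ∀ z ∈ U c ε, f σ z = f 1 z) :
    ∃ p q : ℝ[X], q ≠ 0 ∧ ∀ z ∈ U c ε, aeval z q * f 1 z = aeval z p := by
  classical
  have := Fintype.ofFinite G
  obtain ⟨P, hP, A, hA, N, hPb⟩ := hf.tame 1
  choose k hk hkz using fun i => hf.cross i 1
  set R : ℝ[X] := P * Q c ε with hR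
  let H : ℂ → ℂ := fun z => if z ∈ U c ε then aeval z R * f 1 z else
    if h : ∃ i, z ∈ ball (c i : ℂ) ε then aeval z R * k h.choose z else 0
  have hdisj : ∀ i j (z : ℂ), z ∈ ball (c i : ℂ) ε → z ∈ ball (c j : ℂ) ε → i = j := by
    intro i j z hi hj
    by_contra hne
    have h1 := hsep i j hne
    have h2 : dist (c i : ℂ) (c j : ℂ) < 2 * ε := by
      have := dist_triangle_left (c i : ℂ) (c j : ℂ) z
      rw [mem_ball] at hi hj
      linarith
    rw [Complex.dist_eq, ← Complex.ofReal_sub, Complex.norm_real, Real.norm_eq_abs] at h2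
    linarith
  have hpd : ∀ z, DifferentiableAt ℂ (fun z : ℂ => aeval z R) z := fun z =>
    (Polynomial.differentiable_aeval R).differentiableAt
  have hU : ∀ z ∈ U c ε, DifferentiableAt ℂ H z := by
    intro z hz
    have : H =ᶠ[𝓝 z] fun z => aeval z R * f 1 z := by
      filter_upwards [(isOpen_U c ε).mem_nhds hz] with w hw
      simp [H, hw]
    refine this.differentiableAt_iff.mpr ((hpd z).mul ?_)
    exact (hf.diff 1).differentiableAt ((isOpen_U c ε).mem_nhds hz)
  have hB : ∀ i, ∀ z ∈ ball (c i : ℂ) ε, DifferentiableAt ℂ H z := by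
    intro i z hz
    have : H =ᶠ[𝓝 z] fun z => aeval z R * k i z := by
      filter_upwards [isOpen_ball.mem_nhds hz] with w hw
      by_cases hwU : w ∈ U c ε
      · simp only [H, hwU, if_true]
        congr 1
        rcases lt_trichotomy (c i) w.re with h | h | h
        · exact ((hkz i w hw).1 h).symm
        · exfalso
          have h1 := hwU i h.symm
          have h2 : |w.im| ≤ ‖w - c i‖ := by
            have := Complex.abs_im_le_norm (w - c i)
            simpa using this
          rw [mem_ball, Complex.dist_eq] at hw
          linarith
        · rw [(hkz i w hw).2 h]
          exact (hinv _ w hwU).symm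
      · have hex : ∃ i, w ∈ ball (c i : ℂ) ε := ⟨i, hw⟩
        simp only [H, hwU, if_false, hex, dif_pos]
        rw [hdisj _ i w hex.choose_spec hw]
    refine this.differentiableAt_iff.mpr ((hpd z).mul ?_)
    exact (hk i).differentiableAt (isOpen_ball.mem_nhds hz)
  have hbr : ∀ z, z ∉ U c ε → (¬ ∃ i, z ∈ ball (c i : ℂ) ε) → aeval z (Q c ε) = 0 := by
    intro z hz hnb
    simp only [U, Set.mem_ofPred_eq, not_forall, not_lt] at hz
    obtain ⟨i, hi, him⟩ := hz
    have h1 : ε ≤ ‖z - c i‖ := by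
      by_contra h
      exact hnb ⟨i, by rw [mem_ball, Complex.dist_eq]; linarith⟩
    have h2 : z - c i = z.im * Complex.I := by
      apply Complex.ext <;> simp [hi]
    rw [h2] at h1
    simp only [norm_mul, Complex.norm_real, Real.norm_eq_abs, Complex.norm_I, mul_one] at h1
    have h3 : |z.im| = ε := le_antisymm him h1
    have h4 : z.im ^ 2 = ε ^ 2 := by rw [← h3, sq_abs]
    rw [aeval_Q]
    apply Finset.prod_eq_zero (Finset.mem_univ i)
    rw [h2, mul_pow, Complex.I_sq, ← Complex.ofReal_pow, ← Complex.ofReal_pow, h4]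
    ring
  have hgood : ∀ z, aeval z (Q c ε) ≠ 0 → DifferentiableAt ℂ H z := by
    intro z hz
    by_cases h1 : z ∈ U c ε
    · exact hU z h1
    by_cases h2 : ∃ i, z ∈ ball (c i : ℂ) ε
    · exact hB _ z h2.choose_spec
    · exact absurd (hbr z h1 h2) hz
  have hcont : Continuous fun w : ℂ => ‖aeval w (Q c ε)‖ * (A * (1 + ‖w‖) ^ N) := by
    have : Continuous fun w : ℂ => aeval w (Q c ε) := (Polynomial.differentiable_aeval _).continuous
    fun_prop
  have hbU : ∀ w ∈ U c ε, ‖H w‖ ≤ ‖aeval w (Q c ε)‖ * (A * (1 + ‖w‖) ^ N) := by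
    intro w hw
    simp only [H, hw, if_true, hR, map_mul, norm_mul]
    have := mul_le_mul_of_nonneg_left (hPb w hw) (norm_nonneg (aeval w (Q c ε)))
    linarith
  have hb : ∀ w, ‖H w‖ ≤ ‖aeval w (Q c ε)‖ * (A * (1 + ‖w‖) ^ N) := by
    intro w
    by_cases h1 : w ∈ U c ε
    · exact hbU w h1
    by_cases h2 : ∃ i, w ∈ ball (c i : ℂ) ε
    · have h3 := (hB _ w h2.choose_spec).continuousAt.norm
      exact ContinuousWithinAt.closure_le (dense_U c ε w) h3.continuousWithinAt
        hcont.continuousWithinAt hbU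
    · simp only [H, h1, if_false, h2, dif_neg, not_false_eq_true, norm_zero]
      positivity
  have hent : Differentiable ℂ H := by
    intro z
    by_cases hz : aeval z (Q c ε) = 0
    · refine (Complex.analyticAt_of_differentiable_on_punctured_nhds_of_continuousAt ?_
        ?_).differentiableAt
      · have hfin : {w : ℂ | aeval w (Q c ε) = 0}.Finite := by
          have := ((Q c ε).map (algebraMap ℝ ℂ)).roots.toFinset.finite_toSet
          refine this.subset fun w hw => ?_
          simp only [Finset.mem_coe, Multiset.mem_toFinset]
          rw [Polynomial.mem_roots ((Polynomial.map_ne_zero_iff (algebraMap ℝ ℂ).injective).mpr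
            (Q_ne_zero c ε)), IsRoot.def, Polynomial.eval_map]
          exact hw
        have h4 : ({w : ℂ | aeval w (Q c ε) = 0} \ {z})ᶜ ∈ 𝓝 z :=
          (hfin.subset Set.sdiff_subset).isClosed.isOpen_compl.mem_nhds (by simp)
        filter_upwards [nhdsWithin_le_nhds h4, self_mem_nhdsWithin] with w hw hw'
        exact hgood w fun h => hw ⟨h, hw'⟩
      · have h0 : H z = 0 := by
          have := hb z
          rw [hz] at this
          simpa using this
        rw [ContinuousAt, h0]
        refine squeeze_zero_norm hb ?_
        have := hcont.tendsto z
        simpa [hz] using this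
    · exact hgood z hz
  obtain ⟨D, hD, M, hQb⟩ := poly_bound (Q c ε)
  obtain ⟨p, hp⟩ := entire_poly H hent (D * A) (M + N) (by
    intro z
    refine (hb z).trans ?_
    calc ‖aeval z (Q c ε)‖ * (A * (1 + ‖z‖) ^ N) ≤ (D * (1 + ‖z‖) ^ M) * (A * (1 + ‖z‖) ^ N) := by
          gcongr
          exact hQb z
      _ = _ := by ring)
  obtain ⟨q, hq⟩ := real_poly p (Set.range c)ᶜ (Set.finite_range c).infinite_compl (by
    intro x hx
    have hxU : (x : ℂ) ∈ U c ε := fun i hi => absurd ⟨i, by simpa using hi.symm⟩ hx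
    rw [← hp]
    simp only [H, hxU, if_true, map_mul]
    congr 1
    · rw [Polynomial.aeval_def, Polynomial.hom_eval₂, Complex.conj_ofReal]
      congr 1
      ext r
      simp
    · have := hr 1 x hxU
      rw [Complex.conj_ofReal] at this
      exact this.symm)
  refine ⟨q, R, mul_ne_zero hP (Q_ne_zero c ε), fun z hz => ?_⟩
  rw [hq, ← hp]
  simp [H, hz]

end RIG
namespace RIG

open Metric Filter Topology

variable {G : Type} [Group G] {c : G → ℝ} {ε : ℝ}

theorem ident {f : ℂ → ℂ} {V : Set ℂ} (hV : IsOpen V) (hp : IsPreconnected V)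
    (hf : DifferentiableOn ℂ f V) {z : ℂ} (hz : z ∈ V) (h : f =ᶠ[𝓝 z] 0) : ∀ w ∈ V, f w = 0 :=
  fun _ hw => (hf.analyticOnNhd hV).eqOn_zero_of_preconnected_of_eventuallyEq_zero hp hz h hw

theorem half_mem_U (hsep : ∀ i j, i ≠ j → 2 * ε ≤ |c i - c j|) (i : G) (z : ℂ)
    (hz : z ∈ ball (c i : ℂ) ε) (hne : z.re ≠ c i) : z ∈ U c ε := by
  intro j hj
  exfalso
  by_cases hij : i = j
  · subst hij
    exact hne hj
  have h1 := hsep i j hij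
  have h2 : |z.re - c i| ≤ ‖z - c i‖ := by
    have := Complex.abs_re_le_norm (z - c i)
    simpa using this
  rw [mem_ball, Complex.dist_eq] at hz
  rw [hj, abs_sub_comm] at h2
  have := norm_nonneg (z - c i)
  linarith

theorem zero_of_one [Finite G] (hε : 0 < ε) (hsep : ∀ i j, i ≠ j → 2 * ε ≤ |c i - c j|)
    {f : G → ℂ → ℂ} (hf : Good c ε f) (h1 : ∀ z ∈ U c ε, f 1 z = 0) (σ : G) :
    ∀ z ∈ U c ε, f σ z = 0 := by
  obtain ⟨k, hk, hkz⟩ := hf.cross σ 1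
  have hbp : ((c σ + ε / 2 : ℝ) : ℂ) ∈ ball (c σ : ℂ) ε := by
    rw [mem_ball, Complex.dist_eq, ← Complex.ofReal_sub, Complex.norm_real, Real.norm_eq_abs,
      abs_lt]
    constructor <;> linarith
  have hbm : ((c σ - ε / 2 : ℝ) : ℂ) ∈ ball (c σ : ℂ) ε := by
    rw [mem_ball, Complex.dist_eq, ← Complex.ofReal_sub, Complex.norm_real, Real.norm_eq_abs,
      abs_lt]
    constructor <;> linarith
  have hk0 : ∀ w ∈ ball (c σ : ℂ) ε, k w = 0 := by
    refine ident isOpen_ball (convex_ball _ _).isPreconnected hk hbp ?_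
    have h2 : {z : ℂ | c σ < z.re} ∈ 𝓝 ((c σ + ε / 2 : ℝ) : ℂ) :=
      (isOpen_lt continuous_const Complex.continuous_re).mem_nhds (by
        simp only [Set.mem_ofPred_eq, Complex.ofReal_re]; linarith)
    filter_upwards [h2, isOpen_ball.mem_nhds hbp] with z hz hz'
    have hz : c σ < z.re := hz
    rw [(hkz z hz').1 hz]
    exact h1 z (half_mem_U hsep σ z hz' hz.ne')
  refine ident (isOpen_U c ε) (preconn_U c ε hε) (hf.diff σ)
    (half_mem_U hsep σ _ hbm (by simp [hε.ne'])) ?_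
  have h2 : {z : ℂ | z.re < c σ} ∈ 𝓝 ((c σ - ε / 2 : ℝ) : ℂ) :=
    (isOpen_lt Complex.continuous_re continuous_const).mem_nhds (by
      simp only [Set.mem_ofPred_eq, Complex.ofReal_re]; linarith)
  filter_upwards [h2, isOpen_ball.mem_nhds hbm] with z hz hz'
  have := (hkz z hz').2 hz
  rw [one_mul] at this
  rw [← this]
  exact hk0 z hz'

theorem zero_or_zero [Finite G] (hε : 0 < ε) {f g : ℂ → ℂ} (hf : DifferentiableOn ℂ f (U c ε))
    (hg : DifferentiableOn ℂ g (U c ε)) (h : ∀ z ∈ U c ε, f z * g z = 0) :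
    (∀ z ∈ U c ε, f z = 0) ∨ (∀ z ∈ U c ε, g z = 0) := by
  by_contra hcon
  push Not at hcon
  obtain ⟨⟨z, hz, hfz⟩, w, hw, hgw⟩ := hcon
  refine hgw (ident (isOpen_U c ε) (preconn_U c ε hε) hg hz ?_ w hw)
  have hc : ContinuousAt f z := (hf.differentiableAt ((isOpen_U c ε).mem_nhds hz)).continuousAt
  filter_upwards [hc.eventually_ne hfz, (isOpen_U c ε).mem_nhds hz] with y hy hyU
  exact (mul_eq_zero.mp (h y hyU)).resolve_left hy

theorem good_const (p : ℝ[X]) : Good c ε (fun _ z => aeval z p) where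
  diff _ := (Polynomial.differentiable_aeval p).differentiableOn
  cross _ _ := ⟨fun z => aeval z p, (Polynomial.differentiable_aeval p).differentiableOn,
    fun _ _ => ⟨fun _ => rfl, fun _ => rfl⟩⟩
  tame _ := by
    obtain ⟨C, hC, N, h⟩ := poly_bound p
    exact ⟨1, one_ne_zero, C, hC, N, fun z _ => by simpa using h z⟩

theorem rl_const (p : ℝ[X]) : Rl c ε (fun _ z => aeval z p) := by
  intro σ z _
  simp only
  rw [Polynomial.aeval_def, Polynomial.aeval_def, Polynomial.hom_eval₂]
  congr 1
  ext r
  simp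

theorem Good.mul {f g : G → ℂ → ℂ} (hf : Good c ε f) (hg : Good c ε g) : Good c ε (f * g) where
  diff σ := (hf.diff σ).mul (hg.diff σ)
  cross i σ := by
    obtain ⟨k, hk, hkz⟩ := hf.cross i σ
    obtain ⟨l, hl, hlz⟩ := hg.cross i σ
    refine ⟨k * l, hk.mul hl, fun z hz => ⟨fun h => ?_, fun h => ?_⟩⟩
    · simp [(hkz z hz).1 h, (hlz z hz).1 h]
    · simp [(hkz z hz).2 h, (hlz z hz).2 h]
  tame σ := by
    obtain ⟨P, hP, A, hA, N, h⟩ := hf.tame σ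
    obtain ⟨P', hP', A', hA', N', h'⟩ := hg.tame σ
    refine ⟨P * P', mul_ne_zero hP hP', A * A', by positivity, N + N', fun z hz => ?_⟩
    simp only [map_mul, norm_mul, Pi.mul_apply]
    calc ‖aeval z P‖ * ‖aeval z P'‖ * (‖f σ z‖ * ‖g σ z‖)
        = (‖aeval z P‖ * ‖f σ z‖) * (‖aeval z P'‖ * ‖g σ z‖) := by ring
      _ ≤ (A * (1 + ‖z‖) ^ N) * (A' * (1 + ‖z‖) ^ N') := by
          exact mul_le_mul (h z hz) (h' z hz) (by positivity) (by positivity)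
      _ = _ := by ring

theorem Good.add {f g : G → ℂ → ℂ} (hf : Good c ε f) (hg : Good c ε g) : Good c ε (f + g) where
  diff σ := (hf.diff σ).add (hg.diff σ)
  cross i σ := by
    obtain ⟨k, hk, hkz⟩ := hf.cross i σ
    obtain ⟨l, hl, hlz⟩ := hg.cross i σ
    refine ⟨k + l, hk.add hl, fun z hz => ⟨fun h => ?_, fun h => ?_⟩⟩
    · simp [(hkz z hz).1 h, (hlz z hz).1 h]
    · simp [(hkz z hz).2 h, (hlz z hz).2 h]
  tame σ := by
    obtain ⟨P, hP, A, hA, N, h⟩ := hf.tame σ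
    obtain ⟨P', hP', A', hA', N', h'⟩ := hg.tame σ
    obtain ⟨D, hD, M, hb⟩ := poly_bound P
    obtain ⟨D', hD', M', hb'⟩ := poly_bound P'
    refine ⟨P * P', mul_ne_zero hP hP', A * D' + A' * D, by positivity, N + N' + M + M',
      fun z hz => ?_⟩
    have h1 : (1 : ℝ) ≤ 1 + ‖z‖ := by linarith [norm_nonneg z]
    simp only [map_mul, norm_mul, Pi.add_apply]
    calc ‖aeval z P‖ * ‖aeval z P'‖ * ‖f σ z + g σ z‖
        ≤ ‖aeval z P‖ * ‖aeval z P'‖ * (‖f σ z‖ + ‖g σ z‖) := by gcongr; exact norm_add_le _ _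
      _ = (‖aeval z P‖ * ‖f σ z‖) * ‖aeval z P'‖ + (‖aeval z P'‖ * ‖g σ z‖) * ‖aeval z P‖ := by ring
      _ ≤ (A * (1 + ‖z‖) ^ N) * (D' * (1 + ‖z‖) ^ M') +
          (A' * (1 + ‖z‖) ^ N') * (D * (1 + ‖z‖) ^ M) := by
          exact add_le_add (mul_le_mul (h z hz) (hb' z) (by positivity) (by positivity))
            (mul_le_mul (h' z hz) (hb z) (by positivity) (by positivity))
      _ = A * D' * (1 + ‖z‖) ^ (N + M') + A' * D * (1 + ‖z‖) ^ (N' + M) := by ring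
      _ ≤ A * D' * (1 + ‖z‖) ^ (N + N' + M + M') + A' * D * (1 + ‖z‖) ^ (N + N' + M + M') := by
          exact add_le_add
            (mul_le_mul_of_nonneg_left (pow_le_pow_right₀ h1 (by omega)) (by positivity))
            (mul_le_mul_of_nonneg_left (pow_le_pow_right₀ h1 (by omega)) (by positivity))
      _ = _ := by ring

/-- Left translation preserves good families. -/
theorem Good.transl {f : G → ℂ → ℂ} (hf : Good c ε f) (ρ : G) :
    Good c ε (fun σ => f (ρ * σ)) where
  diff σ := hf.diff _
  cross i σ := by simpa only [mul_assoc] using hf.cross i (ρ * σ)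
  tame σ := hf.tame _

/-- The ring of good families (values off `U` are irrelevant). -/
def goodRing (c : G → ℝ) (ε : ℝ) : Subring (G → ℂ → ℂ) where
  carrier := {f | Good c ε f ∧ Rl c ε f}
  mul_mem' := fun {f g} hf hg => ⟨hf.1.mul hg.1, fun σ z hz => by
    simp [hf.2 σ z hz, hg.2 σ z hz]⟩
  one_mem' := by
    have h1 := good_const (G := G) (c := c) (ε := ε) 1
    have h2 := rl_const (G := G) (c := c) (ε := ε) 1
    simp only [map_one] at h1 h2
    exact ⟨h1, h2⟩
  add_mem' := fun {f g} hf hg => ⟨hf.1.add hg.1, fun σ z hz => by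
    simp [hf.2 σ z hz, hg.2 σ z hz]⟩
  zero_mem' := by
    have h1 := good_const (G := G) (c := c) (ε := ε) 0
    have h2 := rl_const (G := G) (c := c) (ε := ε) 0
    simp only [map_zero] at h1 h2
    exact ⟨h1, h2⟩
  neg_mem' := fun {f} hf => by
    have h1 := good_const (G := G) (c := c) (ε := ε) (-1)
    have h3 := h1.mul hf.1
    have h4 : (fun (_ : G) (z : ℂ) => aeval z (-1 : ℝ[X])) * f = -f := by
      ext σ z
      simp
    rw [h4] at h3
    exact ⟨h3, fun σ z hz => by simp [hf.2 σ z hz]⟩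

/-- Restriction of functions to `U`. -/
def res (c : G → ℝ) (ε : ℝ) : (G → ℂ → ℂ) →+* (G → U c ε → ℂ) where
  toFun f σ z := f σ z
  map_one' := rfl
  map_mul' _ _ := rfl
  map_zero' := rfl
  map_add' _ _ := rfl

/-- The ring of functions on the cover. -/
abbrev Ring' (c : G → ℝ) (ε : ℝ) : Subring (G → U c ε → ℂ) := (goodRing c ε).map (res c ε)

instance act (c : G → ℝ) (ε : ℝ) : MulSemiringAction G (Ring' c ε) where
  smul ρ x := ⟨fun σ => x.1 (ρ⁻¹ * σ), by
    obtain ⟨f, hf, hx⟩ := x.2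
    refine ⟨fun σ => f (ρ⁻¹ * σ), ⟨hf.1.transl _, fun σ z hz => hf.2 _ z hz⟩, ?_⟩
    rw [← hx]
    rfl⟩
  one_smul x := by
    apply Subtype.ext
    funext σ
    change x.1 (1⁻¹ * σ) = x.1 σ
    simp
  mul_smul ρ τ x := by
    apply Subtype.ext
    funext σ
    change x.1 ((ρ * τ)⁻¹ * σ) = x.1 (τ⁻¹ * (ρ⁻¹ * σ))
    simp [mul_assoc]
  smul_zero _ := rfl
  smul_add _ _ _ := rfl
  smul_one _ := rfl
  smul_mul _ _ _ := rfl

theorem act_apply (ρ : G) (x : Ring' c ε) (σ : G) : (ρ • x).1 σ = x.1 (ρ⁻¹ * σ) := rfl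

theorem main_of_exists [Finite G] (hε : 0 < ε) (hsep : ∀ i j, i ≠ j → 2 * ε ≤ |c i - c j|)
    (f : G → ℂ → ℂ) (hf : Good c ε f) (hr : Rl c ε f)
    (hf1 : ∀ ρ, ρ ≠ 1 → ∃ z ∈ U c ε, f ρ z ≠ f 1 z) :
    ∃ (N : Type) (_ : Field N) (_ : Algebra (RatFunc ℝ) N),
      FiniteDimensional (RatFunc ℝ) N ∧ IsGalois (RatFunc ℝ) N ∧
        Nonempty ((N ≃ₐ[RatFunc ℝ] N) ≃* G) := by
  obtain ⟨x0, hx0⟩ := (dense_U c ε).nonempty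
  have hnt : Nontrivial (Ring' c ε) := by
    refine ⟨0, 1, fun h => ?_⟩
    have := congrFun (congrFun (congrArg Subtype.val h) 1) ⟨x0, hx0⟩
    exact zero_ne_one this
  have hzero : ∀ g : G → ℂ → ℂ, Good c ε g → (∀ z ∈ U c ε, g 1 z = 0) → res c ε g = 0 := by
    intro g hg h
    funext σ z
    exact zero_of_one hε hsep hg h σ z z.2
  have hnz : NoZeroDivisors (Ring' c ε) := by
    refine ⟨fun {x y} hxy => ?_⟩
    obtain ⟨g, hg, hx⟩ := x.2
    obtain ⟨h, hh, hy⟩ := y.2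
    rcases zero_or_zero hε (hg.1.diff 1) (hh.1.diff 1) (fun z hz => by
      have := congrFun (congrFun (congrArg Subtype.val hxy) 1) ⟨z, hz⟩
      change x.1 1 ⟨z, hz⟩ * y.1 1 ⟨z, hz⟩ = 0 at this
      rw [← hx, ← hy] at this
      exact this) with h0 | h0
    · left
      apply Subtype.ext
      rw [← hx]
      exact hzero g hg.1 h0
    · right
      apply Subtype.ext
      rw [← hy]
      exact hzero h hh.1 h0
  have hdom : IsDomain (Ring' c ε) := NoZeroDivisors.to_isDomain _
  let φ : ℝ[X] →+* Ring' c ε :=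
    { toFun := fun p => ⟨fun _ z => aeval (z : ℂ) p,
        ⟨fun _ z => aeval z p, ⟨good_const p, rl_const p⟩, rfl⟩⟩
      map_one' := by apply Subtype.ext; funext σ z; simp
      map_mul' := fun p q => by apply Subtype.ext; funext σ z; simp
      map_zero' := by apply Subtype.ext; funext σ z; simp
      map_add' := fun p q => by apply Subtype.ext; funext σ z; simp }
  have hφa : ∀ p σ (z : U c ε), (φ p).1 σ z = aeval (z : ℂ) p := fun _ _ _ => rfl
  refine galois_of_ring G (Ring' c ε) φ ?_ ?_ ?_ ?_
  · intro p q hpq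
    apply Polynomial.eq_of_infinite_eval_eq
    refine ((Set.finite_range c).infinite_compl).mono fun x hx => ?_
    have hxU : (x : ℂ) ∈ U c ε := fun i hi => absurd ⟨i, by simpa using hi.symm⟩ hx
    have := congrFun (congrFun (congrArg Subtype.val hpq) 1) ⟨x, hxU⟩
    rw [hφa, hφa] at this
    change aeval ((algebraMap ℝ ℂ) x) p = aeval ((algebraMap ℝ ℂ) x) q at this
    rw [Polynomial.aeval_algebraMap_apply, Polynomial.aeval_algebraMap_apply] at this
    exact (algebraMap ℝ ℂ).injective (by simpa using this)
  · intro g p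
    rfl
  · intro g hg
    by_contra hne
    obtain ⟨z, hz, hfz⟩ := hf1 g⁻¹ (by simpa using hne)
    have := hg ⟨res c ε f, ⟨f, ⟨hf, hr⟩, rfl⟩⟩
    have := congrFun (congrFun (congrArg Subtype.val this) 1) ⟨z, hz⟩
    rw [act_apply, mul_one] at this
    exact hfz this
  · intro x hx
    obtain ⟨g, hg, hgx⟩ := x.2
    have hgσ : ∀ σ, ∀ z ∈ U c ε, g σ z = g 1 z := by
      intro σ z hz
      have := congrFun (congrFun (congrArg Subtype.val (hx σ⁻¹)) 1) ⟨z, hz⟩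
      rw [act_apply, mul_one, inv_inv, ← hgx] at this
      exact this
    obtain ⟨p, q, hq, hpq⟩ := invariant_rational hε hsep g hg.1 hg.2 hgσ
    refine ⟨p, q, hq, ?_⟩
    apply Subtype.ext
    funext σ z
    change aeval (z : ℂ) q * x.1 σ z = aeval (z : ℂ) p
    rw [← hgx, ← hpq z z.2, ← hgσ σ z z.2]
    rfl

end RIG
namespace RIG

open Metric Filter Topology

/-- The space of summable families. -/
abbrev L1 (I : Type) : Type := lp (fun _ : I => ℂ) 1

section ellone

variable {I : Type} {E : Type} [NormedAddCommGroup E] [NormedSpace ℂ E] [CompleteSpace E]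

theorem L1.summable (a : L1 I) : Summable (fun x => ‖a x‖) := by
  have := (lp.memℓp a).summable (by simp)
  simpa using this

theorem L1.norm_eq (a : L1 I) : ‖a‖ = ∑' x, ‖a x‖ := by
  have := lp.norm_eq_tsum_rpow (p := 1) (by simp) a
  simpa using this

theorem L1.summable_smul (a : L1 I) (v : I → E) {M : ℝ} (hv : ∀ x, ‖v x‖ ≤ M) :
    Summable (fun x => ‖a x • v x‖) := by
  refine Summable.of_nonneg_of_le (fun _ => norm_nonneg _) (fun x => ?_) (a.summable.mul_right M)
  rw [norm_smul]
  exact mul_le_mul_of_nonneg_left (hv x) (norm_nonneg _)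

/-- The linear map with prescribed bounded values on the basis. -/
noncomputable def lin (v : I → E) (M : ℝ) (hv : ∀ x, ‖v x‖ ≤ M) : L1 I →L[ℂ] E :=
  LinearMap.mkContinuous
    { toFun := fun a => ∑' x, a x • v x
      map_add' := fun a b => by
        rw [← Summable.tsum_add (a.summable_smul v hv).of_norm (b.summable_smul v hv).of_norm]
        congr 1
        funext x
        rw [lp.coeFn_add, Pi.add_apply, add_smul]
      map_smul' := fun r a => by
        rw [RingHom.id_apply, ← Summable.tsum_const_smul r (a.summable_smul v hv).of_norm]
        congr 1
        funext x
        rw [lp.coeFn_smul, Pi.smul_apply, smul_smul, smul_eq_mul] }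
    M (fun a => by
      change ‖∑' x, a x • v x‖ ≤ M * ‖a‖
      refine (norm_tsum_le_tsum_norm (a.summable_smul v hv)).trans ?_
      rw [L1.norm_eq, ← tsum_mul_left]
      refine Summable.tsum_le_tsum (fun x => ?_) (a.summable_smul v hv) (a.summable.mul_left M)
      rw [norm_smul, mul_comm]
      exact mul_le_mul_of_nonneg_right (hv x) (norm_nonneg _))

theorem lin_apply (v : I → E) (M : ℝ) (hv : ∀ x, ‖v x‖ ≤ M) (a : L1 I) :
    lin v M hv a = ∑' x, a x • v x := rfl

open Classical in
/-- Basis vectors. -/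
noncomputable def bv (x : I) : L1 I := lp.single 1 x (1 : ℂ)

theorem bv_self (x : I) : bv x x = 1 := by
  simp [bv]

theorem bv_ne {x y : I} (h : y ≠ x) : bv x y = 0 := by
  simp [bv, h]

theorem norm_bv (x : I) : ‖bv x‖ = 1 := by
  classical
  rw [bv, lp.norm_single (by simp)]
  simp

theorem lin_bv (v : I → E) (M : ℝ) (hv : ∀ x, ‖v x‖ ≤ M) (x : I) : lin v M hv (bv x) = v x := by
  rw [lin_apply, tsum_eq_single x (fun y hy => by rw [bv_ne hy, zero_smul]), bv_self, one_smul]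

theorem L1.ext_bv {S T : L1 I →L[ℂ] E} (h : ∀ x, S (bv x) = T (bv x)) : S = T := by
  classical
  apply lp.ext_continuousLinearMap (by simp)
  intro x
  ext
  have := h x
  simp only [bv] at this
  simp only [ContinuousLinearMap.comp_apply, lp.singleContinuousLinearMap_apply]
  convert this

/-- Coordinates. -/
noncomputable def coord (x : I) : L1 I →L[ℂ] ℂ := lp.evalCLM ℂ (fun _ : I => ℂ) 1 x

theorem coord_apply (x : I) (a : L1 I) : coord x a = a x := rfl

end ellone

section ops

variable {G : Type}

/-- Index set for partial fractions. -/
abbrev Ix (G : Type) : Type := Option (G × ℕ)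

/-- Monomials. -/
def mon (w : G → ℂ) : Ix G → ℂ
  | none => 1
  | some (i, m) => w i ^ (m + 1)

theorem mon_le {w : G → ℂ} (hw : ∀ i, ‖w i‖ ≤ 1) (x : Ix G) : ‖mon w x‖ ≤ 1 := by
  rcases x with _ | ⟨i, m⟩
  · simp [mon]
  · simp only [mon, norm_pow]
    exact pow_le_one₀ (norm_nonneg _) (hw i)

/-- Evaluation at a point. -/
noncomputable def ev (w : G → ℂ) (hw : ∀ i, ‖w i‖ ≤ 1) : L1 (Ix G) →L[ℂ] ℂ :=
  lin (mon w) 1 (mon_le hw)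

/-- Evaluation as a plain function. -/
noncomputable def evf (w : G → ℂ) (a : L1 (Ix G)) : ℂ := ∑' x, a x * mon w x

theorem ev_apply (w : G → ℂ) (hw : ∀ i, ‖w i‖ ≤ 1) (a : L1 (Ix G)) : ev w hw a = evf w a := rfl

theorem evf_le {w : G → ℂ} (hw : ∀ i, ‖w i‖ ≤ 1) (a : L1 (Ix G)) : ‖evf w a‖ ≤ ‖a‖ := by
  rw [L1.norm_eq]
  have h := a.summable_smul _ (mon_le hw)
  refine (norm_tsum_le_tsum_norm h).trans (Summable.tsum_le_tsum (fun x => ?_) h a.summable)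
  rw [norm_smul]
  exact mul_le_of_le_one_right (norm_nonneg _) (mon_le hw x)

theorem evf_diff {V : Set ℂ} (hV : IsOpen V) (w : ℂ → G → ℂ)
    (hw : ∀ i, ∀ t ∈ V, ‖w t i‖ ≤ 1) (hd : ∀ i, DifferentiableOn ℂ (fun t => w t i) V)
    (a : L1 (Ix G)) : DifferentiableOn ℂ (fun t => evf (w t) a) V := by
  refine Complex.differentiableOn_tsum_of_summable_norm a.summable (fun x => ?_) hV (fun x t ht => ?_)
  · refine DifferentiableOn.const_mul ?_ _
    rcases x with _ | ⟨i, m⟩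
    · exact differentiableOn_const _
    · exact (hd i).pow _
  · rw [norm_mul]
    exact mul_le_of_le_one_right (norm_nonneg _) (mon_le (fun i => hw i t ht) x)

theorem evf_tendsto (w : ℕ → G → ℂ) (hw : ∀ i, ∀ᶠ n in atTop, ‖w n i‖ ≤ 1) [Finite G]
    (hd : ∀ i, Tendsto (fun n => w n i) atTop (𝓝 0))
    (a : L1 (Ix G)) : Tendsto (fun n => evf (w n) a) atTop (𝓝 (a none)) := by
  have h0 : a none = ∑' x : Ix G, (if x = none then a none else 0) := by
    have h := tsum_eq_single (L := .unconditional _) (f := fun x : Ix G => if x = none then (a none : ℂ) else 0) none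
      (fun x hx => if_neg hx)
    rw [if_pos rfl] at h
    exact h.symm
  rw [h0]
  refine tendsto_tsum_of_dominated_convergence a.summable (fun x => ?_) ?_
  · rcases x with _ | ⟨i, m⟩
    · simp [mon]
    · simp only [mon, reduceCtorEq, if_false]
      have := ((hd i).pow (m + 1)).const_mul (a (some (i, m)))
      simpa using this
  · filter_upwards [eventually_all.2 hw] with n hn x
    rw [norm_mul]
    exact mul_le_of_le_one_right (norm_nonneg _) (mon_le hn x)

/-- Auxiliary vectors representing `w_i * w_j ^ m`. -/
noncomputable def vv (i j : G) (d : ℂ) : ℕ → L1 (Ix G)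
  | 0 => bv (some (i, 0))
  | m + 1 => d • (vv i j d m - bv (some (j, m)))

theorem vv_le (i j : G) {d : ℂ} (hd : ‖d‖ ≤ 1 / 2) (m : ℕ) : ‖vv i j d m‖ ≤ 1 := by
  induction m with
  | zero => exact (norm_bv _).le
  | succ m ih =>
    rw [vv, norm_smul]
    have h := norm_sub_le (vv i j d m) (bv (some (j, m)))
    rw [norm_bv] at h
    nlinarith [norm_nonneg d, norm_nonneg (vv i j d m - bv (some (j, m)))]

open Classical in
/-- Values of the multiplication by `w_i` on the basis. -/
noncomputable def wv (c : G → ℝ) (i : G) : Ix G → L1 (Ix G)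
  | none => bv (some (i, 0))
  | some (j, m) => if j = i then bv (some (i, m + 1)) else
      vv i j (((c i - c j)⁻¹ : ℝ) : ℂ) (m + 1)

theorem wv_le {c : G → ℝ} (hc : ∀ i j, i ≠ j → 4 ≤ |c i - c j|) (i : G) (x : Ix G) :
    ‖wv c i x‖ ≤ 1 := by
  rcases x with _ | ⟨j, m⟩
  · exact (norm_bv _).le
  · simp only [wv]
    split_ifs with h
    · exact (norm_bv _).le
    · apply vv_le
      rw [Complex.norm_real, norm_inv, Real.norm_eq_abs]
      have := hc i j (Ne.symm h)
      rw [inv_le_comm₀ (by linarith) (by norm_num)]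
      linarith

/-- Multiplication by `w_i`. -/
noncomputable def W {c : G → ℝ} (hc : ∀ i j, i ≠ j → 4 ≤ |c i - c j|) (i : G) :
    L1 (Ix G) →L[ℂ] L1 (Ix G) := lin (wv c i) 1 (wv_le hc i)

/-- The actual point. -/
noncomputable def pt (c : G → ℝ) (t : ℂ) (i : G) : ℂ := (t - c i)⁻¹

theorem ev_W {c : G → ℝ} (hc : ∀ i j, i ≠ j → 4 ≤ |c i - c j|) (i : G) (t : ℂ)
    (ht0 : ∀ j, t - c j ≠ 0) (ht : ∀ j, ‖pt c t j‖ ≤ 1) (a : L1 (Ix G)) :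
    ev (pt c t) ht (W hc i a) = pt c t i * ev (pt c t) ht a := by
  have key : (ev (pt c t) ht).comp (W hc i) = pt c t i • ev (pt c t) ht := by
    apply L1.ext_bv
    intro x
    rw [ContinuousLinearMap.comp_apply, smul_apply, W, lin_bv, smul_eq_mul]
    have hb : ∀ y, ev (pt c t) ht (bv y) = mon (pt c t) y := fun y => lin_bv _ _ _ _
    rw [hb]
    rcases x with _ | ⟨j, m⟩
    · simp [wv, hb, mon]
    · simp only [wv]
      split_ifs with h
      · subst h
        rw [hb]
        simp only [mon]
        ring
      · have hv : ∀ m, ev (pt c t) ht (vv i j (((c i - c j)⁻¹ : ℝ) : ℂ) m) =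
            pt c t i * pt c t j ^ m := by
          intro m
          induction m with
          | zero => rw [vv, hb]; simp [mon]
          | succ m ih =>
            rw [vv, map_smul, map_sub, ih, hb]
            simp only [mon, smul_eq_mul, pt]
            have h1 := ht0 i
            have h2 := ht0 j
            have h3 : ((c i : ℂ) - c j) ≠ 0 := by
              have h4 := hc i j (Ne.symm h)
              intro h5
              have h6 : c i - c j = 0 := by exact_mod_cast h5
              rw [h6] at h4
              norm_num at h4
            push_cast
            rw [inv_pow, inv_pow]
            field_simp
            ring
        rw [hv]
        simp only [mon]
  exact congrArg (fun S => S a) key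

open Classical in
/-- Values of the projection. -/
noncomputable def pv (i : G) : Ix G → L1 (Ix G)
  | none => 0
  | some (j, m) => if j = i then bv (some (j, m)) else 0

theorem pv_le (i : G) (x : Ix G) : ‖pv i x‖ ≤ 1 := by
  rcases x with _ | ⟨j, m⟩
  · simp [pv]
  · simp only [pv]
    split_ifs with h
    · exact (norm_bv _).le
    · simp

/-- Projection to the principal part at `i`. -/
noncomputable def Pr (i : G) : L1 (Ix G) →L[ℂ] L1 (Ix G) := lin (pv i) 1 (pv_le i)

theorem Pr_none (i : G) (a : L1 (Ix G)) : Pr i a none = 0 := by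
  have : (coord none).comp (Pr i) = 0 := by
    apply L1.ext_bv
    intro x
    rw [ContinuousLinearMap.comp_apply, Pr, lin_bv, coord_apply]
    rcases x with _ | ⟨j, m⟩
    · simp [pv]
    · simp only [pv]
      split_ifs with h
      · rw [bv_ne (by simp)]; rfl
      · rfl
  exact congrArg (fun S => S a) this

theorem Pr_some (i : G) (l : ℕ) (a : L1 (Ix G)) : Pr i a (some (i, l)) = a (some (i, l)) := by
  have : (coord (some (i, l))).comp (Pr i) = coord (some (i, l)) := by
    apply L1.ext_bv
    intro x
    rw [ContinuousLinearMap.comp_apply, Pr, lin_bv, coord_apply, coord_apply]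
    rcases x with _ | ⟨j, m⟩
    · simp only [pv]
      rw [bv_ne (by simp)]; rfl
    · simp only [pv]
      split_ifs with h
      · rfl
      · rw [bv_ne (by simp; tauto)]; rfl
  exact congrArg (fun S => S a) this

open Classical in
theorem Pr_Pr (i j : G) (a : L1 (Ix G)) : Pr i (Pr j a) = if i = j then Pr i a else 0 := by
  have : (Pr i).comp (Pr j) = if i = j then Pr i else 0 := by
    apply L1.ext_bv
    intro x
    rw [ContinuousLinearMap.comp_apply, Pr, Pr, lin_bv]
    rcases x with _ | ⟨k, m⟩
    · split_ifs <;> simp [pv, lin_bv]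
    · by_cases h : i = j
      · subst h
        by_cases h1 : k = i <;> simp [pv, lin_bv, h1]
      · by_cases h1 : k = j
        · subst h1
          simp [pv, lin_bv, h, Ne.symm h]
        · simp [pv, h, h1]
  have h2 := congrArg (fun S => S a) this
  simp only [ContinuousLinearMap.comp_apply] at h2
  rw [h2]
  split_ifs <;> simp

theorem Pr_bv_none (i : G) : Pr i (bv none) = 0 := by
  rw [Pr, lin_bv]; rfl

end ops

end RIG
namespace RIG

open Metric Filter Topology

section fcalc

theorem fcalc (φ : ℂ → ℂ) (hφ : AnalyticAt ℂ φ 0) {E : Type} [NormedAddCommGroup E]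
    [NormedSpace ℂ E] [CompleteSpace E] (T : E →L[ℂ] E) (hT : ‖T‖ ≤ 1) :
    ∃ Φ : ℝ → (E →L[ℂ] E), Tendsto Φ (𝓝[>] 0) (𝓝 (φ 0 • 1)) ∧
      ∀ᶠ ε in 𝓝[>] (0 : ℝ), ∀ (L : E →L[ℂ] ℂ) (u : ℂ), ‖u‖ ≤ 1 → (∀ x, L (T x) = u * L x) →
        ∀ x, L (Φ ε x) = φ (ε * u) * L x := by
  obtain ⟨p, hp⟩ := hφ
  rw [hasFPowerSeriesAt_iff, Metric.eventually_nhds_iff] at hp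
  obtain ⟨δ, hδ, hs⟩ := hp
  set a : ℕ → ℂ := p.coeff
  simp only [zero_add, smul_eq_mul, dist_zero_right] at hs
  have hsum : Summable (fun l => ‖a l‖ * (δ / 2) ^ l) := by
    have h := (hs (y := ((δ / 2 : ℝ) : ℂ)) (by
      rw [Complex.norm_real, Real.norm_eq_abs, abs_of_pos (by linarith)]; linarith)).summable.norm
    refine h.congr fun l => ?_
    rw [norm_mul, norm_pow, Complex.norm_real, Real.norm_eq_abs, abs_of_pos (by linarith), mul_comm]
  have ha0 : a 0 = φ 0 := by
    have h := hs (y := 0) (by simpa using hδ)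
    have h2 : HasSum (fun n => (0 : ℂ) ^ n * a n) (a 0) := by
      have := hasSum_single (f := fun n => (0 : ℂ) ^ n * a n) 0 (fun n hn => by simp [hn])
      simpa using this
    exact h2.unique h
  have hTl : ∀ l, ‖T ^ l‖ ≤ 1 := by
    intro l
    induction l with
    | zero =>
      rw [pow_zero]
      exact ContinuousLinearMap.norm_id_le
    | succ l ih =>
      rw [pow_succ]
      exact (norm_mul_le _ _).trans (mul_le_one₀ ih (norm_nonneg _) hT)
  have hbd : ∀ ε : ℝ, 0 < ε → ε ≤ δ / 2 → ∀ l, ‖(a l * (ε : ℂ) ^ l) • T ^ l‖ ≤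
      ‖a l‖ * (δ / 2) ^ l := by
    intro ε h0 h1 l
    rw [norm_smul, norm_mul, norm_pow, Complex.norm_real, Real.norm_eq_abs, abs_of_pos h0]
    calc ‖a l‖ * ε ^ l * ‖T ^ l‖ ≤ ‖a l‖ * ε ^ l * 1 :=
          mul_le_mul_of_nonneg_left (hTl l) (by positivity)
      _ ≤ _ := by
          rw [mul_one]
          gcongr
  have hev : ∀ᶠ ε : ℝ in 𝓝[>] 0, 0 < ε ∧ ε ≤ δ / 2 := by
    filter_upwards [Ioo_mem_nhdsGT (show (0 : ℝ) < δ / 2 by linarith)] with ε h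
    exact ⟨h.1, h.2.le⟩
  refine ⟨fun ε => ∑' l, (a l * (ε : ℂ) ^ l) • T ^ l, ?_, ?_⟩
  · have h0 : φ 0 • (1 : E →L[ℂ] E) = ∑' l, (a l * (0 : ℂ) ^ l) • T ^ l := by
      rw [tsum_eq_single 0 (fun l hl => by simp [hl])]
      simp [ha0]
    rw [h0]
    refine tendsto_tsum_of_dominated_convergence hsum (fun l => ?_) ?_
    · refine Tendsto.smul_const (Tendsto.const_mul _ (Tendsto.pow ?_ l)) _
      have : Tendsto (fun ε : ℝ => (ε : ℂ)) (𝓝 0) (𝓝 ((0 : ℝ) : ℂ)) :=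
        Complex.continuous_ofReal.tendsto 0
      simpa using this.mono_left nhdsWithin_le_nhds
    · filter_upwards [hev] with ε h l
      exact hbd ε h.1 h.2 l
  · filter_upwards [hev] with ε h L u hu hL x
    have hsm : Summable (fun l => (a l * (ε : ℂ) ^ l) • T ^ l) :=
      (Summable.of_nonneg_of_le (fun _ => norm_nonneg _) (hbd ε h.1 h.2) hsum).of_norm
    have h1 : HasSum (fun l => L (((a l * (ε : ℂ) ^ l) • T ^ l) x))
        (L ((∑' l, (a l * (ε : ℂ) ^ l) • T ^ l) x)) :=
      hsm.hasSum.mapL (L.comp (ContinuousLinearMap.apply ℂ E x))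
    have hLl : ∀ l, L ((T ^ l) x) = u ^ l * L x := by
      intro l
      induction l with
      | zero => simp
      | succ l ih =>
        rw [pow_succ', ContinuousLinearMap.mul_apply, hL, ih]
        ring
    have h2 := (hs (y := ε * u) (by
      rw [norm_mul, Complex.norm_real, Real.norm_eq_abs, abs_of_pos h.1]
      have := mul_le_of_le_one_right h.1.le hu
      linarith)).mul_right (L x)
    refine h1.unique (h2.congr_fun ?_)
    intro l
    rw [smul_apply, map_smul, hLl, smul_eq_mul]
    ring

end fcalc

section proj

variable {𝔄 : Type} [Ring 𝔄] [Algebra ℂ 𝔄]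

/-- Spectral projections of an element of finite order. -/
noncomputable def spec (r : 𝔄) (n : ℕ) (η : ℂ) (m : ℕ) : 𝔄 :=
  (n : ℂ)⁻¹ • ∑ k ∈ Finset.range n, (η ^ m) ^ k • r ^ k

theorem spec_sum (r : 𝔄) (n : ℕ) (hn : 0 < n) (η : ℂ) (hη : IsPrimitiveRoot η n) :
    ∑ m ∈ Finset.range n, spec r n η m = 1 := by
  simp only [spec]
  rw [← Finset.smul_sum, Finset.sum_comm]
  have h : ∀ k ∈ Finset.range n, ∑ m ∈ Finset.range n, (η ^ m) ^ k • r ^ k =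
      if k = 0 then (n : ℂ) • (1 : 𝔄) else 0 := by
    intro k hk
    rw [← Finset.sum_smul]
    split_ifs with h0
    · subst h0
      simp
    · have h1 : η ^ k ≠ 1 := hη.pow_ne_one_of_pos_of_lt h0 (Finset.mem_range.1 hk)
      have h2 : ∑ m ∈ Finset.range n, (η ^ m) ^ k = ∑ m ∈ Finset.range n, (η ^ k) ^ m := by
        refine Finset.sum_congr rfl fun m _ => ?_
        rw [← pow_mul, ← pow_mul, mul_comm]
      rw [h2, geom_sum_eq h1, ← pow_mul, mul_comm, pow_mul, hη.pow_eq_one]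
      simp
  rw [Finset.sum_congr rfl h, Finset.sum_ite_eq' (Finset.range n) 0, if_pos (by simpa using hn),
    smul_smul, inv_mul_cancel₀ (by exact_mod_cast hn.ne'), one_smul]

theorem spec_mul (r : 𝔄) (n : ℕ) (hr : r ^ n = 1) (η ζ : ℂ) (hη : η ^ n = 1)
    (hζ : ζ * η = 1) (m : ℕ) : r * spec r n η m = ζ ^ m • spec r n η m := by
  have h1 : ∑ k ∈ Finset.range n, (η ^ m) ^ (k + 1) • r ^ (k + 1) =
      ∑ k ∈ Finset.range n, (η ^ m) ^ k • r ^ k := by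
    have h2 := Finset.sum_range_succ (fun k => (η ^ m) ^ k • r ^ k) n
    have h3 := Finset.sum_range_succ' (fun k => (η ^ m) ^ k • r ^ k) n
    have h4 : (η ^ m) ^ n • r ^ n = (η ^ m) ^ 0 • r ^ 0 := by
      rw [hr, ← pow_mul, mul_comm, pow_mul, hη]
      simp
    rw [h2, h4] at h3
    exact (add_right_cancel h3).symm
  rw [spec, ← h1, mul_smul_comm, smul_comm]
  congr 1
  conv_lhs => rw [h1]
  rw [Finset.mul_sum, Finset.smul_sum]
  refine Finset.sum_congr rfl fun k _ => ?_
  have h5 : ζ ^ m * η ^ m = 1 := by rw [← mul_pow, hζ, one_pow]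
  rw [smul_smul, mul_smul_comm, ← pow_succ', pow_succ' (η ^ m), ← mul_assoc, h5, one_mul]

end proj

section core

variable {G : Type} [Group G] [Fintype G]

/-- Families of vectors. -/
abbrev EE (G : Type) : Type := G → L1 (Ix G)

/-- Componentwise action of an operator. -/
noncomputable def lft (S : L1 (Ix G) →L[ℂ] L1 (Ix G)) : EE G →L[ℂ] EE G :=
  ContinuousLinearMap.pi fun σ => S.comp (ContinuousLinearMap.proj σ)

theorem lft_apply (S : L1 (Ix G) →L[ℂ] L1 (Ix G)) (f : EE G) (σ : G) : lft S f σ = S (f σ) := rfl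

/-- Right translation. -/
noncomputable def rt (g : G) : EE G →L[ℂ] EE G :=
  ContinuousLinearMap.pi fun σ => ContinuousLinearMap.proj (σ * g)

theorem rt_apply (g : G) (f : EE G) (σ : G) : rt g f σ = f (σ * g) := rfl

theorem rt_pow (g : G) (k : ℕ) (f : EE G) (σ : G) : (rt g ^ k) f σ = f (σ * g ^ k) := by
  induction k generalizing σ with
  | zero => simp
  | succ k ih =>
    rw [pow_succ', ContinuousLinearMap.mul_apply, rt_apply, ih, pow_succ', mul_assoc]

theorem norm_W_le {c : G → ℝ} (hc : ∀ i j, i ≠ j → 4 ≤ |c i - c j|) (i : G) :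
    ‖lft (W hc i)‖ ≤ 1 := by
  refine ContinuousLinearMap.opNorm_le_bound _ zero_le_one fun f => ?_
  rw [one_mul, pi_norm_le_iff_of_nonneg (norm_nonneg _)]
  intro σ
  rw [lft_apply]
  have h1 : ‖W hc i‖ ≤ 1 := by
    unfold W lin
    exact LinearMap.mkContinuous_norm_le _ zero_le_one _
  refine ((W hc i).le_opNorm (f σ)).trans ?_
  exact (mul_le_of_le_one_left (norm_nonneg _) h1).trans (norm_le_pi_norm f σ)

/-- The root of unity. -/
noncomputable def zt (n : ℕ) : ℂ := Complex.exp (-(2 * Real.pi * Complex.I / n))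

/-- The local cover function. -/
noncomputable def ph (n m : ℕ) (z : ℂ) : ℂ :=
  Complex.exp (m / n * Complex.log ((1 - Complex.I * z) / (1 + Complex.I * z)))

theorem ph_zero (n m : ℕ) : ph n m 0 = 1 := by
  simp [ph]

theorem ph_analytic (n m : ℕ) : AnalyticAt ℂ (ph n m) 0 := by
  unfold ph
  refine AnalyticAt.cexp (AnalyticAt.mul analyticAt_const (AnalyticAt.clog ?_ ?_))
  · refine AnalyticAt.div ?_ ?_ ?_
    · fun_prop
    · fun_prop
    · simp
  · simp

theorem core {c : G → ℝ} (hc : ∀ i j, i ≠ j → 4 ≤ |c i - c j|) :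
    ∀ᶠ ε : ℝ in 𝓝[>] 0, ∃ (f : EE G) (h : G → ℕ → EE G),
      (∀ σ, σ ≠ 1 → f σ none = 0) ∧ f 1 none = 1 ∧
      (∀ i m l σ, h i m σ (some (i, l)) = 0) ∧
      (∀ i m σ, h i m (σ * i) = zt (orderOf i) ^ m • h i m σ) ∧
      (∀ i σ (t : ℂ), (∀ j, t - c j ≠ 0) → (∀ j, ‖pt c t j‖ ≤ 1) → evf (pt c t) (f σ) =
        ∑ m ∈ Finset.range (orderOf i), ph (orderOf i) m (ε * pt c t i) *
          evf (pt c t) (h i m σ)) := by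
  classical
  choose Φ hΦ1 hΦ2 using fun (i : G) (m : ℕ) =>
    fcalc (ph (orderOf i) m) (ph_analytic _ _) (lft (W hc i)) (norm_W_le hc i)
  let sp : G → ℕ → (EE G →L[ℂ] EE G) := fun i m => spec (rt i) (orderOf i) (zt (orderOf i))⁻¹ m
  have hpos : ∀ i : G, 0 < orderOf i := fun i => orderOf_pos i
  have hprim : ∀ i : G, IsPrimitiveRoot (zt (orderOf i))⁻¹ (orderOf i) := by
    intro i
    rw [zt, Complex.exp_neg, inv_inv]
    exact Complex.isPrimitiveRoot_exp _ (hpos i).ne'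
  have hzt : ∀ n, zt n * (zt n)⁻¹ = 1 := fun n => mul_inv_cancel₀ (Complex.exp_ne_zero _)
  have hrtn : ∀ i : G, (rt i : EE G →L[ℂ] EE G) ^ orderOf i = 1 := by
    intro i
    ext1 f
    funext σ
    rw [rt_pow, pow_orderOf_eq_one, mul_one]
    rfl
  let B : G → ℝ → (EE G →L[ℂ] EE G) := fun i ε =>
    ∑ m ∈ Finset.range (orderOf i), Φ i m ε * sp i m
  have hB : ∀ i, Tendsto (B i) (𝓝[>] 0) (𝓝 1) := by
    intro i
    rw [← spec_sum (rt i) (orderOf i) (hpos i) _ (hprim i)]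
    refine tendsto_finsetSum _ fun m _ => ?_
    have h := (hΦ1 i m).mul_const (sp i m)
    rwa [ph_zero, one_smul, one_mul] at h
  have hC : ∀ i, Tendsto (fun ε => Ring.inverse (B i ε)) (𝓝[>] 0) (𝓝 1) := by
    intro i
    have h := (NormedRing.inverse_continuousAt (1 : (EE G →L[ℂ] EE G)ˣ)).tendsto.comp
      (hB i)
    simp only [Units.val_one, Ring.inverse_one] at h
    exact h
  let S : ℝ → (EE G →L[ℂ] EE G) := fun ε =>
    1 + ∑ i, lft (Pr i) * (Ring.inverse (B i ε) - 1)
  have hS : Tendsto S (𝓝[>] 0) (𝓝 1) := by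
    have h : Tendsto S (𝓝[>] 0) (𝓝 (1 + ∑ i : G, lft (Pr i) * (1 - 1))) :=
      tendsto_const_nhds.add (tendsto_finsetSum _ fun i _ =>
        tendsto_const_nhds.mul ((hC i).sub tendsto_const_nhds))
    simpa using h
  have hopen : {x : EE G →L[ℂ] EE G | IsUnit x} ∈ 𝓝 (1 : EE G →L[ℂ] EE G) :=
    Units.isOpen.mem_nhds isUnit_one
  have hall : ∀ᶠ ε in 𝓝[>] (0 : ℝ), ∀ i : G, ∀ m ∈ Finset.range (orderOf i),
      ∀ (L : EE G →L[ℂ] ℂ) (u : ℂ), ‖u‖ ≤ 1 → (∀ x, L (lft (W hc i) x) = u * L x) →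
        ∀ x, L (Φ i m ε x) = ph (orderOf i) m (ε * u) * L x := by
    rw [eventually_all]
    intro i
    rw [Filter.eventually_all_finset]
    intro m _
    exact hΦ2 i m
  filter_upwards [hS hopen, eventually_all.2 fun i => hB i hopen, hall] with ε h1 h2 h3
  let p : EE G := fun σ => if σ = 1 then bv none else 0
  let f : EE G := Ring.inverse (S ε) p
  let g : G → EE G := fun i => Ring.inverse (B i ε) f
  have hSf : S ε f = p := by
    change (S ε * Ring.inverse (S ε)) p = p
    rw [Ring.mul_inverse_cancel _ h1]
    rfl
  have hBg : ∀ i, B i ε (g i) = f := by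
    intro i
    change (B i ε * Ring.inverse (B i ε)) f = f
    rw [Ring.mul_inverse_cancel _ (h2 i)]
    rfl
  have hcomp : ∀ σ, f σ + ∑ i, Pr i (g i σ - f σ) = p σ := by
    intro σ
    rw [← hSf]
    simp only [S, add_apply, sum_apply, Pi.add_apply, Finset.sum_apply]
    rfl
  have hPp : ∀ j σ, Pr j (p σ) = 0 := by
    intro j σ
    simp only [p]
    split_ifs
    · exact Pr_bv_none j
    · exact map_zero _
  have hPg : ∀ j σ, Pr j (g j σ) = 0 := by
    intro j σ
    have h := congrArg (Pr j) (hcomp σ)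
    rw [hPp, map_add, map_sum] at h
    simp only [Pr_Pr] at h
    rw [Finset.sum_ite_eq, if_pos (Finset.mem_univ _), map_sub] at h
    simpa using h
  have hnone : ∀ σ, f σ none = p σ none := by
    intro σ
    have h := congrArg (coord none) (hcomp σ)
    rw [map_add, map_sum] at h
    simp only [coord_apply, Pr_none, Finset.sum_const_zero, add_zero] at h
    exact h
  refine ⟨f, fun i m => sp i m (g i), ?_, ?_, ?_, ?_, ?_⟩
  · intro σ hσ
    rw [hnone]
    simp only [p, if_neg hσ]
    rfl
  · rw [hnone]
    simp only [p, if_true]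
    exact bv_self _
  · intro i m l σ
    rw [← Pr_some]
    have h4 : Pr i (sp i m (g i) σ) = 0 := by
      simp only [sp, spec, smul_apply, sum_apply, Pi.smul_apply,
        Finset.sum_apply, map_smul, map_sum, rt_pow, hPg, smul_zero, Finset.sum_const_zero]
    rw [h4]
    rfl
  · intro i m σ
    have h7 := spec_mul (rt i) (orderOf i) (hrtn i) (zt (orderOf i))⁻¹ (zt (orderOf i))
      (hprim i).pow_eq_one (hzt _) m
    exact congrFun (congrArg (fun S : EE G →L[ℂ] EE G => S (g i)) h7) σ
  · intro i σ t ht0 ht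
    have h5 : ∀ m ∈ Finset.range (orderOf i), ev (pt c t) ht (Φ i m ε (sp i m (g i)) σ) =
        ph (orderOf i) m (ε * pt c t i) * ev (pt c t) ht (sp i m (g i) σ) := by
      intro m hm
      exact h3 i m hm ((ev (pt c t) ht).comp (ContinuousLinearMap.proj σ)) (pt c t i) (ht i)
        (fun x => ev_W hc i t ht0 ht (x σ)) (sp i m (g i))
    have h6 : f σ = ∑ m ∈ Finset.range (orderOf i), Φ i m ε (sp i m (g i)) σ := by
      rw [← hBg i]
      simp only [B, sum_apply, Finset.sum_apply]
      rfl
    rw [← ev_apply _ ht, h6, map_sum]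
    exact Finset.sum_congr rfl h5

end core

end RIG
namespace RIG

open Metric Filter Topology

section conj

variable {G : Type} [Group G] {c : G → ℝ} {ε : ℝ}

theorem diff_conj {k : ℂ → ℂ} {V : Set ℂ} (hV : IsOpen V)
    (hVc : ∀ z ∈ V, (starRingEnd ℂ) z ∈ V) (hk : DifferentiableOn ℂ k V) :
    DifferentiableOn ℂ (fun z => (starRingEnd ℂ) (k ((starRingEnd ℂ) z))) V := by
  intro z hz
  have h1 : DifferentiableAt ℂ k ((starRingEnd ℂ) z) :=
    (hk _ (hVc z hz)).differentiableAt (hV.mem_nhds (hVc z hz))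
  exact (differentiableAt_conj_conj_iff.2 h1).differentiableWithinAt

theorem aeval_conj (P : ℝ[X]) (z : ℂ) :
    aeval ((starRingEnd ℂ) z) P = (starRingEnd ℂ) (aeval z P) := by
  rw [Polynomial.aeval_def, Polynomial.aeval_def, Polynomial.hom_eval₂]
  congr 1
  ext r
  simp

theorem Good.conj [Finite G] {f : G → ℂ → ℂ} (hf : Good c ε f) :
    Good c ε (fun σ z => (starRingEnd ℂ) (f σ ((starRingEnd ℂ) z))) where
  diff σ := diff_conj (isOpen_U c ε) (fun z hz => conj_mem_U hz) (hf.diff σ)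
  cross i σ := by
    obtain ⟨k, hk, hkz⟩ := hf.cross i σ
    have hb : ∀ z ∈ ball (c i : ℂ) ε, (starRingEnd ℂ) z ∈ ball (c i : ℂ) ε := by
      intro z hz
      rw [mem_ball, dist_eq_norm] at hz ⊢
      rw [← Complex.conj_ofReal (c i), ← map_sub, RCLike.norm_conj]
      exact hz
    refine ⟨_, diff_conj isOpen_ball hb hk, fun z hz => ⟨fun h => ?_, fun h => ?_⟩⟩
    · show _ = _
      rw [(hkz _ (hb z hz)).1 (by simpa using h)]
    · show _ = _
      rw [(hkz _ (hb z hz)).2 (by simpa using h)]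
  tame σ := by
    obtain ⟨P, hP, A, hA, N, h⟩ := hf.tame σ
    refine ⟨P, hP, A, hA, N, fun z hz => ?_⟩
    have h1 := h _ (conj_mem_U hz)
    rw [aeval_conj, RCLike.norm_conj, RCLike.norm_conj] at h1
    rw [RCLike.norm_conj]
    exact h1

end conj

section loc

/-- The quotient whose roots we take. -/
noncomputable def uu (ε : ℝ) (T : ℂ) : ℂ := (T - Complex.I * ε) / (T + Complex.I * ε)

theorem uu_re (ε : ℝ) (T : ℂ) : (uu ε T).re =
    (T.re ^ 2 + T.im ^ 2 - ε ^ 2) / Complex.normSq (T + Complex.I * ε) := by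
  rw [uu, Complex.div_re]
  simp
  ring

theorem uu_im (ε : ℝ) (T : ℂ) : (uu ε T).im =
    (-(2 * ε * T.re)) / Complex.normSq (T + Complex.I * ε) := by
  rw [uu, Complex.div_im]
  simp
  ring

theorem den_ne {ε : ℝ} {T : ℂ} (hT : T.re = 0 → |T.im| ≠ ε) (hε : 0 < ε) :
    T + Complex.I * ε ≠ 0 := by
  intro h
  have h1 := congrArg Complex.re h
  have h2 := congrArg Complex.im h
  simp at h1 h2
  refine hT h1 ?_
  rw [show T.im = -ε by linarith, abs_neg, abs_of_pos hε]

theorem uu_slit {ε : ℝ} {T : ℂ} (hε : 0 < ε) (hT : T.re = 0 → ε < |T.im|) :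
    uu ε T ∈ Complex.slitPlane := by
  have h0 := den_ne (fun h => (hT h).ne') hε
  have hN : 0 < Complex.normSq (T + Complex.I * ε) := Complex.normSq_pos.2 h0
  rw [Complex.mem_slitPlane_iff, uu_re, uu_im]
  by_cases h : T.re = 0
  · left
    apply div_pos _ hN
    have h1 := hT h
    have h2 : ε ^ 2 < T.im ^ 2 := by
      rw [← sq_abs T.im]
      exact pow_lt_pow_left₀ h1 hε.le two_ne_zero
    rw [h]
    linarith
  · right
    apply div_ne_zero _ hN.ne'
    simp [h, hε.ne']

theorem ball_den {ε : ℝ} {T : ℂ} (hT : ‖T‖ < ε) : T + Complex.I * ε ≠ 0 := by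
  apply den_ne _ ((norm_nonneg _).trans_lt hT)
  intro _ h
  have := Complex.abs_im_le_norm T
  linarith

theorem uu_neg {ε : ℝ} {T : ℂ} (hT : ‖T‖ < ε) : -uu ε T ∈ Complex.slitPlane := by
  have hN : 0 < Complex.normSq (T + Complex.I * ε) := Complex.normSq_pos.2 (ball_den hT)
  rw [Complex.mem_slitPlane_iff]
  left
  rw [Complex.neg_re, uu_re, neg_pos]
  apply div_neg_of_neg_of_pos _ hN
  have h1 : ‖T‖ ^ 2 < ε ^ 2 := pow_lt_pow_left₀ hT (norm_nonneg _) two_ne_zero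
  rw [← Complex.normSq_eq_norm_sq, Complex.normSq_apply] at h1
  linarith

theorem log_neg_right {u : ℂ} (hu : u.im < 0) :
    Complex.log (-u) - Real.pi * Complex.I = Complex.log u := by
  rw [Complex.log, Complex.log, norm_neg, Complex.arg_neg_eq_arg_add_pi_of_im_neg hu]
  push_cast
  ring

theorem log_neg_left {u : ℂ} (hu : 0 < u.im) :
    Complex.log (-u) - Real.pi * Complex.I = Complex.log u - 2 * Real.pi * Complex.I := by
  rw [Complex.log, Complex.log, norm_neg, Complex.arg_neg_eq_arg_sub_pi_of_im_pos hu]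
  push_cast
  ring

theorem exp_bound (u : ℂ) {n m : ℕ} (hm : m < n) :
    ‖Complex.exp (m / n * Complex.log u)‖ ≤ 1 + ‖u‖ := by
  have hn : (0 : ℝ) < n := by exact_mod_cast (Nat.zero_le m).trans_lt hm
  have h1 : ((m / n * Complex.log u : ℂ)).re = (m / n : ℝ) * Real.log ‖u‖ := by
    have : (m / n : ℂ) = ((m / n : ℝ) : ℂ) := by push_cast; rfl
    rw [this, Complex.re_ofReal_mul, Complex.log_re]
  rw [Complex.norm_exp, h1]
  have hs0 : (0 : ℝ) ≤ m / n := by positivity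
  have hs1 : (m / n : ℝ) ≤ 1 := by
    rw [div_le_one hn]
    exact_mod_cast hm.le
  by_cases hL : Real.log ‖u‖ ≤ 0
  · have : Real.exp ((m / n : ℝ) * Real.log ‖u‖) ≤ 1 :=
      Real.exp_le_one_iff.2 (mul_nonpos_of_nonneg_of_nonpos hs0 hL)
    linarith [norm_nonneg u]
  · push Not at hL
    have hu : 0 < ‖u‖ := by
      rcases (norm_nonneg u).eq_or_lt with h | h
      · rw [← h] at hL
        simp at hL
      · exact h
    have : Real.exp ((m / n : ℝ) * Real.log ‖u‖) ≤ Real.exp (Real.log ‖u‖) :=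
      Real.exp_le_exp.2 (mul_le_of_le_one_left hL.le hs1)
    rw [Real.exp_log hu] at this
    linarith

/-- Local branch. -/
noncomputable def yy (ε : ℝ) (n m : ℕ) (T : ℂ) : ℂ := Complex.exp (m / n * Complex.log (uu ε T))

theorem yy_eq (ε : ℝ) (n m : ℕ) {T : ℂ} (hT : T ≠ 0) : ph n m (ε * T⁻¹) = yy ε n m T := by
  have h : (1 - Complex.I * (ε * T⁻¹)) / (1 + Complex.I * (ε * T⁻¹)) = uu ε T := by
    rw [uu, ← mul_div_mul_right _ _ hT]
    congr 1 <;> field_simp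
  rw [ph, yy, h]

theorem yy_bound {ε : ℝ} {n m : ℕ} (hm : m < n) (T : ℂ) :
    ‖T + Complex.I * ε‖ * ‖yy ε n m T‖ ≤ ‖T + Complex.I * ε‖ + ‖T - Complex.I * ε‖ := by
  by_cases h0 : T + Complex.I * ε = 0
  · simp [h0]
  have h := mul_le_mul_of_nonneg_left (exp_bound (uu ε T) hm) (norm_nonneg (T + Complex.I * ε))
  refine h.trans (le_of_eq ?_)
  rw [mul_add, mul_one, uu, norm_div, mul_div_cancel₀ _ (norm_ne_zero_iff.2 h0)]

end loc

section glue

variable {G : Type} [Group G] [Fintype G]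

theorem evf_smul (w : G → ℂ) (r : ℂ) (a : L1 (Ix G)) : evf w (r • a) = r * evf w a := by
  unfold evf
  rw [← tsum_mul_left]
  congr 1
  funext x
  rw [lp.coeFn_smul, Pi.smul_apply, smul_eq_mul, mul_assoc]

open Classical in
/-- The point with the `i`-th coordinate removed. -/
noncomputable def ptz (c : G → ℝ) (i : G) (t : ℂ) (j : G) : ℂ := if j = i then 0 else pt c t j

theorem evf_ptz (c : G → ℝ) (i : G) (t : ℂ) (a : L1 (Ix G)) (ha : ∀ l, a (some (i, l)) = 0) :
    evf (pt c t) a = evf (ptz c i t) a := by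
  unfold evf
  congr 1
  funext x
  rcases x with _ | ⟨j, m⟩
  · simp [mon]
  · by_cases h : j = i
    · subst h
      rw [ha, zero_mul, zero_mul]
    · simp [mon, ptz, h]

theorem far {c : G → ℝ} (hc : ∀ i j, i ≠ j → 4 ≤ |c i - c j|) {i j : G} (hij : j ≠ i) {t : ℂ}
    (ht : ‖t - c i‖ < 3 / 2) : 5 / 2 < ‖t - c j‖ := by
  have h1 := hc i j hij.symm
  have h2 : ‖((c i : ℂ) - c j)‖ = |c i - c j| := by
    rw [← Complex.ofReal_sub, Complex.norm_real, Real.norm_eq_abs]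
  have h3 := norm_sub_le_norm_sub_add_norm_sub (c i : ℂ) t (c j : ℂ)
  rw [h2, norm_sub_rev (c i : ℂ) t] at h3
  linarith

theorem ptz_le {c : G → ℝ} (hc : ∀ i j, i ≠ j → 4 ≤ |c i - c j|) {i : G} {t : ℂ}
    (ht : ‖t - c i‖ < 3 / 2) (j : G) : ‖ptz c i t j‖ ≤ 1 := by
  unfold ptz
  split_ifs with h
  · simp
  · rw [pt, norm_inv]
    exact inv_le_one_of_one_le₀ (by linarith [far hc h ht])

theorem isOpen_near (c : G → ℝ) (i : G) : IsOpen {t : ℂ | ‖t - c i‖ < 3 / 2} :=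
  isOpen_lt (by fun_prop) continuous_const

theorem evf_ptz_diff {c : G → ℝ} (hc : ∀ i j, i ≠ j → 4 ≤ |c i - c j|) (i : G)
    (a : L1 (Ix G)) :
    DifferentiableOn ℂ (fun t => evf (ptz c i t) a) {t : ℂ | ‖t - c i‖ < 3 / 2} := by
  refine evf_diff (isOpen_near c i) _ (fun j t ht => ptz_le hc ht j) (fun j => ?_) a
  unfold ptz
  split_ifs with h
  · exact differentiableOn_const _
  · unfold pt
    refine DifferentiableOn.inv (by fun_prop) fun t ht => ?_
    have := far hc h ht
    intro h0
    rw [h0, norm_zero] at this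
    linarith

/-- Local expression near `c i`. -/
noncomputable def loc (c : G → ℝ) (ε : ℝ) (h : G → ℕ → EE G) (i σ : G) (t : ℂ) : ℂ :=
  ∑ m ∈ Finset.range (orderOf i), yy ε (orderOf i) m (t - c i) * evf (ptz c i t) (h i m σ)

open Classical in
/-- The glued function. -/
noncomputable def FF (c : G → ℝ) (ε : ℝ) (f : EE G) (h : G → ℕ → EE G) (σ : G) (t : ℂ) : ℂ :=
  if H : ∃ i, ‖t - c i‖ < 3 / 2 then loc c ε h H.choose σ t else evf (pt c t) (f σ)

variable {c : G → ℝ} {ε : ℝ} {f : EE G} {h : G → ℕ → EE G}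

theorem FF_loc (hc : ∀ i j, i ≠ j → 4 ≤ |c i - c j|) {i : G} {t : ℂ}
    (ht : ‖t - c i‖ < 3 / 2) (σ : G) : FF c ε f h σ t = loc c ε h i σ t := by
  have H : ∃ i, ‖t - c i‖ < 3 / 2 := ⟨i, ht⟩
  rw [FF, dif_pos H]
  have h1 : H.choose = i := by
    by_contra hne
    have := far hc hne ht
    linarith [H.choose_spec]
  rw [h1]

theorem FF_glob
    (h0 : ∀ i m l σ, h i m σ (some (i, l)) = 0)
    (h1 : ∀ i σ (t : ℂ), (∀ j, t - c j ≠ 0) → (∀ j, ‖pt c t j‖ ≤ 1) → evf (pt c t) (f σ) =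
        ∑ m ∈ Finset.range (orderOf i), ph (orderOf i) m (ε * pt c t i) *
          evf (pt c t) (h i m σ)) {t : ℂ} (ht : ∀ j, 1 < ‖t - c j‖) (σ : G) :
    FF c ε f h σ t = evf (pt c t) (f σ) := by
  rw [FF]
  split_ifs with H
  · have hne : ∀ j, t - c j ≠ 0 := fun j hj => by
      have := ht j
      rw [hj, norm_zero] at this
      linarith
    rw [h1 H.choose σ t hne (fun j => by
      rw [pt, norm_inv]
      exact inv_le_one_of_one_le₀ (ht j).le), loc]
    refine Finset.sum_congr rfl fun m _ => ?_
    rw [pt, yy_eq _ _ _ (hne _), evf_ptz c H.choose t _ (fun l => h0 _ m l σ)]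
  · rfl

theorem yy_diffAt (hε : 0 < ε) (n m : ℕ) {T : ℂ} (hT : T.re = 0 → ε < |T.im|) :
    DifferentiableAt ℂ (yy ε n m) T := by
  have h1 := den_ne (fun h => (hT h).ne') hε
  have h2 := uu_slit hε hT
  unfold yy
  refine DifferentiableAt.cexp (DifferentiableAt.const_mul (DifferentiableAt.clog ?_ h2) _)
  unfold uu
  exact DifferentiableAt.div (by fun_prop) (by fun_prop) h1

theorem FF_good (hc : ∀ i j, i ≠ j → 4 ≤ |c i - c j|) (hε : 0 < ε) (hε1 : ε < 1 / 2)
    (h0 : ∀ i m l σ, h i m σ (some (i, l)) = 0)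
    (h2 : ∀ i m σ, h i m (σ * i) = zt (orderOf i) ^ m • h i m σ)
    (h1 : ∀ i σ (t : ℂ), (∀ j, t - c j ≠ 0) → (∀ j, ‖pt c t j‖ ≤ 1) → evf (pt c t) (f σ) =
        ∑ m ∈ Finset.range (orderOf i), ph (orderOf i) m (ε * pt c t i) *
          evf (pt c t) (h i m σ)) : Good c ε (FF c ε f h) where
  diff σ := by
    intro t ht
    apply DifferentiableAt.differentiableWithinAt
    by_cases H : ∃ i, ‖t - c i‖ < 3 / 2
    · obtain ⟨i, hi⟩ := H
      have hmem := (isOpen_near c i).mem_nhds hi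
      have hev : loc c ε h i σ =ᶠ[𝓝 t] FF c ε f h σ := by
        filter_upwards [hmem] with s hs
        exact (FF_loc hc hs σ).symm
      refine DifferentiableAt.congr_of_eventuallyEq ?_ hev.symm
      unfold loc
      refine DifferentiableAt.fun_sum fun m _ => DifferentiableAt.mul ?_ ?_
      · have hd := yy_diffAt (ε := ε) hε (orderOf i) m (T := t - c i) (by
          intro hre
          have := ht i (by simpa [sub_eq_zero] using hre)
          simpa using this)
        exact DifferentiableAt.comp (g := yy ε (orderOf i) m) (f := fun s : ℂ => s - c i) t hd
          (by fun_prop)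
      · exact ((evf_ptz_diff hc i (h i m σ)) t hi).differentiableAt hmem
    · push Not at H
      have hop : IsOpen {s : ℂ | ∀ j, 1 < ‖s - c j‖} := by
        have : {s : ℂ | ∀ j, 1 < ‖s - c j‖} = ⋂ j, {s : ℂ | 1 < ‖s - c j‖} := by
          ext s
          simp
        rw [this]
        exact isOpen_iInter_of_finite fun j => isOpen_lt continuous_const (by fun_prop)
      have htm : t ∈ {s : ℂ | ∀ j, 1 < ‖s - c j‖} := fun j => by linarith [H j]
      have hmem := hop.mem_nhds htm
      have hev : (fun s => evf (pt c s) (f σ)) =ᶠ[𝓝 t] FF c ε f h σ := by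
        filter_upwards [hmem] with s hs
        exact (FF_glob h0 h1 hs σ).symm
      refine DifferentiableAt.congr_of_eventuallyEq ?_ hev.symm
      refine ((evf_diff hop (fun s => pt c s) (fun j s hs => ?_) (fun j => ?_) (f σ)) t
        htm).differentiableAt hmem
      · rw [pt, norm_inv]
        exact inv_le_one_of_one_le₀ (hs j).le
      · unfold pt
        refine DifferentiableOn.inv (by fun_prop) fun s hs h3 => ?_
        have := hs j
        rw [h3, norm_zero] at this
        linarith
  cross i σ := by
    have hnear : ∀ z ∈ ball (c i : ℂ) ε, ‖z - c i‖ < ε := by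
      intro z hz
      rwa [mem_ball, dist_eq_norm] at hz
    refine ⟨fun t => ∑ m ∈ Finset.range (orderOf i),
      Complex.exp (m / (orderOf i : ℕ) * (Complex.log (-uu ε (t - c i)) - Real.pi * Complex.I)) *
        evf (ptz c i t) (h i m σ), ?_, ?_⟩
    · refine DifferentiableOn.fun_sum fun m _ => DifferentiableOn.mul ?_ ?_
      · intro t ht
        apply DifferentiableAt.differentiableWithinAt
        have hu1 : DifferentiableAt ℂ (fun s : ℂ => uu ε (s - c i)) t := by
          unfold uu
          exact DifferentiableAt.div (by fun_prop) (by fun_prop) (ball_den (hnear t ht))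
        have hu : DifferentiableAt ℂ (fun s : ℂ => -uu ε (s - c i)) t := hu1.neg
        exact (((hu.clog (uu_neg (hnear t ht))).sub_const _).const_mul _).cexp
      · exact (evf_ptz_diff hc i (h i m σ)).mono fun t ht => by
          have := hnear t ht
          simp only [Set.mem_ofPred_eq]
          linarith
    · intro t ht
      have hT := hnear t ht
      have hN : 0 < Complex.normSq (t - c i + Complex.I * ε) := Complex.normSq_pos.2 (ball_den hT)
      have hre : (t - c i).re = t.re - c i := by simp
      refine ⟨fun hr => ?_, fun hl => ?_⟩
      · rw [FF_loc hc (i := i) (by linarith) σ, loc]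
        refine Finset.sum_congr rfl fun m _ => ?_
        rw [log_neg_right, yy]
        rw [uu_im, hre]
        exact div_neg_of_neg_of_pos (by nlinarith) hN
      · rw [FF_loc hc (i := i) (by linarith) (σ * i), loc]
        refine Finset.sum_congr rfl fun m _ => ?_
        rw [log_neg_left, yy, h2, evf_smul, ← mul_assoc]
        · congr 1
          rw [zt, ← Complex.exp_nat_mul, ← Complex.exp_add]
          congr 1
          ring
        · rw [uu_im, hre]
          exact div_pos (by nlinarith) hN
  tame σ := by
    classical
    obtain ⟨D, hD, N, hb⟩ := poly_bound (Q c ε)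
    have hK : ∀ i : G, ∃ K : ℝ, 0 ≤ K ∧ ∀ t : ℂ, ‖t - c i‖ < 3 / 2 →
        ‖(t - c i - Complex.I * ε) * ∏ j ∈ Finset.univ.erase i, ((t - c j) ^ 2 + (ε : ℂ) ^ 2)‖
          ≤ K := by
      intro i
      obtain ⟨K, hK⟩ := (isCompact_closedBall (c i : ℂ) (3 / 2)).exists_bound_of_continuousOn
        (f := fun t : ℂ => (t - c i - Complex.I * ε) *
          ∏ j ∈ Finset.univ.erase i, ((t - c j) ^ 2 + (ε : ℂ) ^ 2)) (by fun_prop)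
      refine ⟨|K|, abs_nonneg _, fun t ht => (hK t ?_).trans (le_abs_self _)⟩
      rw [mem_closedBall, dist_eq_norm]
      exact ht.le
    choose K hK0 hK1 using hK
    let M : G → ℝ := fun i => K i * (4 * ∑ m ∈ Finset.range (orderOf i), ‖h i m σ‖)
    have hM : ∀ i, 0 ≤ M i := fun i => mul_nonneg (hK0 i) (by positivity)
    refine ⟨Q c ε, Q_ne_zero c ε, D * ‖f σ‖ + ∑ i, M i, ?_, N, fun t ht => ?_⟩
    · exact add_nonneg (by positivity) (Finset.sum_nonneg fun i _ => hM i)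
    have hpow : (1 : ℝ) ≤ (1 + ‖t‖) ^ N := one_le_pow₀ (by linarith [norm_nonneg t])
    have hMs : 0 ≤ ∑ i, M i := Finset.sum_nonneg fun i _ => hM i
    by_cases H : ∃ i, ‖t - c i‖ < 3 / 2
    · obtain ⟨i, hi⟩ := H
      rw [FF_loc hc hi]
      have hmain : ‖aeval t (Q c ε)‖ * ‖loc c ε h i σ t‖ ≤ M i := by
        have hQ : aeval t (Q c ε) = (t - c i + Complex.I * ε) * ((t - c i - Complex.I * ε) *
            ∏ j ∈ Finset.univ.erase i, ((t - c j) ^ 2 + (ε : ℂ) ^ 2)) := by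
          rw [aeval_Q, ← Finset.mul_prod_erase _ _ (Finset.mem_univ i), ← mul_assoc]
          congr 1
          linear_combination (ε : ℂ) ^ 2 * Complex.I_sq
        have hy : ‖t - c i + Complex.I * ε‖ * ‖loc c ε h i σ t‖ ≤
            4 * ∑ m ∈ Finset.range (orderOf i), ‖h i m σ‖ := by
          rw [loc, ← norm_mul, Finset.mul_sum, Finset.mul_sum]
          refine norm_sum_le_of_le _ fun m hm => ?_
          rw [norm_mul, norm_mul, ← mul_assoc]
          refine mul_le_mul ?_ (evf_le (ptz_le hc hi) _) (norm_nonneg _) (by norm_num)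
          refine (yy_bound (Finset.mem_range.1 hm) _).trans ?_
          have hI : ‖Complex.I * (ε : ℂ)‖ = ε := by simp [abs_of_pos hε]
          have ha := norm_add_le (t - c i) (Complex.I * ε)
          have hs := norm_sub_le (t - c i) (Complex.I * ε)
          rw [hI] at ha hs
          linarith
        rw [hQ, norm_mul, mul_right_comm, mul_comm]
        exact mul_le_mul (hK1 i t hi) hy (by positivity) (hK0 i)
      have h3 : M i ≤ ∑ i, M i := Finset.single_le_sum (fun i _ => hM i) (Finset.mem_univ i)
      have h4 : 0 ≤ D * ‖f σ‖ := by positivity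
      nlinarith
    · push Not at H
      have ht1 : ∀ j, 1 < ‖t - c j‖ := fun j => by linarith [H j]
      rw [FF_glob h0 h1 ht1]
      have h3 : ‖evf (pt c t) (f σ)‖ ≤ ‖f σ‖ := evf_le (fun j => by
        rw [pt, norm_inv]
        exact inv_le_one_of_one_le₀ (ht1 j).le) _
      have h4 := mul_le_mul (hb t) h3 (norm_nonneg _) (by positivity)
      have h5 : 0 ≤ (∑ i, M i) * (1 + ‖t‖) ^ N := by positivity
      nlinarith

theorem exists_cover : ∃ (N : Type) (_ : Field N) (_ : Algebra (RatFunc ℝ) N),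
      FiniteDimensional (RatFunc ℝ) N ∧ IsGalois (RatFunc ℝ) N ∧
        Nonempty ((N ≃ₐ[RatFunc ℝ] N) ≃* G) := by
  classical
  let e := Fintype.equivFin G
  let c : G → ℝ := fun i => 4 * ((e i : ℕ) : ℝ)
  have hc : ∀ i j, i ≠ j → 4 ≤ |c i - c j| := by
    intro i j hij
    have h1 : ((e i : ℕ) : ℤ) - ((e j : ℕ) : ℤ) ≠ 0 := by
      intro h
      apply hij
      apply e.injective
      apply Fin.ext
      omega
    have h2 : (1 : ℝ) ≤ |((e i : ℕ) : ℝ) - ((e j : ℕ) : ℝ)| := by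
      have := Int.one_le_abs h1
      exact_mod_cast this
    simp only [c]
    rw [← mul_sub, abs_mul, abs_of_pos (by norm_num : (0 : ℝ) < 4)]
    linarith
  obtain ⟨ε, ⟨f, h, hf0, hf1, h0, h2, h1⟩, hε, hε1⟩ :=
    ((core hc).and (Ioo_mem_nhdsGT (show (0 : ℝ) < 1 / 2 by norm_num))).exists
  have hgood := FF_good hc hε hε1 h0 h2 h1
  refine main_of_exists hε (fun i j hij => by linarith [hc i j hij]) _
    (hgood.add hgood.conj) ?_ ?_
  · intro σ z hz
    simp only [Pi.add_apply, map_add, Complex.conj_conj]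
    ring
  · intro ρ hρ
    by_contra hcon
    push Not at hcon
    have hbig : ∀ j, Tendsto (fun n : ℕ => ‖((n : ℝ) : ℂ) - c j‖) atTop atTop := by
      intro j
      have h3 : ∀ n : ℕ, ‖((n : ℝ) : ℂ) - c j‖ = |(n : ℝ) - c j| := fun n => by
        rw [← Complex.ofReal_sub, Complex.norm_real, Real.norm_eq_abs]
      simp only [h3]
      exact tendsto_abs_atTop_atTop.comp
        (tendsto_atTop_add_const_right _ _ tendsto_natCast_atTop_atTop)
    have hev : ∀ᶠ n : ℕ in atTop, ∀ j, 1 < ‖((n : ℝ) : ℂ) - c j‖ :=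
      eventually_all.2 fun j => (hbig j).eventually_gt_atTop 1
    have hlim : ∀ σ, Tendsto (fun n : ℕ => FF c ε f h σ ((n : ℝ) : ℂ)) atTop (𝓝 (f σ none)) := by
      intro σ
      have h4 : Tendsto (fun n : ℕ => evf (pt c ((n : ℝ) : ℂ)) (f σ)) atTop (𝓝 (f σ none)) := by
        refine evf_tendsto _ (fun j => ?_) (fun j => ?_) _
        · filter_upwards [hev] with n hn
          rw [pt, norm_inv]
          exact inv_le_one_of_one_le₀ (hn j).le
        · unfold pt
          rw [tendsto_zero_iff_norm_tendsto_zero]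
          simp only [norm_inv]
          exact tendsto_inv_atTop_zero.comp (hbig j)
      refine h4.congr' ?_
      filter_upwards [hev] with n hn
      exact (FF_glob h0 h1 hn σ).symm
    have hlim2 : ∀ σ, Tendsto (fun n : ℕ => FF c ε f h σ ((n : ℝ) : ℂ) +
        (starRingEnd ℂ) (FF c ε f h σ ((n : ℝ) : ℂ))) atTop
        (𝓝 (f σ none + (starRingEnd ℂ) (f σ none))) := fun σ =>
      (hlim σ).add ((Complex.continuous_conj.tendsto _).comp (hlim σ))
    have heq := tendsto_nhds_unique ((hlim2 ρ).congr' (by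
      filter_upwards [hev] with n hn
      have hU : ((n : ℝ) : ℂ) ∈ U c ε := by
        intro j hj
        have := hn j
        rw [Complex.ofReal_re] at hj
        rw [hj, sub_self, norm_zero] at this
        linarith
      have := hcon _ hU
      simp only [Pi.add_apply, Complex.conj_ofReal] at this
      exact this)) (hlim2 1)
    rw [hf0 ρ hρ, hf1] at heq
    norm_num at heq

end glue

end RIG

end RigHelpers

/-- Every finite group occurs as the Galois group of a finite Galois extension of
`ℝ(t)`, the field of rational functions in one indeterminate over `ℝ`. -/
theorem finite_group_occurs_as_galoisGroup_over_real_ratFunc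
    (G : Type) [Group G] [Finite G] :
    ∃ (N : Type) (_ : Field N) (_ : Algebra (RatFunc ℝ) N),
      FiniteDimensional (RatFunc ℝ) N ∧ IsGalois (RatFunc ℝ) N ∧
        Nonempty ((N ≃ₐ[RatFunc ℝ] N) ≃* G) := by
  have := Fintype.ofFinite G
  exact RIG.exists_cover
end
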